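/- arXiv:0906.2729 — 2 statements merged into one kernel-verified Lean document; each statement's English description precedes it below -/
import Mathlib

section
/- Let f(z) = Σ_{α∈A} a_α z^α be a Laurent polynomial in n variables with finite nonempty support A ⊆ ℤⁿ and nonzero complex coefficients a_α, and let co𝒜_f ⊆ ℝⁿ be the lifted coamoeba of V_f. Then for every connected component C of ℝⁿ \ co𝒜_f, the interior of C is a convex subset of ℝⁿ. (Theorem 5.19(a).) -/
open Complex


/-- Boundary integral over the rectangle `[a,b] × [c,d]`. -/
noncomputable def rectBdry (a b c d : ℝ) (φ : ℂ → ℂ) : ℂ :=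
  (∫ x : ℝ in a..b, φ (x + c * I)) - (∫ x : ℝ in a..b, φ (x + d * I)) +
      I • (∫ y : ℝ in c..d, φ (b + y * I)) - I • (∫ y : ℝ in c..d, φ (a + y * I))

theorem rectBdry_congr_add {a b c d : ℝ} (hab : a ≤ b) (hcd : c ≤ d) {φ ψ χ : ℂ → ℂ}
    (h : ∀ z : ℂ, a ≤ z.re → z.re ≤ b → c ≤ z.im → z.im ≤ d →
      (z.re = a ∨ z.re = b ∨ z.im = c ∨ z.im = d) →
      φ z = ψ z + χ z ∧ ContinuousAt ψ z ∧ ContinuousAt χ z) :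
    rectBdry a b c d φ = rectBdry a b c d ψ + rectBdry a b c d χ := by
  have hor : ∀ e : ℝ, (e = c ∨ e = d) → (∫ x : ℝ in a..b, φ (x + e * I)) =
      (∫ x : ℝ in a..b, ψ (x + e * I)) + (∫ x : ℝ in a..b, χ (x + e * I)) := by
    intro e he
    have key : ∀ x ∈ Set.uIcc a b, φ (x + e * I) = ψ (x + e * I) + χ (x + e * I) ∧
        ContinuousAt ψ (x + e * I) ∧ ContinuousAt χ (x + e * I) := by
      intro x hx
      rw [Set.uIcc_of_le hab] at hx
      apply h
      · simpa using hx.1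
      · simpa using hx.2
      · rcases he with rfl | rfl <;> simp [hcd]
      · rcases he with rfl | rfl <;> simp [hcd]
      · rcases he with rfl | rfl <;> simp
    rw [← intervalIntegral.integral_add]
    · exact intervalIntegral.integral_congr fun x hx => (key x hx).1
    · refine ContinuousOn.intervalIntegrable fun x hx => ContinuousAt.continuousWithinAt ?_
      exact ContinuousAt.comp (f := fun x : ℝ => (x + e * I : ℂ)) (key x hx).2.1 (by fun_prop)
    · refine ContinuousOn.intervalIntegrable fun x hx => ContinuousAt.continuousWithinAt ?_
      exact ContinuousAt.comp (f := fun x : ℝ => (x + e * I : ℂ)) (key x hx).2.2 (by fun_prop)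
  have ver : ∀ e : ℝ, (e = a ∨ e = b) → (∫ y : ℝ in c..d, φ (e + y * I)) =
      (∫ y : ℝ in c..d, ψ (e + y * I)) + (∫ y : ℝ in c..d, χ (e + y * I)) := by
    intro e he
    have key : ∀ x ∈ Set.uIcc c d, φ (e + x * I) = ψ (e + x * I) + χ (e + x * I) ∧
        ContinuousAt ψ (e + x * I) ∧ ContinuousAt χ (e + x * I) := by
      intro x hx
      rw [Set.uIcc_of_le hcd] at hx
      apply h
      · rcases he with rfl | rfl <;> simp [hab]
      · rcases he with rfl | rfl <;> simp [hab]
      · simpa using hx.1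
      · simpa using hx.2
      · rcases he with rfl | rfl <;> simp
    rw [← intervalIntegral.integral_add]
    · exact intervalIntegral.integral_congr fun x hx => (key x hx).1
    · refine ContinuousOn.intervalIntegrable fun x hx => ContinuousAt.continuousWithinAt ?_
      exact ContinuousAt.comp (f := fun x : ℝ => (e + x * I : ℂ)) (key x hx).2.1 (by fun_prop)
    · refine ContinuousOn.intervalIntegrable fun x hx => ContinuousAt.continuousWithinAt ?_
      exact ContinuousAt.comp (f := fun x : ℝ => (e + x * I : ℂ)) (key x hx).2.2 (by fun_prop)
  unfold rectBdry
  rw [hor c (Or.inl rfl), hor d (Or.inr rfl), ver a (Or.inl rfl), ver b (Or.inr rfl)]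
  simp only [smul_eq_mul]
  ring

theorem im_intervalIntegral {f : ℝ → ℂ} {a b : ℝ} (hf : Continuous f) :
    (∫ x in a..b, f x).im = ∫ x in a..b, (f x).im :=
  (Complex.imCLM.intervalIntegral_comp_comm (hf.intervalIntegrable a b)).symm

theorem re_intervalIntegral {f : ℝ → ℂ} {a b : ℝ} (hf : Continuous f) :
    (∫ x in a..b, f x).re = ∫ x in a..b, (f x).re :=
  (Complex.reCLM.intervalIntegral_comp_comm (hf.intervalIntegrable a b)).symm

theorem hor_line (a b e : ℝ) (hab : a < b) (w : ℂ) (he : e ≠ w.im) :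
    0 < (w.im - e) * (∫ x : ℝ in a..b, ((x : ℂ) + e * I - w)⁻¹).im := by
  have hne : ∀ x : ℝ, (x : ℂ) + e * I - w ≠ 0 := by
    intro x h
    have := congrArg Complex.im h
    simp at this
    exact he (by linarith)
  have hc : Continuous fun x : ℝ => ((x : ℂ) + e * I - w)⁻¹ :=
    Continuous.inv₀ (by fun_prop) hne
  rw [im_intervalIntegral hc, ← intervalIntegral.integral_const_mul]
  apply intervalIntegral.intervalIntegral_pos_of_pos _ _ hab
  · exact (continuous_const.mul (Complex.continuous_im.comp hc)).intervalIntegrable _ _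
  · intro x
    rw [Complex.inv_im]
    have h1 : 0 < normSq ((x : ℂ) + e * I - w) := normSq_pos.2 (hne x)
    have h2 : 0 < (w.im - e) ^ 2 := by
      have : w.im - e ≠ 0 := fun h => he (by linarith)
      positivity
    have : (w.im - e) * (-((x : ℂ) + e * I - w).im / normSq ((x : ℂ) + e * I - w)) =
      (w.im - e) ^ 2 / normSq ((x : ℂ) + e * I - w) := by
      simp; ring
    rw [this]
    positivity

theorem ver_line (a b e : ℝ) (hab : a < b) (w : ℂ) (he : e ≠ w.re) :
    0 < (e - w.re) * (∫ x : ℝ in a..b, ((e : ℂ) + x * I - w)⁻¹).re := by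
  have hne : ∀ x : ℝ, (e : ℂ) + x * I - w ≠ 0 := by
    intro x h
    have := congrArg Complex.re h
    simp at this
    exact he (by linarith)
  have hc : Continuous fun x : ℝ => ((e : ℂ) + x * I - w)⁻¹ :=
    Continuous.inv₀ (by fun_prop) hne
  rw [re_intervalIntegral hc, ← intervalIntegral.integral_const_mul]
  apply intervalIntegral.intervalIntegral_pos_of_pos _ _ hab
  · exact (continuous_const.mul (Complex.continuous_re.comp hc)).intervalIntegrable _ _
  · intro x
    rw [Complex.inv_re]
    have h1 : 0 < normSq ((e : ℂ) + x * I - w) := normSq_pos.2 (hne x)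
    have h2 : 0 < (e - w.re) ^ 2 := by
      have : e - w.re ≠ 0 := fun h => he (by linarith)
      positivity
    have : (e - w.re) * (((e : ℂ) + x * I - w).re / normSq ((e : ℂ) + x * I - w)) =
      (e - w.re) ^ 2 / normSq ((e : ℂ) + x * I - w) := by
      simp; ring
    rw [this]
    positivity

theorem rectBdry_inv_pos {a b c d : ℝ} {w : ℂ} (h1 : a < w.re) (h2 : w.re < b) (h3 : c < w.im)
    (h4 : w.im < d) : 0 < (rectBdry a b c d (fun z => (z - w)⁻¹)).im := by
  have e1 := pos_of_mul_pos_right (hor_line a b c (h1.trans h2) w h3.ne) (by linarith)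
  have e2 := hor_line a b d (h1.trans h2) w h4.ne'
  have e2' := neg_of_mul_pos_right e2 (by linarith)
  have e3 := pos_of_mul_pos_right (ver_line c d b (h3.trans h4) w h2.ne') (by linarith)
  have e4 := neg_of_mul_pos_right (ver_line c d a (h3.trans h4) w h1.ne) (by linarith)
  simp only [rectBdry, smul_eq_mul, sub_im, add_im, I_mul_im]
  linarith

/-- One factor of the argument principle. -/
theorem rectBdry_factor {a b c d : ℝ} {w : ℂ} (h1 : a < w.re) (h2 : w.re < b) (h3 : c < w.im)
    (h4 : w.im < d) {g : ℂ → ℂ} (hg : Differentiable ℂ g) (hw : g w = 0)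
    (hb : ∀ z : ℂ, a ≤ z.re → z.re ≤ b → c ≤ z.im → z.im ≤ d →
      (z.re = a ∨ z.re = b ∨ z.im = c ∨ z.im = d) → g z ≠ 0) :
    ∃ h : ℂ → ℂ, Differentiable ℂ h ∧ (∀ z, g z = (z - w) * h z) ∧
      (rectBdry a b c d (logDeriv h)).im < (rectBdry a b c d (logDeriv g)).im := by
  have hd : Differentiable ℂ (dslope g w) := by
    rw [← differentiableOn_univ] at hg ⊢
    exact (Complex.differentiableOn_dslope (by simp)).2 hg
  have hfac : ∀ z, g z = (z - w) * dslope g w z := by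
    intro z
    have := sub_smul_dslope g w z
    simp [hw] at this
    exact this.symm
  refine ⟨dslope g w, hd, hfac, ?_⟩
  rw [rectBdry_congr_add (h1.trans h2).le (h3.trans h4).le (φ := logDeriv g)
    (ψ := fun z => (z - w)⁻¹) (χ := logDeriv (dslope g w))]
  · have := rectBdry_inv_pos h1 h2 h3 h4
    rw [add_im]; linarith
  · intro z z1 z2 z3 z4 hz
    have hz0 := hb z z1 z2 z3 z4 hz
    rw [hfac] at hz0
    have hz1 := left_ne_zero_of_mul hz0
    have hz2 := right_ne_zero_of_mul hz0
    refine ⟨?_, ?_, ?_⟩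
    · have : g = fun z => (z - w) * dslope g w z := funext hfac
      conv_lhs => rw [this]
      rw [logDeriv_mul z hz1 hz2 (by fun_prop) hd.differentiableAt]
      congr 1
      simp [logDeriv_apply]
    · exact ContinuousAt.inv₀ (by fun_prop) hz1
    · have : Differentiable ℂ (deriv (dslope g w)) := hd.deriv
      exact (this.continuous.continuousAt).div hd.continuous.continuousAt hz2

theorem rectBdry_nonneg {a b c d : ℝ} (hab : a < b) (hcd : c < d) (s : Finset ℂ) :
    (∀ w ∈ s, a < w.re ∧ w.re < b ∧ c < w.im ∧ w.im < d) →
    ∀ g : ℂ → ℂ, Differentiable ℂ g →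
      (∀ z : ℂ, a ≤ z.re → z.re ≤ b → c ≤ z.im → z.im ≤ d → g z = 0 → z ∈ s) →
      0 ≤ (rectBdry a b c d (logDeriv g)).im := by
  classical
  induction s using Finset.induction_on with
  | empty =>
    intro _ g hg hz
    have := integral_boundary_rect_eq_zero_of_differentiableOn (logDeriv g) ⟨a, c⟩ ⟨b, d⟩ (by
      intro z hz'
      simp only [Complex.mem_reProdIm, Set.uIcc_of_le hab.le, Set.uIcc_of_le hcd.le] at hz'
      have : Differentiable ℂ (deriv g) := hg.deriv
      refine DifferentiableAt.differentiableWithinAt ?_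
      refine this.differentiableAt.div hg.differentiableAt ?_
      intro h0
      simpa using hz z hz'.1.1 hz'.1.2 hz'.2.1 hz'.2.2 h0)
    apply le_of_eq
    rw [← zero_im, ← this]
    rfl
  | insert w s hws ih =>
    intro hs g hg hz
    obtain ⟨h1, h2, h3, h4⟩ := hs w (by simp)
    have hs' : ∀ w ∈ s, a < w.re ∧ w.re < b ∧ c < w.im ∧ w.im < d :=
      fun v hv => hs v (by simp [hv])
    have inner : ∀ k : ℕ, ∀ g : ℂ → ℂ, Differentiable ℂ g →
      (∀ z : ℂ, a ≤ z.re → z.re ≤ b → c ≤ z.im → z.im ≤ d → g z = 0 → z ∈ insert w s) →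
      analyticOrderAt g w = k → 0 ≤ (rectBdry a b c d (logDeriv g)).im := by
      intro k
      induction k with
      | zero =>
        intro g hg hz ho
        have hgw : g w ≠ 0 := by
          rw [Nat.cast_zero] at ho
          exact (hg.analyticAt w).analyticOrderAt_eq_zero.1 ho
        refine ih hs' g hg fun z z1 z2 z3 z4 h0 => ?_
        rcases Finset.mem_insert.1 (hz z z1 z2 z3 z4 h0) with rfl | h
        · exact absurd h0 hgw
        · exact h
      | succ k ihk =>
        intro g hg hz ho
        have hgw : g w = 0 := by
          by_contra h
          rw [(hg.analyticAt w).analyticOrderAt_eq_zero.2 h] at ho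
          have : (0 : ℕ) = k + 1 := by exact_mod_cast ho
          omega
        obtain ⟨h, hh, hf, hlt⟩ := rectBdry_factor h1 h2 h3 h4 hg hgw (by
          intro z z1 z2 z3 z4 hb h0
          have := hs z (hz z z1 z2 z3 z4 h0)
          rcases hb with hb | hb | hb | hb <;> linarith [this.1, this.2.1, this.2.2.1, this.2.2.2])
        refine le_trans (ihk h hh ?_ ?_) hlt.le
        · intro z z1 z2 z3 z4 h0
          exact hz z z1 z2 z3 z4 (by rw [hf, h0, mul_zero])
        · have e : g = (fun z => z - w) * h := funext hf
          have hlin : AnalyticAt ℂ (fun z : ℂ => z - w) w := by fun_prop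
          have o1 : analyticOrderAt (fun z : ℂ => z - w) w = 1 := by
            have := hlin.analyticOrderAt_eq_natCast (n := 1)
            refine this.2 ⟨fun _ => 1, analyticAt_const, one_ne_zero, ?_⟩
            simp
          rw [e, analyticOrderAt_mul hlin (hh.analyticAt w), o1] at ho
          have hc : analyticOrderAt h w + 1 = (k : ℕ∞) + 1 := by
            rw [add_comm, ho]; simp
          exact (ENat.add_left_injective_of_ne_top ENat.one_ne_top) hc
    by_cases htop : analyticOrderAt g w = ⊤
    · exfalso
      have hev : ∀ᶠ z in nhds w, g z = 0 := analyticOrderAt_eq_top.1 htop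
      have han : AnalyticOnNhd ℂ g Set.univ := fun z _ => hg.analyticAt z
      have h0 := han.eqOn_zero_of_preconnected_of_eventuallyEq_zero isPreconnected_univ
        (Set.mem_univ w) hev
      have hm := hs _ (hz ⟨a, c⟩ le_rfl hab.le le_rfl hcd.le (h0 (Set.mem_univ _)))
      exact lt_irrefl _ hm.1
    · obtain ⟨k, hk⟩ := ENat.ne_top_iff_exists.1 htop
      exact inner k g hg hz hk.symm

theorem no_zero_of_rectBdry {a b c d : ℝ} {g : ℂ → ℂ} (hg : Differentiable ℂ g)
    (hb : ∀ z : ℂ, a ≤ z.re → z.re ≤ b → c ≤ z.im → z.im ≤ d →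
      (z.re = a ∨ z.re = b ∨ z.im = c ∨ z.im = d) → g z ≠ 0)
    (h0 : rectBdry a b c d (logDeriv g) = 0)
    {w : ℂ} (h1 : a < w.re) (h2 : w.re < b) (h3 : c < w.im) (h4 : w.im < d) : g w ≠ 0 := by
  intro hw
  obtain ⟨h, hh, hf, hlt⟩ := rectBdry_factor h1 h2 h3 h4 hg hw hb
  have hfin : ({z : ℂ | h z = 0} ∩ (Set.Icc a b ×ℂ Set.Icc c d)).Finite := by
    by_contra hinf
    have hK : IsCompact (Set.Icc a b ×ℂ Set.Icc c d) := isCompact_Icc.reProdIm isCompact_Icc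
    obtain ⟨x, -, hx⟩ := Set.Infinite.exists_accPt_of_subset_isCompact hinf hK
      Set.inter_subset_right
    have hfr : ∃ᶠ z in nhdsWithin x {x}ᶜ, h z = 0 := by
      rw [accPt_iff_frequently_nhdsNE] at hx
      exact hx.mono fun z hz => hz.1
    have han : AnalyticOnNhd ℂ h Set.univ := fun z _ => hh.analyticAt z
    have hz := han.eqOn_zero_of_preconnected_of_frequently_eq_zero isPreconnected_univ
        (Set.mem_univ x) hfr
    refine hb ⟨a, c⟩ le_rfl (h1.trans h2).le le_rfl (h3.trans h4).le (Or.inl rfl) ?_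
    rw [hf, hz (Set.mem_univ _)]; simp
  have := rectBdry_nonneg (h1.trans h2) (h3.trans h4) hfin.toFinset (by
    intro v hv
    simp only [Set.Finite.mem_toFinset, Set.mem_inter_iff, Set.mem_ofPred_eq,
      Complex.mem_reProdIm, Set.mem_Icc] at hv
    obtain ⟨hv0, ⟨v1, v2⟩, v3, v4⟩ := hv
    have hb' := hb v v1 v2 v3 v4
    rw [hf, hv0, mul_zero] at hb'
    simp only [ne_eq, not_true_eq_false, imp_false, not_or] at hb'
    exact ⟨lt_of_le_of_ne v1 (Ne.symm hb'.1), lt_of_le_of_ne v2 hb'.2.1,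
      lt_of_le_of_ne v3 (Ne.symm hb'.2.2.1), lt_of_le_of_ne v4 hb'.2.2.2⟩) h hh (by
    intro z z1 z2 z3 z4 hz
    simp only [Set.Finite.mem_toFinset]
    exact ⟨hz, ⟨z1, z2⟩, z3, z4⟩)
  rw [h0] at hlt
  simp at hlt
  linarith


/-- Exponential sum along a complex line. -/
noncomputable def expSum {E ι : Type*} [NormedAddCommGroup E] [NormedSpace ℝ E]
    (A : Finset ι) (k : ι → ℂ) (l : ι → E →L[ℝ] ℝ) (d p : E) (z : ℂ) : ℂ :=
  ∑ α ∈ A, k α * cexp (I * (l α p : ℝ) + (l α d : ℝ) * z)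

section
variable {E ι : Type*} [NormedAddCommGroup E] [NormedSpace ℝ E]
    (A : Finset ι) (k : ι → ℂ) (l : ι → E →L[ℝ] ℝ) (d : E)

theorem expSum_shift (p : E) (z : ℂ) (s : ℝ) :
    expSum A k l d (p + s • d) z = expSum A k l d p (z + s * I) := by
  unfold expSum
  refine Finset.sum_congr rfl fun α _ => ?_
  congr 2
  simp
  ring

theorem expSum_neg (p : E) (z : ℂ) : expSum A k l (-d) p z = expSum A k l d p (-z) := by
  unfold expSum
  simp

theorem expSum_differentiable (p : E) : Differentiable ℂ (expSum A k l d p) := by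
  unfold expSum
  fun_prop

theorem expSum_deriv (p : E) (z : ℂ) :
    deriv (expSum A k l d p) z = expSum A (fun α => k α * (l α d : ℝ)) l d p z := by
  unfold expSum
  rw [deriv_fun_sum (fun α _ => by fun_prop)]
  refine Finset.sum_congr rfl fun α _ => ?_
  have : HasDerivAt (fun z : ℂ => k α * cexp (I * (l α p : ℝ) + (l α d : ℝ) * z))
      (k α * (cexp (I * (l α p : ℝ) + (l α d : ℝ) * z) * ((l α d : ℝ) * 1))) z :=
    ((((hasDerivAt_id z).const_mul _).const_add _).cexp).const_mul _
  rw [this.deriv]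
  ring

theorem expSum_continuous : Continuous fun q : E × ℂ => expSum A k l d q.1 q.2 := by
  unfold expSum
  fun_prop

theorem expSum_dominant (hA : A.Nonempty) (hk : ∀ α ∈ A, k α ≠ 0)
    (hinj : Set.InjOn (fun α => l α d) A) :
    ∃ α ∈ A, ∃ R₀ : ℝ, ∀ R : ℝ, R₀ ≤ R → ∀ p : E,
      ‖expSum A k l d p R * cexp (-(I * (l α p : ℝ) + (l α d : ℝ) * R)) / k α - 1‖ < 1 := by
  classical
  obtain ⟨α, hα, hmax⟩ := A.exists_max_image (fun α => l α d) hA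
  refine ⟨α, hα, ?_⟩
  have ht : Filter.Tendsto (fun R : ℝ => ∑ β ∈ A.erase α,
      ‖k β / k α‖ * Real.exp ((l β d - l α d) * R)) Filter.atTop (nhds 0) := by
    rw [← Finset.sum_const_zero (s := A.erase α)]
    refine tendsto_finsetSum _ fun β hβ => ?_
    have hβ' := Finset.mem_erase.1 hβ
    have hlt : l β d - l α d < 0 := by
      have h1 := hmax β hβ'.2
      have h2 : l β d ≠ l α d := fun h => hβ'.1 (hinj hβ'.2 hα h)
      have := lt_of_le_of_ne h1 h2
      linarith
    rw [← mul_zero ‖k β / k α‖]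
    refine Filter.Tendsto.const_mul _ (Real.tendsto_exp_atBot.comp ?_)
    exact Filter.tendsto_id.const_mul_atTop_of_neg hlt
  obtain ⟨R₀, hR₀⟩ := Filter.eventually_atTop.1 (ht.eventually_lt_const one_pos)
  refine ⟨R₀, fun R hR p => lt_of_le_of_lt ?_ (hR₀ R hR)⟩
  have heq : expSum A k l d p R * cexp (-(I * (l α p : ℝ) + (l α d : ℝ) * R)) / k α - 1 =
      ∑ β ∈ A.erase α, k β / k α *
        cexp (((l β p - l α p : ℝ) : ℂ) * I + (((l β d - l α d) * R : ℝ) : ℂ)) := by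
    unfold expSum
    rw [Finset.sum_mul, Finset.sum_div, ← Finset.add_sum_erase A _ hα]
    have : k α * cexp (I * (l α p : ℝ) + (l α d : ℝ) * R) *
        cexp (-(I * (l α p : ℝ) + (l α d : ℝ) * R)) / k α = 1 := by
      rw [mul_assoc, ← Complex.exp_add, add_neg_cancel, Complex.exp_zero, mul_one,
        div_self (hk α hα)]
    rw [this, add_sub_cancel_left]
    refine Finset.sum_congr rfl fun β _ => ?_
    rw [mul_assoc, ← Complex.exp_add, mul_div_right_comm]
    congr 2
    push_cast
    ring
  rw [heq]
  refine (norm_sum_le _ _).trans (Finset.sum_le_sum fun β _ => ?_)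
  rw [norm_mul, Complex.norm_exp]
  simp
end

theorem mem_slit_of_norm {z : ℂ} (h : ‖z - 1‖ < 1) : z ∈ slitPlane := by
  left
  have := (abs_le.1 (Complex.abs_re_le_norm (z - 1))).1
  simp at this
  linarith

/-- exponentiating the integral of a logarithmic derivative along a real segment -/
theorem exp_integral_logDeriv {g : ℂ → ℂ} (hg : Differentiable ℂ g)
    (h0 : ∀ x : ℝ, g x ≠ 0) (a b : ℝ) :
    cexp (∫ x : ℝ in a..b, logDeriv g x) = g b / g a := by
  have hc : Continuous fun x : ℝ => logDeriv g x := by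
    have h1 : Continuous (deriv g) := (hg.deriv : Differentiable ℂ (deriv g)).continuous
    have h2 := hg.continuous
    exact Continuous.div (by fun_prop) (by fun_prop) h0
  have hder : ∀ t : ℝ, HasDerivAt
      (fun t : ℝ => g t * cexp (-∫ x : ℝ in a..t, logDeriv g x)) 0 t := by
    intro t
    have h1 : HasDerivAt (fun t : ℝ => ∫ x : ℝ in a..t, logDeriv g x) (logDeriv g t) t :=
      intervalIntegral.integral_hasDerivAt_right (hc.intervalIntegrable _ _)
        hc.aestronglyMeasurable.stronglyMeasurableAtFilter hc.continuousAt
    have h2 : HasDerivAt (fun t : ℝ => g t) (deriv g t) t :=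
      (hg t).hasDerivAt.comp_ofReal
    have h3 := h2.mul h1.neg.cexp
    have e : deriv g t * cexp ((-fun t : ℝ => ∫ x : ℝ in a..t, logDeriv g x) t) +
      g t * (cexp ((-fun t : ℝ => ∫ x : ℝ in a..t, logDeriv g x) t) * -logDeriv g t) = 0 := by
      rw [logDeriv_apply]
      field_simp [h0 t]
      ring
    rw [e] at h3
    exact h3
  have hconst := is_const_of_deriv_eq_zero (fun t => (hder t).differentiableAt)
    (fun t => (hder t).deriv) b a
  simp only [intervalIntegral.integral_same, neg_zero, Complex.exp_zero, mul_one] at hconst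
  rw [← hconst, Complex.exp_neg]
  field_simp [h0 b]

theorem const_of_exp_const {X : Type*} [TopologicalSpace X] {S : Set X} (hS : IsPreconnected S)
    {K : X → ℂ} (hK : ContinuousOn K S) {c : ℂ} (hc : ∀ p ∈ S, cexp (K p) = c)
    {x y : X} (hx : x ∈ S) (hy : y ∈ S) : K x = K y := by
  have hd : DiscreteTopology (Set.range (fun m : ℤ => (m : ℝ))) :=
    (Int.isClosedEmbedding_coe_real.isEmbedding.toHomeomorph).symm.isEmbedding.discreteTopology
  have hm : ∀ p ∈ S, ∃ m : ℤ, K p = K x + m * (2 * Real.pi * I) := fun p hp =>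
    Complex.exp_eq_exp_iff_exists_int.1 ((hc p hp).trans (hc x hx).symm)
  have hpi := Real.pi_ne_zero
  have := hS.constant_of_mapsTo (f := fun p => ((K p - K x).im / (2 * Real.pi)))
    (T := Set.range (fun m : ℤ => (m : ℝ))) ⟨hd⟩
    ((Complex.continuous_im.comp_continuousOn (hK.sub continuousOn_const)).div_const _)
    (by
      intro p hp
      obtain ⟨m, hm⟩ := hm p hp
      refine ⟨m, ?_⟩
      simp [hm]) hy hx
  obtain ⟨m, hm⟩ := hm y hy
  simp [hm] at this
  simp [hm, this]


theorem log_side {g : ℂ → ℂ} (hg : Differentiable ℂ g) (R m : ℝ) (x0 κ : ℂ)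
    (hκ : κ ≠ 0)
    (hT : ∀ y : ℝ, g (R + y * I) * cexp (-(I * (x0 + y * m) + m * R)) / κ ∈ slitPlane) :
    I • (∫ y : ℝ in (0:ℝ)..1, logDeriv g (R + y * I)) = I * m
      + Complex.log (g (R + I) * cexp (-(I * (x0 + m) + m * R)) / κ)
      - Complex.log (g R * cexp (-(I * x0 + m * R)) / κ) := by
  have hne : ∀ y : ℝ, g (R + y * I) ≠ 0 := by
    intro y h
    have := Complex.slitPlane_ne_zero (hT y)
    simp [h] at this
  have hc : Continuous fun y : ℝ => I * logDeriv g (R + y * I) := by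
    have h1 : Continuous (deriv g) := (hg.deriv : Differentiable ℂ (deriv g)).continuous
    have h2 := hg.continuous
    exact continuous_const.mul (Continuous.div (by fun_prop) (by fun_prop) hne)
  have hder : ∀ y : ℝ, HasDerivAt (fun y : ℝ => I * (y * m) +
      Complex.log (g (R + y * I) * cexp (-(I * (x0 + y * m) + m * R)) / κ))
      (I * logDeriv g (R + y * I)) y := by
    intro y
    have h1 : HasDerivAt (fun z : ℂ => g (R + z * I)) (deriv g (R + y * I) * (1 * I)) (y : ℂ) :=
      HasDerivAt.comp (h₂ := g) (h := fun z : ℂ => (R : ℂ) + z * I) (y : ℂ)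
        (hg _).hasDerivAt (((hasDerivAt_id (y : ℂ)).mul_const I).const_add _)
    have h2 : HasDerivAt (fun z : ℂ => cexp (-(I * (x0 + z * m) + m * R)))
        (cexp (-(I * (x0 + y * m) + m * R)) * -(I * (1 * m))) (y : ℂ) :=
      (((((((hasDerivAt_id (y : ℂ)).mul_const (m : ℂ)).const_add x0).const_mul I).add_const
        ((m : ℂ) * R))).fun_neg).cexp
    have h3 := ((h1.fun_mul h2).div_const κ).clog (hT y)
    have h4 : HasDerivAt (fun z : ℂ => I * (z * m)) (I * (1 * m)) (y : ℂ) :=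
      ((hasDerivAt_id (y : ℂ)).mul_const (m : ℂ)).const_mul I
    have h5 := (h4.fun_add h3).comp_ofReal
    have e : I * logDeriv g (R + y * I) = I * (1 * m) +
        (deriv g (R + y * I) * (1 * I) * cexp (-(I * (x0 + y * m) + m * R)) +
          g (R + y * I) * (cexp (-(I * (x0 + y * m) + m * R)) * -(I * (1 * m)))) / κ /
        (g (R + y * I) * cexp (-(I * (x0 + y * m) + m * R)) / κ) := by
      have := hne y
      have h6 := Complex.exp_ne_zero (-(I * (x0 + y * m) + m * R))
      rw [logDeriv_apply]
      clear h1 h2 h3 h4 h5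
      generalize cexp (-(I * (x0 + y * m) + m * R)) = u at *
      generalize deriv g (R + y * I) = v at *
      generalize g (R + y * I) = t at *
      field_simp
      ring
    rw [e]
    exact h5
  rw [smul_eq_mul, ← intervalIntegral.integral_const_mul,
    intervalIntegral.integral_eq_sub_of_hasDerivAt (fun y _ => hder y)
      (hc.intervalIntegrable _ _)]
  simp

theorem expSum_J_continuousOn {E ι : Type*} [NormedAddCommGroup E] [NormedSpace ℝ E]
    (A : Finset ι) (k : ι → ℂ) (l : ι → E →L[ℝ] ℝ) (d : E)
    {S : Set E} (hne : ∀ p ∈ S, ∀ σ : ℝ, expSum A k l d p σ ≠ 0) (a b : ℝ) :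
    ContinuousOn (fun p => ∫ σ : ℝ in a..b, logDeriv (expSum A k l d p) σ) S := by
  rw [continuousOn_iff_continuous_domRestrict]
  have c : ∀ k' : ι → ℂ, Continuous fun q : S × ℝ => expSum A k' l d (q.1 : E) (q.2 : ℂ) := by
    intro k'
    unfold expSum
    fun_prop
  have hq : Continuous (fun q : S × ℝ =>
      expSum A (fun α => k α * (l α d : ℝ)) l d (q.1 : E) (q.2 : ℂ) /
      expSum A k l d (q.1 : E) (q.2 : ℂ)) :=
    Continuous.div (c _) (c k) (fun q => hne q.1 q.1.2 q.2)
  have e : (fun q : S × ℝ =>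
      expSum A (fun α => k α * (l α d : ℝ)) l d (q.1 : E) (q.2 : ℂ) /
      expSum A k l d (q.1 : E) (q.2 : ℂ)) = (Function.uncurry fun (p : S) (σ : ℝ) =>
      logDeriv (expSum A k l d (p : E)) (σ : ℂ)) := by
    funext q
    simp only [Function.uncurry, logDeriv_apply, expSum_deriv]
  rw [e] at hq
  exact intervalIntegral.continuous_parametric_intervalIntegral_of_continuous' hq a b

set_option maxHeartbeats 2000000 in
theorem expSum_core {E ι : Type*} [NormedAddCommGroup E] [NormedSpace ℝ E]
    (A : Finset ι) (k : ι → ℂ) (l : ι → E →L[ℝ] ℝ) (d : E) (hA : A.Nonempty)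
    (hk : ∀ α ∈ A, k α ≠ 0) (hinj : Set.InjOn (fun α => l α d) A)
    {S : Set E} (hS : IsPreconnected S)
    (hne : ∀ p ∈ S, ∀ σ : ℝ, expSum A k l d p σ ≠ 0)
    {x : E} (hx : x ∈ S) (hy : x + d ∈ S) {s : ℝ} (hs0 : 0 < s) (hs1 : s < 1) :
    expSum A k l d (x + s • d) 0 ≠ 0 := by
  obtain ⟨α, hα, R₁, h1⟩ := expSum_dominant A k l d hA hk hinj
  obtain ⟨β, hβ, R₂, h2⟩ := expSum_dominant A k l (-d) hA hk (by
    intro a ha b hb hab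
    simp only [map_neg, neg_inj] at hab
    exact hinj ha hb hab)
  obtain ⟨R, hR1, hR2, hR0⟩ : ∃ R : ℝ, R₁ ≤ R ∧ R₂ ≤ R ∧ 0 < R :=
    ⟨max (max R₁ R₂) 1, by simp, by simp, by simp⟩
  set P : E → ℂ := fun p => expSum A k l d p R *
    cexp (-(I * (l α p : ℝ) + (l α d : ℝ) * R)) / k α with hP
  set N : E → ℂ := fun p => expSum A k l d p (-R : ℝ) *
    cexp (-(I * (l β p : ℝ) + (l β d : ℝ) * (-R : ℝ))) / k β with hN
  have hPs : ∀ p, P p ∈ slitPlane := fun p => mem_slit_of_norm (h1 R hR1 p)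
  have hNs : ∀ p, N p ∈ slitPlane := fun p => mem_slit_of_norm (by
    have := h2 R hR2 p
    rw [expSum_neg] at this
    simpa [hN] using this)
  set J : E → ℂ := fun p => ∫ σ : ℝ in (-R)..R, logDeriv (expSum A k l d p) σ with hJ
  set K : E → ℂ := fun p => J p - I * ((l α p : ℝ) - (l β p : ℝ)) - Complex.log (P p)
    + Complex.log (N p) with hK
  have hlc : ∀ γ, Continuous fun p : E => (l γ p : ℝ) := fun γ => (l γ).continuous
  have hcE : ∀ (k : ι → ℂ) (σ : ℝ), Continuous fun p : E => expSum A k l d p σ := fun k σ =>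
    by unfold expSum; fun_prop
  have hPc : Continuous P := by
    have := hcE k R
    have := hlc α
    rw [hP]
    fun_prop
  have hNc : Continuous N := by
    have := hcE k (-R)
    have := hlc β
    rw [hN]
    fun_prop
  have hJc : ContinuousOn J S := by
    exact expSum_J_continuousOn A k l d hne (-R) R
  have hKc : ContinuousOn K S := by
    have hl : Continuous fun p => I * (((l α p : ℝ) : ℂ) - (l β p : ℝ)) := by
      have := hlc α
      have := hlc β
      fun_prop
    exact ((hJc.sub hl.continuousOn).sub (hPc.clog hPs).continuousOn).add
      (hNc.clog hNs).continuousOn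
  have hexp : ∀ p ∈ S, cexp (K p) = k α * cexp ((l α d : ℝ) * R) /
      (k β * cexp ((l β d : ℝ) * (-R : ℝ))) := by
    intro p hp
    have hj : cexp (J p) = expSum A k l d p R / expSum A k l d p (-R : ℝ) :=
      exp_integral_logDeriv (expSum_differentiable A k l d p) (hne p hp) (-R) R
    have ha := hne p hp R
    have hb := hne p hp (-R)
    have ka := hk α hα
    have kb := hk β hβ
    simp only [hK]
    rw [Complex.exp_add, Complex.exp_sub, Complex.exp_sub, hj,
      Complex.exp_log (slitPlane_ne_zero (hPs p)), Complex.exp_log (slitPlane_ne_zero (hNs p))]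
    simp only [hP, hN]
    rw [mul_sub, Complex.exp_sub, Complex.exp_neg, Complex.exp_neg, Complex.exp_add,
      Complex.exp_add]
    have e1 := Complex.exp_ne_zero (I * (l α p : ℝ))
    have e2 := Complex.exp_ne_zero (I * (l β p : ℝ))
    have e3 := Complex.exp_ne_zero ((l α d : ℝ) * R)
    have e4 := Complex.exp_ne_zero ((l β d : ℝ) * (-R : ℝ))
    generalize cexp (I * (l α p : ℝ)) = u1 at *
    generalize cexp (I * (l β p : ℝ)) = u2 at *
    generalize cexp ((l α d : ℝ) * R) = u3 at *
    generalize cexp ((l β d : ℝ) * (-R : ℝ)) = u4 at *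
    generalize expSum A k l d p R = u5 at *
    generalize expSum A k l d p (-R : ℝ) = u6 at *
    field_simp
  have hKK := const_of_exp_const hS hKc hexp hx hy
  have hd := expSum_differentiable A k l d x
  have hsh : ∀ (σ y : ℝ), expSum A k l d x (σ + y * I) = expSum A k l d (x + y • d) σ :=
    fun σ y => (expSum_shift A k l d x σ y).symm
  have hPy : ∀ y : ℝ, expSum A k l d x (R + y * I) *
      cexp (-(I * ((l α x : ℝ) + y * (l α d : ℝ)) + (l α d : ℝ) * R)) / k α = P (x + y • d) := by
    intro y
    simp [hP, hsh]
  have hNy : ∀ y : ℝ, expSum A k l d x ((-R : ℝ) + y * I) *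
      cexp (-(I * ((l β x : ℝ) + y * (l β d : ℝ)) + (l β d : ℝ) * (-R : ℝ))) / k β
        = N (x + y • d) := by
    intro y
    rw [hsh]
    simp [hN]
  have sR := log_side hd R (l α d) (l α x : ℝ) (k α) (hk α hα)
    (fun y => by rw [hPy]; exact hPs _)
  have sL := log_side hd (-R) (l β d) (l β x : ℝ) (k β) (hk β hβ)
    (fun y => by rw [hNy]; exact hNs _)
  have hP1 := hPy 1
  have hP0 := hPy 0
  have hN1 := hNy 1
  have hN0 := hNy 0
  simp only [ofReal_one, one_mul, one_smul, ofReal_zero, zero_mul, add_zero, zero_smul]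
    at hP1 hP0 hN1 hN0
  rw [hP1, hP0] at sR
  rw [hN1, hN0] at sL
  have hld : (fun σ : ℝ => logDeriv (expSum A k l d x) (σ + ((1 : ℝ) : ℂ) * I)) =
      fun σ : ℝ => logDeriv (expSum A k l d (x + d)) σ := by
    ext σ
    have h := hsh σ 1
    rw [one_smul] at h
    rw [logDeriv_apply, logDeriv_apply, h, expSum_deriv, expSum_deriv, ← expSum_shift, one_smul]
  have hB : rectBdry (-R) R 0 1 (logDeriv (expSum A k l d x)) = 0 := by
    unfold rectBdry
    rw [sR, sL, hld]
    have hj0 : (∫ σ : ℝ in (-R)..R, logDeriv (expSum A k l d x) (σ + ((0 : ℝ) : ℂ) * I)) = J x := by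
      simp [hJ]
    have hj1 : (∫ σ : ℝ in (-R)..R, logDeriv (expSum A k l d (x + d)) σ) = J (x + d) := rfl
    rw [hj0, hj1]
    simp only [hK, map_add, ofReal_add] at hKK
    linear_combination hKK
  rw [expSum_shift, zero_add]
  refine no_zero_of_rectBdry hd ?_ hB ?_ ?_ ?_ ?_
  · intro z _ _ _ _ hz
    have hz' : z = (z.re : ℂ) + z.im * I := (Complex.re_add_im z).symm
    rcases hz with h | h | h | h
    · rw [hz', h]
      intro h0
      apply slitPlane_ne_zero (hNs (x + z.im • d))
      rw [← hNy, h0]; simp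
    · rw [hz', h]
      intro h0
      apply slitPlane_ne_zero (hPs (x + z.im • d))
      rw [← hPy, h0]; simp
    · rw [hz', h]
      simpa using hne x hx z.re
    · rw [hz', h, hsh, one_smul]
      exact hne _ hy _
  all_goals simp
  all_goals assumption


/-- The linear form attached to an exponent. -/
noncomputable def expForm {n : ℕ} (α : Fin n → ℤ) : (Fin n → ℝ) →L[ℝ] ℝ :=
  ∑ j, (α j : ℝ) • ContinuousLinearMap.proj j

theorem expForm_apply {n : ℕ} (α : Fin n → ℤ) (p : Fin n → ℝ) :
    expForm α p = ∑ j, (α j : ℝ) * p j := by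
  simp [expForm]

/-- `f(exp(u + i p))`. -/
noncomputable def liftedPoly {n : ℕ} (A : Finset (Fin n → ℤ)) (a : (Fin n → ℤ) → ℂ)
    (u p : Fin n → ℝ) : ℂ :=
  ∑ α ∈ A, a α * cexp ((expForm α u : ℝ) + I * (expForm α p : ℝ))

theorem liftedPoly_eq {n : ℕ} (A : Finset (Fin n → ℤ)) (a : (Fin n → ℤ) → ℂ)
    (u p : Fin n → ℝ) : liftedPoly A a u p =
      ∑ α ∈ A, a α * ∏ j, (cexp (u j + p j * I)) ^ (α j) := by
  refine Finset.sum_congr rfl fun α _ => ?_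
  congr 1
  simp_rw [← Complex.exp_int_mul]
  rw [← Complex.exp_sum]
  congr 1
  rw [expForm_apply, expForm_apply]
  push_cast
  rw [Finset.mul_sum, ← Finset.sum_add_distrib]
  exact Finset.sum_congr rfl fun j _ => by ring

theorem mem_coamoeba_iff {n : ℕ} (A : Finset (Fin n → ℤ)) (a : (Fin n → ℤ) → ℂ)
    (x : Fin n → ℝ) : (∃ z : Fin n → ℂ,
      (∀ j, z j ≠ 0) ∧ (∑ α ∈ A, a α * ∏ j, z j ^ (α j)) = 0 ∧
      ∀ j, ∃ k : ℤ, x j = (z j).arg + 2 * Real.pi * k) ↔ ∃ u, liftedPoly A a u x = 0 := by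
  constructor
  · rintro ⟨z, hz, h0, hx⟩
    refine ⟨fun j => Real.log ‖z j‖, ?_⟩
    rw [liftedPoly_eq, ← h0]
    refine Finset.sum_congr rfl fun α _ => ?_
    congr 1
    refine Finset.prod_congr rfl fun j _ => ?_
    congr 1
    obtain ⟨k, hk⟩ := hx j
    rw [hk]
    have : ((Real.log ‖z j‖ : ℝ) : ℂ) + ((z j).arg + 2 * Real.pi * k : ℝ) * I =
      Complex.log (z j) + k * (2 * Real.pi * I) := by
      rw [Complex.log]; push_cast; ring
    rw [this, Complex.exp_add, Complex.exp_int_mul_two_pi_mul_I, mul_one,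
      Complex.exp_log (hz j)]
  · rintro ⟨u, hu⟩
    rw [liftedPoly_eq] at hu
    refine ⟨fun j => cexp (u j + x j * I), fun j => Complex.exp_ne_zero _, hu, fun j => ?_⟩
    have h1 : cexp (Complex.log (cexp (u j + x j * I))) = cexp (u j + x j * I) :=
      Complex.exp_log (Complex.exp_ne_zero _)
    obtain ⟨k, hk⟩ := Complex.exp_eq_exp_iff_exists_int.1 h1.symm
    refine ⟨k, ?_⟩
    have := congrArg Complex.im hk
    simp [Complex.log_im] at this
    rw [this]; ring

theorem expSum_liftedPoly {n : ℕ} (A : Finset (Fin n → ℤ)) (a : (Fin n → ℤ) → ℂ)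
    (u d p : Fin n → ℝ) (σ : ℝ) :
    expSum A (fun α => a α * cexp (expForm α u : ℝ)) expForm d p σ =
      liftedPoly A a (u + σ • d) p := by
  refine Finset.sum_congr rfl fun α _ => ?_
  rw [mul_assoc, ← Complex.exp_add]
  congr 2
  simp
  ring

theorem dense_generic {n : ℕ} (A : Finset (Fin n → ℤ)) :
    Dense {d : Fin n → ℝ | Set.InjOn (fun α => expForm α d) A} := by
  have hD : Dense (⋂ q ∈ (A ×ˢ A).filter (fun q => q.1 ≠ q.2),
      {d : Fin n → ℝ | expForm q.1 d ≠ expForm q.2 d}) := by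
    apply dense_biInter_of_isOpen
    · intro q _
      exact isOpen_ne_fun (expForm q.1).continuous (expForm q.2).continuous
    · exact Finset.countable_toSet _
    · intro q hq
      have hq' : q.1 ≠ q.2 := by
        have := Finset.mem_coe.1 hq
        exact (Finset.mem_filter.1 this).2
      let W : Submodule ℝ (Fin n → ℝ) := LinearMap.ker ((expForm q.1 - expForm q.2 :
        (Fin n → ℝ) →L[ℝ] ℝ) : (Fin n → ℝ) →ₗ[ℝ] ℝ)
      have hW : {d : Fin n → ℝ | expForm q.1 d ≠ expForm q.2 d} = (W : Set (Fin n → ℝ))ᶜ := by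
        ext d
        simp [W, sub_eq_zero]
      rw [hW, ← interior_eq_empty_iff_dense_compl]
      by_contra hne
      have htop := W.eq_top_of_nonempty_interior' (Set.nonempty_iff_ne_empty.2 hne)
      apply hq'
      ext j
      have hj : (Pi.single j 1 : Fin n → ℝ) ∈ W := by rw [htop]; trivial
      simp [W, sub_eq_zero, expForm_apply, Pi.single_apply] at hj
      exact hj
  refine hD.mono ?_
  intro d hd α hα β hβ h
  by_contra hne
  simp only [Set.mem_iInter] at hd
  exact hd (α, β) (by
    rw [Finset.mem_filter, Finset.mem_product]
    exact ⟨⟨hα, hβ⟩, hne⟩) h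

theorem coamoeba_complement_component_interior_convex
    (n : ℕ) (A : Finset (Fin n → ℤ)) (hA : A.Nonempty)
    (a : (Fin n → ℤ) → ℂ) (ha : ∀ α ∈ A, a α ≠ 0)
    (coAmoeba : Set (Fin n → ℝ))
    (hcoAmoeba : coAmoeba = {x : Fin n → ℝ | ∃ z : Fin n → ℂ,
      (∀ j, z j ≠ 0) ∧ (∑ α ∈ A, a α * ∏ j, z j ^ (α j)) = 0 ∧
      ∀ j, ∃ k : ℤ, x j = (z j).arg + 2 * Real.pi * k})
    (x : Fin n → ℝ) (hx : x ∈ coAmoebaᶜ) :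
    Convex ℝ (interior (connectedComponentIn coAmoebaᶜ x)) := by
  have hmem : ∀ q, q ∈ coAmoebaᶜ ↔ ∀ u, liftedPoly A a u q ≠ 0 := by
    intro q
    rw [hcoAmoeba, Set.mem_compl_iff, Set.mem_ofPred_eq, mem_coamoeba_iff, not_exists]
  set C := connectedComponentIn coAmoebaᶜ x with hC
  have hCsub : C ⊆ coAmoebaᶜ := connectedComponentIn_subset _ _
  have hCpre : IsPreconnected C := isPreconnected_connectedComponentIn
  -- segments in generic directions stay in the component
  have hseg : ∀ p ∈ C, ∀ q ∈ C, Set.InjOn (fun α => expForm α (q - p)) A →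
      segment ℝ p q ⊆ C := by
    intro p hp q hq hinj
    have hsub : segment ℝ p q ⊆ coAmoebaᶜ := by
      intro r hr
      rw [segment_eq_image'] at hr
      obtain ⟨s, ⟨hs0, hs1⟩, rfl⟩ := hr
      rcases hs0.eq_or_lt with rfl | hs0
      · simpa using hCsub hp
      rcases hs1.eq_or_lt with rfl | hs1
      · simpa using hCsub hq
      rw [hmem]
      intro u
      have := expSum_core A (fun α => a α * cexp (expForm α u : ℝ)) expForm (q - p) hA
        (fun α hα => mul_ne_zero (ha α hα) (Complex.exp_ne_zero _)) hinj hCpre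
        (fun r hr σ => by
          rw [expSum_liftedPoly]
          exact (hmem r).1 (hCsub hr) _) hp (by simpa using hq) hs0 hs1
      have h0 := expSum_liftedPoly A a u (q - p) (p + s • (q - p)) 0
      rw [ofReal_zero] at h0
      rw [h0] at this
      simpa using this
    have h1 := (convex_segment (𝕜 := ℝ) p q).isPreconnected.subset_connectedComponentIn
      (left_mem_segment ℝ p q) hsub
    rwa [← connectedComponentIn_eq hp] at h1
  rw [convex_iff_pointwise_add_subset]
  intro s t hs ht hst
  rcases hs.eq_or_lt with rfl | hs
  · obtain rfl : t = 1 := by linarith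
    rintro _ ⟨_, ⟨p, hp, rfl⟩, _, ⟨q, hq, rfl⟩, rfl⟩
    simpa using hq
  apply interior_maximal
  · rintro _ ⟨_, ⟨p, hp, rfl⟩, _, ⟨q, hq, rfl⟩, rfl⟩
    -- perturb to a generic direction
    have hopen : IsOpen {e : Fin n → ℝ | p + t • ((q - p) - e) ∈ interior C ∧
        q - s • ((q - p) - e) ∈ interior C} :=
      (isOpen_interior.preimage (by fun_prop)).inter (isOpen_interior.preimage (by fun_prop))
    obtain ⟨e, ⟨he1, he2⟩, he⟩ := (dense_generic A).inter_open_nonempty _ hopen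
      ⟨q - p, by simpa using ⟨hp, hq⟩⟩
    refine hseg _ (interior_subset he1) _ (interior_subset he2) ?_
      ⟨s, t, hs.le, ht, hst, ?_⟩
    · have : q - s • ((q - p) - e) - (p + t • ((q - p) - e)) = e := by
        have hs' : s = 1 - t := by linarith
        rw [hs']
        module
      rw [this]
      exact he
    · simp only []
      module
  · exact (isOpen_interior.smul₀ hs.ne').add_right
end

section
/- Let f(z) = Σ_{α∈A} a_α z^α be a Laurent polynomial in n variables with finite nonempty support A ⊆ ℤⁿ and nonzero complex coefficients, and assume its Newton polytope Δ_f has nonempty interior in ℝⁿ. Then the set of connected components of the complement in the torus Tⁿ = (ℝ/2πℤ)ⁿ of the closure of the coamoeba of V_f is finite, of cardinality at most n! · λ(Δ_f), where λ denotes n-dimensional Lebesgue measure. (Theorem 5.19(b).) -/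
open Complex
open scoped ENNReal


namespace Coam

open Classical in
/-- one-dimensional Euler lemma -/
lemma euler_one {J : Type*} [Fintype J] (c : J → ℝ) (K : J → Set ℝ)
    (hc : ∀ j, IsCompact (K j)) (hconv : ∀ j, Convex ℝ (K j))
    (h0 : ∀ t, ∑ j, (if t ∈ K j then c j else 0) = 0) :
    ∑ j, (if (K j).Nonempty then c j else 0) = 0 := by
  have key : ∀ t : ℝ, ∑ j, (if (K j).Nonempty ∧ sSup (K j) = t then c j else 0) = 0 := by
    intro t
    have hev : ∀ j, ∀ᶠ e in nhdsWithin (0:ℝ) (Set.Ioi 0),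
        ((if t ∈ K j then c j else 0) - (if t + e ∈ K j then c j else 0)
          = (if (K j).Nonempty ∧ sSup (K j) = t then c j else 0)) := by
      intro j
      by_cases hne : (K j).Nonempty
      · have hS := (hc j).sSup_mem hne
        have hI := (hc j).sInf_mem hne
        have hle : ∀ x ∈ K j, x ≤ sSup (K j) := fun x hx => le_csSup (hc j).bddAbove hx
        have hge : ∀ x ∈ K j, sInf (K j) ≤ x := fun x hx => csInf_le (hc j).bddBelow hx
        have hmem : ∀ x, x ∈ K j ↔ sInf (K j) ≤ x ∧ x ≤ sSup (K j) := by
          intro x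
          refine ⟨fun hx => ⟨hge x hx, hle x hx⟩, fun hx => ?_⟩
          exact (hconv j).ordConnected.out hI hS hx
        have e1 : ∀ᶠ e in nhdsWithin (0:ℝ) (Set.Ioi 0), t < sInf (K j) → t + e < sInf (K j) := by
          by_cases h : t < sInf (K j)
          · have : ∀ᶠ e in nhdsWithin (0:ℝ) (Set.Ioi 0), e < sInf (K j) - t :=
              Filter.Eventually.filter_mono nhdsWithin_le_nhds (gt_mem_nhds (by linarith))
            filter_upwards [this] with e he _
            linarith
          · simp [h]
        have e2 : ∀ᶠ e in nhdsWithin (0:ℝ) (Set.Ioi 0), t < sSup (K j) → t + e < sSup (K j) := by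
          by_cases h : t < sSup (K j)
          · have : ∀ᶠ e in nhdsWithin (0:ℝ) (Set.Ioi 0), e < sSup (K j) - t :=
              Filter.Eventually.filter_mono nhdsWithin_le_nhds (gt_mem_nhds (by linarith))
            filter_upwards [this] with e he _
            linarith
          · simp [h]
        filter_upwards [e1, e2, self_mem_nhdsWithin] with e h1 h2 h3
        have h3 : 0 < e := h3
        have hIS := hle _ hI
        rw [hmem, hmem]
        simp only [hne, true_and]
        rcases lt_trichotomy (sSup (K j)) t with h | h | h
        · rw [if_neg (by intro hh; linarith [hh.2]), if_neg (by intro hh; linarith [hh.2]),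
            if_neg h.ne]; simp
        · rw [if_pos ⟨by linarith, by linarith⟩, if_neg (by intro hh; linarith [hh.2]), if_pos h]
          simp
        · rw [if_neg h.ne']
          by_cases h4 : sInf (K j) ≤ t
          · rw [if_pos ⟨h4, h.le⟩, if_pos ⟨by linarith, (h2 h).le⟩]; simp
          · push Not at h4
            rw [if_neg (by intro hh; linarith [hh.1]), if_neg (by intro hh; linarith [hh.1, h1 h4])]
            simp
      · rw [Set.not_nonempty_iff_eq_empty] at hne
        simp [hne]
    obtain ⟨e, he⟩ := (Filter.eventually_all.2 hev).exists
    calc _ = ∑ j, ((if t ∈ K j then c j else 0) - (if t + e ∈ K j then c j else 0)) :=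
          Finset.sum_congr rfl (fun j _ => (he j).symm)
      _ = 0 := by rw [Finset.sum_sub_distrib, h0, h0]; simp
  have : ∀ j, (if (K j).Nonempty then c j else 0) =
      ∑ t ∈ Finset.univ.image (fun j => sSup (K j)),
        (if (K j).Nonempty ∧ sSup (K j) = t then c j else 0) := by
    intro j
    rw [Finset.sum_eq_single (sSup (K j))]
    · simp
    · intro b _ hb
      rw [if_neg]; rintro ⟨_, h⟩; exact hb h.symm
    · intro h; exact absurd (Finset.mem_image_of_mem _ (Finset.mem_univ j)) h
  rw [Finset.sum_congr rfl (fun j _ => this j), Finset.sum_comm]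
  exact Finset.sum_eq_zero (fun t _ => key t)

open Classical in
lemma euler_aux {ι : Type*} [Fintype ι] {J : Type*} [Fintype J] (c : J → ℝ) (T : Finset ι) :
    ∀ (p : ι → ℝ) (K : J → Set (ι → ℝ)),
    (∀ j, IsCompact (K j)) → (∀ j, Convex ℝ (K j)) →
    (∀ j, ∀ z ∈ K j, ∀ i ∉ T, z i = p i) →
    (∀ z, ∑ j, (if z ∈ K j then c j else 0) = 0) →
    ∑ j, (if (K j).Nonempty then c j else 0) = 0 := by
  induction T using Finset.induction_on with
  | empty =>
    intro p K hc hconv hp h0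
    refine Eq.trans ?_ (h0 p)
    refine Finset.sum_congr rfl (fun j _ => ?_)
    congr 1
    refine propext ⟨?_, fun h => ⟨p, h⟩⟩
    rintro ⟨z, hz⟩
    have : z = p := funext fun i => hp j z hz i (by simp)
    rwa [← this]
  | insert i T hi ih =>
    intro p K hc hconv hp h0
    have := euler_one c (fun j => (fun z : ι → ℝ => z i) '' K j)
      (fun j => (hc j).image (continuous_apply i))
      (fun j => (hconv j).linear_image (LinearMap.proj i)) ?_
    · simpa [Set.image_nonempty] using this
    intro t
    have := ih (Function.update p i t) (fun j => K j ∩ {z | z i = t})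
      (fun j => (hc j).inter_right (isClosed_eq (continuous_apply i) continuous_const))
      (fun j => (hconv j).inter (convex_hyperplane (LinearMap.proj (R := ℝ) (φ := fun _ : ι => ℝ) i).isLinear t)) ?_ ?_
    · refine Eq.trans ?_ this
      refine Finset.sum_congr rfl (fun j _ => ?_)
      congr 1
    · rintro j z ⟨hz, hzt⟩ i' hi'
      by_cases h : i' = i
      · subst h; simpa using hzt
      · rw [Function.update_of_ne h]
        exact hp j z hz i' (by simp [h, hi'])
    · intro z
      by_cases hz : z i = t
      · simpa [hz] using h0 z
      · simp [hz]

open Classical in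
/-- Euler lemma for compact convex sets. -/
lemma euler_compact {ι : Type*} [Fintype ι] {J : Type*} [Fintype J] (c : J → ℝ)
    (K : J → Set (ι → ℝ)) (hc : ∀ j, IsCompact (K j)) (hconv : ∀ j, Convex ℝ (K j))
    (h0 : ∀ z, ∑ j, (if z ∈ K j then c j else 0) = 0) :
    ∑ j, (if (K j).Nonempty then c j else 0) = 0 :=
  euler_aux c Finset.univ 0 K hc hconv (by simp) h0

/-- closed pointed convex cones -/
structure PCone {ι : Type*} (C : Set (ι → ℝ)) : Prop where
  closed : IsClosed C
  convex : Convex ℝ C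
  smul : ∀ t : ℝ, 0 ≤ t → ∀ z ∈ C, t • z ∈ C
  pointed : ∀ z ∈ C, -z ∈ C → z = 0

lemma PCone.inter {ι : Type*} {C : Set (ι → ℝ)} (h : PCone C) {D : Set (ι → ℝ)}
    (hD : IsClosed D) (hD2 : Convex ℝ D) (hD3 : ∀ t : ℝ, 0 ≤ t → ∀ z ∈ D, t • z ∈ D) :
    PCone (C ∩ D) :=
  ⟨h.closed.inter hD, h.convex.inter hD2, fun t ht z hz => ⟨h.smul t ht z hz.1, hD3 t ht z hz.2⟩,
    fun z hz hz' => h.pointed z hz.1 hz'.1⟩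

open Classical in
lemma cone_aux {ι : Type*} [Fintype ι] {J : Type*} [Fintype J] (c : J → ℝ) (T : Finset ι) :
    ∀ (s : ι → ℝ) (C : J → Set (ι → ℝ)),
    (∀ j, PCone (C j)) →
    (∀ j, ∀ z ∈ C j, ∀ i ∉ T, |z i| = s i * z i) →
    (∀ z, z ≠ 0 → ∑ j, (if z ∈ C j then c j else 0) = 0) →
    ∑ j, (if (∃ z ∈ C j, z ≠ 0) then c j else 0) = 0 := by
  induction T using Finset.induction_on with
  | empty =>
    intro s C hC hs h0
    have hcont : Continuous (fun z : ι → ℝ => ∑ i, s i * z i) := by fun_prop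
    have hsum : ∀ j, ∀ z ∈ C j, ∑ i, s i * z i = ∑ i, |z i| := fun j z hz =>
      Finset.sum_congr rfl (fun i _ => (hs j z hz i (by simp)).symm)
    have := euler_compact c (fun j => C j ∩ {z | ∑ i, s i * z i = 1}) ?_ ?_ ?_
    · refine Eq.trans ?_ this
      refine Finset.sum_congr rfl (fun j _ => ?_)
      congr 1
      refine propext ⟨?_, ?_⟩
      · rintro ⟨z, hz, hz0⟩
        have hpos : 0 < ∑ i, |z i| := by
          obtain ⟨i, hi⟩ := Function.ne_iff.1 hz0
          exact Finset.sum_pos' (fun i _ => abs_nonneg _) ⟨i, Finset.mem_univ _, abs_pos.2 hi⟩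
        refine ⟨(∑ i, |z i|)⁻¹ • z, (hC j).smul _ (inv_nonneg.2 hpos.le) z hz, ?_⟩
        have h1 := hsum j _ hz
        simp only [Set.mem_ofPred_eq, Pi.smul_apply, smul_eq_mul]
        have : ∀ i, s i * ((∑ i, |z i|)⁻¹ * z i) = (∑ i, |z i|)⁻¹ * (s i * z i) := fun i => by ring
        simp only [this]
        rw [← Finset.mul_sum, h1]
        exact inv_mul_cancel₀ hpos.ne'
      · rintro ⟨z, hz, hz1⟩
        refine ⟨z, hz, ?_⟩
        rintro rfl
        simp at hz1
    · intro j
      refine Metric.isCompact_of_isClosed_isBounded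
        ((hC j).closed.inter (isClosed_eq hcont continuous_const)) ?_
      refine (Metric.isBounded_closedBall (x := (0 : ι → ℝ)) (r := 1)).subset ?_
      rintro z ⟨hz, hz1⟩
      rw [mem_closedBall_zero_iff, pi_norm_le_iff_of_nonneg zero_le_one]
      intro i
      rw [Real.norm_eq_abs]
      have h1 : ∑ i, |z i| = 1 := by rw [← hsum j z hz]; exact hz1
      rw [← h1]
      exact Finset.single_le_sum (f := fun i => |z i|) (fun i _ => abs_nonneg _) (Finset.mem_univ i)
    · intro j
      refine (hC j).convex.inter (convex_hyperplane ?_ 1)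
      constructor
      · intro x y; simp [mul_add, Finset.sum_add_distrib]
      · intro t x
        simp only [Pi.smul_apply, smul_eq_mul, Finset.mul_sum]
        exact Finset.sum_congr rfl (fun i _ => by ring)
    · intro z
      by_cases hz : ∑ i, s i * z i = 1
      · have hz0 : z ≠ 0 := by rintro rfl; simp at hz
        simpa [hz] using h0 z hz0
      · simp [hz]
  | insert i T hi ih =>
    intro s C hC hs h0
    have P : ∀ (D : Set (ι → ℝ)) (e : ℝ), IsClosed D → Convex ℝ D →
        (∀ t : ℝ, 0 ≤ t → ∀ z ∈ D, t • z ∈ D) → (∀ z ∈ D, |z i| = e * z i) →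
        ∑ j, (if (∃ z ∈ C j ∩ D, z ≠ 0) then c j else 0) = 0 := by
      intro D e h1 h2 h3 h4
      refine ih (Function.update s i e) (fun j => C j ∩ D) (fun j => (hC j).inter h1 h2 h3) ?_ ?_
      · rintro j z ⟨hz, hzD⟩ i' hi'
        by_cases h : i' = i
        · subst h; simpa using h4 z hzD
        · rw [Function.update_of_ne h]
          exact hs j z hz i' (by simp [h, hi'])
      · intro z hz0
        by_cases hz : z ∈ D
        · simpa [hz] using h0 z hz0
        · simp [hz]
    have hlin : IsLinearMap ℝ (fun z : ι → ℝ => z i) :=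
      (LinearMap.proj (R := ℝ) (φ := fun _ : ι => ℝ) i).isLinear
    have P1 := P {z | 0 ≤ z i} 1 (isClosed_le continuous_const (continuous_apply i))
      (convex_halfSpace_ge hlin 0)
      (fun t ht z hz => by simpa using mul_nonneg ht hz) (fun z hz => by simpa using hz)
    have P2 := P {z | z i ≤ 0} (-1) (isClosed_le (continuous_apply i) continuous_const)
      (convex_halfSpace_le hlin 0)
      (fun t ht z hz => by simpa using mul_nonpos_of_nonneg_of_nonpos ht hz)
      (fun z hz => by simpa using hz)
    have P3 := P {z | z i = 0} 0 (isClosed_eq (continuous_apply i) continuous_const)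
      (convex_hyperplane hlin 0)
      (fun t ht z hz => by simp only [Set.mem_ofPred_eq] at hz; simp [hz]) (fun z hz => by simpa using hz)
    have hval : ∀ j, (if (∃ z ∈ C j, z ≠ 0) then c j else 0) =
        (if (∃ z ∈ C j ∩ {z | 0 ≤ z i}, z ≠ 0) then c j else 0) +
        (if (∃ z ∈ C j ∩ {z | z i ≤ 0}, z ≠ 0) then c j else 0) -
        (if (∃ z ∈ C j ∩ {z | z i = 0}, z ≠ 0) then c j else 0) := by
      intro j
      by_cases h3 : ∃ z ∈ C j ∩ {z | z i = 0}, z ≠ 0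
      · obtain ⟨z, ⟨hz, hzi⟩, hz0⟩ := h3
        have hzi : z i = 0 := hzi
        rw [if_pos ⟨z, hz, hz0⟩, if_pos ⟨z, ⟨hz, hzi.ge⟩, hz0⟩, if_pos ⟨z, ⟨hz, hzi.le⟩, hz0⟩,
          if_pos ⟨z, ⟨hz, hzi⟩, hz0⟩]; ring
      · rw [if_neg h3]
        by_cases h1 : ∃ z ∈ C j ∩ {z | 0 ≤ z i}, z ≠ 0
        · by_cases h2 : ∃ z ∈ C j ∩ {z | z i ≤ 0}, z ≠ 0
          · exfalso
            obtain ⟨p, ⟨hp, hpi⟩, hp0⟩ := h1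
            obtain ⟨q, ⟨hq, hqi⟩, hq0⟩ := h2
            have hpi : 0 ≤ p i := hpi
            have hqi : q i ≤ 0 := hqi
            have hadd : ∀ x ∈ C j, ∀ y ∈ C j, x + y ∈ C j := by
              intro x hx y hy
              have := (hC j).convex hx hy (a := 1/2) (b := 1/2) (by norm_num) (by norm_num) (by norm_num)
              have := (hC j).smul 2 (by norm_num) _ this
              rw [← smul_add, smul_smul] at this
              simpa using this
            have hpi' : p i ≠ 0 := fun h => h3 ⟨p, ⟨hp, h⟩, hp0⟩
            have hr := hadd _ ((hC j).smul (-(q i)) (by linarith) p hp) _ ((hC j).smul (p i) hpi q hq)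
            have hr0 : (-(q i)) • p + p i • q = 0 := by
              by_contra hne
              refine h3 ⟨_, ⟨hr, ?_⟩, hne⟩
              simp; ring
            have hq' := (hC j).smul (p i) hpi q hq
            have : (p i) • q = 0 := by
              apply (hC j).pointed _ hq'
              have : -(p i • q) = (-(q i)) • p := by
                rw [neg_eq_iff_add_eq_zero, add_comm]; exact hr0
              rw [this]
              exact (hC j).smul (-(q i)) (by linarith) p hp
            rcases smul_eq_zero.1 this with h | h
            · exact hpi' h
            · exact hq0 h
          · obtain ⟨z, ⟨hz, hzi⟩, hz0⟩ := h1
            rw [if_pos ⟨z, hz, hz0⟩, if_pos ⟨z, ⟨hz, hzi⟩, hz0⟩, if_neg h2]; ring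
        · rw [if_neg h1]
          have : (∃ z ∈ C j, z ≠ 0) ↔ ∃ z ∈ C j ∩ {z | z i ≤ 0}, z ≠ 0 := by
            constructor
            · rintro ⟨z, hz, hz0⟩
              rcases le_total 0 (z i) with h | h
              · exact absurd ⟨z, ⟨hz, h⟩, hz0⟩ h1
              · exact ⟨z, ⟨hz, h⟩, hz0⟩
            · rintro ⟨z, hz, hz0⟩; exact ⟨z, hz.1, hz0⟩
          simp only [this]; ring
    rw [Finset.sum_congr rfl (fun j _ => hval j), Finset.sum_sub_distrib, Finset.sum_add_distrib,
      P1, P2, P3]; simp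

open Classical in
/-- Euler lemma for closed pointed convex cones. -/
lemma euler_cone {ι : Type*} [Fintype ι] {J : Type*} [Fintype J] (c : J → ℝ)
    (C : J → Set (ι → ℝ)) (hC : ∀ j, PCone (C j))
    (h0 : ∀ z, z ≠ 0 → ∑ j, (if z ∈ C j then c j else 0) = 0) :
    ∑ j, (if (∃ z ∈ C j, z ≠ 0) then c j else 0) = 0 :=
  cone_aux c Finset.univ 0 C hC (by simp) h0

end Coam


namespace Coam

open Classical in
lemma euler_union {ι I A : Type*} [Fintype ι] [Fintype I] [Fintype A] (μ : I → ℝ)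
    (C : I → A → Set (ι → ℝ)) (P : I → Finset A)
    (hC : ∀ i, ∀ α ∈ P i, PCone (C i α))
    (hv : ∀ i, (P i).Nonempty → ∃ v, v ≠ 0 ∧ ∀ α ∈ P i, v ∈ C i α)
    (h0 : ∀ z, z ≠ 0 → ∑ i, (if ∃ α ∈ P i, z ∈ C i α then μ i else 0) = 0) :
    ∑ i, (if (P i).Nonempty then μ i else 0) = 0 := by
  -- index set
  let c : I × Finset A → ℝ := fun p =>
    if p.2.Nonempty ∧ p.2 ⊆ P p.1 then -(-1) ^ p.2.card * μ p.1 else 0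
  let K : I × Finset A → Set (ι → ℝ) := fun p =>
    if p.2.Nonempty ∧ p.2 ⊆ P p.1 then {z | ∀ α ∈ p.2, z ∈ C p.1 α} else {0}
  have hK : ∀ p, PCone (K p) := by
    intro p
    by_cases hp : p.2.Nonempty ∧ p.2 ⊆ P p.1
    · simp only [K, if_pos hp]
      have e : {z | ∀ α ∈ p.2, z ∈ C p.1 α} = ⋂ α ∈ p.2, C p.1 α := by ext; simp
      refine ⟨?_, ?_, ?_, ?_⟩
      · rw [e]; exact isClosed_biInter fun α hα => (hC _ α (hp.2 hα)).closed
      · rw [e]; exact convex_iInter₂ fun α hα => (hC _ α (hp.2 hα)).convex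
      · exact fun t ht z hz α hα => (hC _ α (hp.2 hα)).smul t ht z (hz α hα)
      · intro z hz hz'
        obtain ⟨α, hα⟩ := hp.1
        exact (hC _ α (hp.2 hα)).pointed z (hz α hα) (hz' α hα)
    · simp only [K, if_neg hp]
      refine ⟨isClosed_singleton, convex_singleton 0, ?_, ?_⟩
      · rintro t ht z rfl; simp
      · rintro z hz _; exact hz
  have key : ∀ Q : Finset A, ∑ J : Finset A, (if J.Nonempty ∧ J ⊆ Q then -(-1 : ℝ) ^ J.card else 0)
      = if Q.Nonempty then 1 else 0 := by
    intro Q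
    have h1 : ∑ J : Finset A, (if J ⊆ Q then (-1 : ℝ) ^ J.card else 0) = if Q = ∅ then 1 else 0 := by
      have := Finset.sum_powerset_neg_one_pow_card (x := Q)
      rw [← Finset.sum_filter]
      have e : Finset.univ.filter (fun J => J ⊆ Q) = Q.powerset := by ext; simp
      rw [e]
      exact_mod_cast this
    have h2 : ∀ J : Finset A, (if J.Nonempty ∧ J ⊆ Q then -(-1 : ℝ) ^ J.card else 0) =
        (if J = ∅ then 1 else 0) - (if J ⊆ Q then (-1 : ℝ) ^ J.card else 0) := by
      intro J
      rcases J.eq_empty_or_nonempty with rfl | h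
      · simp
      · simp [h, h.ne_empty]
        split_ifs <;> simp
    rw [Finset.sum_congr rfl (fun J _ => h2 J), Finset.sum_sub_distrib, h1]
    rcases Q.eq_empty_or_nonempty with rfl | h
    · simp
    · simp [h, h.ne_empty]
  have main := euler_cone c K hK ?_
  · rw [Fintype.sum_prod_type] at main
    refine Eq.trans ?_ main
    refine Finset.sum_congr rfl (fun i _ => ?_)
    have : ∀ J : Finset A, (if (∃ z ∈ K (i, J), z ≠ 0) then c (i, J) else 0) =
        (if J.Nonempty ∧ J ⊆ P i then -(-1 : ℝ) ^ J.card else 0) * μ i := by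
      intro J
      by_cases hp : J.Nonempty ∧ J ⊆ P i
      · simp only [K, c, if_pos hp]
        obtain ⟨v, hv0, hv⟩ := hv i (hp.1.mono hp.2)
        rw [if_pos ⟨v, fun α hα => hv α (hp.2 hα), hv0⟩]
      · simp [c, if_neg hp]
    rw [Finset.sum_congr rfl (fun J _ => this J), ← Finset.sum_mul, key]
    split_ifs <;> simp
  · intro z hz
    rw [Fintype.sum_prod_type]
    refine Eq.trans ?_ (h0 z hz)
    refine Finset.sum_congr rfl (fun i _ => ?_)
    have : ∀ J : Finset A, (if z ∈ K (i, J) then c (i, J) else 0) =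
        (if J.Nonempty ∧ J ⊆ (P i).filter (fun α => z ∈ C i α) then -(-1 : ℝ) ^ J.card else 0) * μ i := by
      intro J
      by_cases hp : J.Nonempty ∧ J ⊆ P i
      · simp only [K, c, if_pos hp, Set.mem_ofPred_eq]
        by_cases hz : ∀ α ∈ J, z ∈ C i α
        · rw [if_pos hz, if_pos]
          exact ⟨hp.1, fun α hα => Finset.mem_filter.2 ⟨hp.2 hα, hz α hα⟩⟩
        · rw [if_neg hz, if_neg]
          · simp
          · intro h; exact hz fun α hα => (Finset.mem_filter.1 (h.2 hα)).2
      · rw [if_neg (c := J.Nonempty ∧ J ⊆ Finset.filter (fun α => z ∈ C i α) (P i))]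
        · simp [c, if_neg hp]
        · intro h; exact hp ⟨h.1, h.2.trans (Finset.filter_subset _ _)⟩
    rw [Finset.sum_congr rfl (fun J _ => this J), ← Finset.sum_mul, key]
    have e : ((P i).filter (fun α => z ∈ C i α)).Nonempty ↔ ∃ α ∈ P i, z ∈ C i α := by
      simp [Finset.Nonempty]
    simp only [e]
    split_ifs <;> simp

open Classical in
lemma fiber_sum {I B : Type*} [Fintype I] (r : I → B) (μ : I → ℝ) (Q : I → Prop)
    (hQ : ∀ i j, r i = r j → Q i → Q j)
    (h : ∀ k, Q k → ∑ i, (if r i = r k then μ i else 0) = 0) :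
    ∑ i, (if Q i then μ i else 0) = 0 := by
  rw [← Finset.sum_filter]
  rw [← Finset.sum_fiberwise_of_maps_to (g := r) (t := (Finset.univ.filter Q).image r)
    (fun i hi => Finset.mem_image_of_mem _ hi)]
  refine Finset.sum_eq_zero fun b hb => ?_
  obtain ⟨k, hk, rfl⟩ := Finset.mem_image.1 hb
  have hk : Q k := by simpa using hk
  refine Eq.trans ?_ (h k hk)
  rw [Finset.filter_filter, ← Finset.sum_filter]
  congr 1
  ext i
  simp only [Finset.mem_filter, Finset.mem_univ, true_and, and_iff_right_iff_imp]
  intro hi; exact hQ k i hi.symm hk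

variable {n : ℕ}

/-- pairing -/
def pr (y : Fin n → ℝ) (α : Fin n → ℤ) : ℝ := ∑ j, y j * α j

lemma pr_add (y w : Fin n → ℝ) (α : Fin n → ℤ) : pr (y + w) α = pr y α + pr w α := by
  simp [pr, add_mul, Finset.sum_add_distrib]
lemma pr_smul (t : ℝ) (w : Fin n → ℝ) (α : Fin n → ℤ) : pr (t • w) α = t * pr w α := by
  simp [pr, Finset.mul_sum, mul_assoc]
lemma pr_neg (w : Fin n → ℝ) (α : Fin n → ℤ) : pr (-w) α = - pr w α := by
  simp [pr]
lemma pr_sub (y w : Fin n → ℝ) (α : Fin n → ℤ) : pr (y - w) α = pr y α - pr w α := by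
  simp [pr, sub_mul, Finset.sum_sub_distrib]
lemma pr_zero (α : Fin n → ℤ) : pr 0 α = 0 := by
  simp [pr]

open Classical in
/-- face -/
noncomputable def face (S : Finset (Fin n → ℤ)) (y : Fin n → ℝ) : Finset (Fin n → ℤ) :=
  S.filter (fun α => ∀ γ ∈ S, pr y γ ≤ pr y α)

lemma mem_face {S : Finset (Fin n → ℤ)} {y : Fin n → ℝ} {α : Fin n → ℤ} :
    α ∈ face S y ↔ α ∈ S ∧ ∀ γ ∈ S, pr y γ ≤ pr y α := by simp [face]

lemma face_subset (S : Finset (Fin n → ℤ)) (y : Fin n → ℝ) : face S y ⊆ S := by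
  intro α h; exact (mem_face.1 h).1

lemma face_nonempty {S : Finset (Fin n → ℤ)} (hS : S.Nonempty) (y : Fin n → ℝ) :
    (face S y).Nonempty := by
  obtain ⟨α, hα, h⟩ := S.exists_max_image (pr y) hS
  exact ⟨α, mem_face.2 ⟨hα, h⟩⟩

lemma face_large (S : Finset (Fin n → ℤ)) (w y : Fin n → ℝ) :
    ∀ᶠ K : ℝ in Filter.atTop, face S (y + K • w) = face (face S w) y := by
  rcases S.eq_empty_or_nonempty with rfl | hS
  · simp [face]
  have h1 : ∀ α ∈ S, ∀ γ ∈ S, ∀ᶠ K : ℝ in Filter.atTop, pr w γ < pr w α →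
      pr (y + K • w) γ < pr (y + K • w) α := by
    intro α _ γ _
    by_cases h : pr w γ < pr w α
    · filter_upwards [Filter.eventually_gt_atTop ((pr y γ - pr y α) / (pr w α - pr w γ))] with K hK _
      rw [div_lt_iff₀ (by linarith)] at hK
      simp only [pr_add, pr_smul]
      nlinarith
    · simp [h]
  have h2 : ∀ᶠ K : ℝ in Filter.atTop, ∀ α ∈ S, ∀ γ ∈ S, pr w γ < pr w α →
      pr (y + K • w) γ < pr (y + K • w) α := by
    rw [Filter.eventually_all_finset]
    intro α hα
    rw [Filter.eventually_all_finset]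
    intro γ hγ
    exact h1 α hα γ hγ
  filter_upwards [h2] with K hK
  ext α
  rw [mem_face, mem_face]
  constructor
  · rintro ⟨hα, h⟩
    have hαw : α ∈ face S w := by
      refine mem_face.2 ⟨hα, fun γ hγ => ?_⟩
      by_contra hlt
      push Not at hlt
      have := hK γ hγ α hα hlt
      linarith [h γ hγ]
    refine ⟨hαw, fun γ hγ => ?_⟩
    have h3 := h γ (face_subset _ _ hγ)
    have h4 := (mem_face.1 hγ).2 α hα
    have h5 := (mem_face.1 hαw).2 γ (face_subset _ _ hγ)
    have h6 : pr w α = pr w γ := le_antisymm h4 h5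
    simp only [pr_add, pr_smul, h6] at h3
    linarith
  · rintro ⟨hα, h⟩
    have hαS := face_subset _ _ hα
    refine ⟨hαS, fun γ hγ => ?_⟩
    rcases ((mem_face.1 hα).2 γ hγ).lt_or_eq with hlt | heq
    · exact (hK α hαS γ hγ hlt).le
    · have : γ ∈ face S w := mem_face.2 ⟨hγ, fun δ hδ => by
        rw [heq]; exact (mem_face.1 hα).2 δ hδ⟩
      have := h γ this
      simp only [pr_add, pr_smul, heq]
      linarith

/-- `v` is injective on `S` -/
def InjOnS (S : Finset (Fin n → ℤ)) (v : Fin n → ℝ) : Prop :=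
  ∀ α ∈ S, ∀ γ ∈ S, pr v α = pr v γ → α = γ

/-- monotone along v -/
def Mon (S : Finset (Fin n → ℤ)) (b : (Fin n → ℤ) → ℤ) (v : Fin n → ℝ) : Prop :=
  InjOnS S v ∧ ∀ (y : Fin n → ℝ) (t : ℝ), 0 ≤ t → ∀ α ∈ face S y, ∃ γ ∈ face S (y + t • v), b α ≤ b γ

lemma Mon.face {S : Finset (Fin n → ℤ)} {b : (Fin n → ℤ) → ℤ} {v : Fin n → ℝ} (h : Mon S b v)
    (w : Fin n → ℝ) : Mon (face S w) b v := by
  refine ⟨fun α hα γ hγ => h.1 α (face_subset _ _ hα) γ (face_subset _ _ hγ), ?_⟩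
  intro y t ht α hα
  obtain ⟨K, h1, h2⟩ := ((face_large S w y).and (face_large S w (y + t • v))).exists
  rw [← h1] at hα
  obtain ⟨γ, hγ, hb⟩ := h.2 _ t ht α hα
  refine ⟨γ, ?_, hb⟩
  rw [← h2]
  convert hγ using 2
  abel

/-- every point of S is a vertex -/
def Vert (S : Finset (Fin n → ℤ)) : Prop := ∀ α ∈ S, ∃ y, face S y = {α}

lemma Vert.face {S : Finset (Fin n → ℤ)} (h : Vert S) (w : Fin n → ℝ) : Vert (face S w) := by
  intro α hα
  have hαS := face_subset _ _ hα
  obtain ⟨y, hy⟩ := h α hαS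
  refine ⟨y, ?_⟩
  have hm : ∀ γ ∈ S, pr y γ ≤ pr y α := by
    have : α ∈ Coam.face S y := by rw [hy]; simp
    exact (mem_face.1 this).2
  ext γ
  rw [mem_face, Finset.mem_singleton]
  constructor
  · rintro ⟨hγ, h2⟩
    have : γ ∈ Coam.face S y := mem_face.2 ⟨face_subset _ _ hγ, fun δ hδ => (hm δ hδ).trans (h2 α hα)⟩
    rw [hy] at this; simpa using this
  · rintro rfl
    exact ⟨hα, fun δ hδ => hm δ (face_subset _ _ hδ)⟩

open Classical in
/-- chosen vertex -/
noncomputable def v0 (S : Finset (Fin n → ℤ)) : Fin n → ℤ :=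
  if h : S.Nonempty then h.choose else 0

lemma v0_mem {S : Finset (Fin n → ℤ)} (h : S.Nonempty) : v0 S ∈ S := by
  rw [v0, dif_pos h]; exact h.choose_spec

open Classical in
/-- pulling triangulation simplices -/
inductive PT : Finset (Fin n → ℤ) → Finset (Fin n → ℤ) → Prop
  | single (S : Finset (Fin n → ℤ)) (h : S.card ≤ 1) : PT S S
  | cone (S : Finset (Fin n → ℤ)) (h : 1 < S.card) (y : Fin n → ℝ) (hy : face S y ≠ S)
      (σ : Finset (Fin n → ℤ)) (hσ : PT (face S y) σ) : PT S (insert (v0 S) σ)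

lemma PT.subset {S σ : Finset (Fin n → ℤ)} (h : PT S σ) : σ ⊆ S := by
  induction h with
  | single S h => exact subset_rfl
  | cone S h y hy σ hσ ih =>
    refine Finset.insert_subset (v0_mem (Finset.card_pos.1 (by omega))) (ih.trans (face_subset _ _))

end Coam


namespace Coam
variable {n : ℕ}

/-- evaluation map relative to the base vertex -/
noncomputable def ev (S : Finset (Fin n → ℤ)) : (Fin n → ℝ) →ₗ[ℝ] (S → ℝ) where
  toFun y := fun α => pr y α - pr y (v0 S)
  map_add' x y := by ext α; simp [pr_add]; ring
  map_smul' t y := by ext α; simp [pr_smul]; ring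

lemma ev_apply (S : Finset (Fin n → ℤ)) (y : Fin n → ℝ) (α : S) :
    ev S y α = pr y α - pr y (v0 S) := rfl

/-- normal cones -/
def nc (S : Finset (Fin n → ℤ)) (α : S) : Set (S → ℝ) :=
  {z | z ∈ LinearMap.range (ev S) ∧ ∀ γ, z γ ≤ z α}

lemma ev_mem_nc (S : Finset (Fin n → ℤ)) (α : S) (y : Fin n → ℝ) :
    ev S y ∈ nc S α ↔ (α : Fin n → ℤ) ∈ face S y := by
  simp only [nc, Set.mem_ofPred_eq, LinearMap.mem_range, exists_apply_eq_apply, true_and, mem_face,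
    ev_apply, Subtype.forall, α.2, sub_le_sub_iff_right]

lemma nc_closed (S : Finset (Fin n → ℤ)) (α : S) : IsClosed (nc S α) := by
  have : nc S α = (LinearMap.range (ev S) : Set (S → ℝ)) ∩ ⋂ γ, {z | z γ ≤ z α} := by
    ext z; simp [nc]
  rw [this]
  refine IsClosed.inter (Submodule.closed_of_finiteDimensional _) ?_
  exact isClosed_iInter fun γ => isClosed_le (continuous_apply _) (continuous_apply _)

lemma nc_add (S : Finset (Fin n → ℤ)) (α : S) {z w : S → ℝ} (hz : z ∈ nc S α) (hw : w ∈ nc S α) :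
    z + w ∈ nc S α :=
  ⟨Submodule.add_mem _ hz.1 hw.1, fun γ => add_le_add (hz.2 γ) (hw.2 γ)⟩

lemma nc_smul (S : Finset (Fin n → ℤ)) (α : S) {z : S → ℝ} (hz : z ∈ nc S α) {t : ℝ} (ht : 0 ≤ t) :
    t • z ∈ nc S α :=
  ⟨Submodule.smul_mem _ _ hz.1, fun γ => mul_le_mul_of_nonneg_left (hz.2 γ) ht⟩

/-- cone plus a ray -/
def ncv (S : Finset (Fin n → ℤ)) (v : Fin n → ℝ) (α : S) : Set (S → ℝ) :=
  {z | ∃ t : ℝ, 0 ≤ t ∧ z - t • ev S v ∈ nc S α}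

lemma ncv_pcone (S : Finset (Fin n → ℤ)) (hS : S.Nonempty) (v : Fin n → ℝ) (α : S)
    (hv : (α : Fin n → ℤ) ∉ face S (-v)) : PCone (ncv S v α) := by
  have hv' : -(ev S v) ∉ nc S α := by rw [← map_neg, ev_mem_nc]; exact hv
  refine ⟨?_, ?_, ?_, ?_⟩
  · -- closed
    obtain ⟨γ, hγ, hlt⟩ : ∃ γ ∈ S, pr v γ < pr v α := by
      by_contra hcon
      push Not at hcon
      exact hv (mem_face.2 ⟨α.2, fun γ hγ => by simpa [pr_neg] using hcon γ hγ⟩)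
    set e := ev S v with he
    have hd : 0 < e α - e ⟨γ, hγ⟩ := by simp [he, ev_apply]; exact hlt
    set d := e α - e ⟨γ, hγ⟩
    let T : (S → ℝ) → ℝ := fun z => (z α - z ⟨γ, hγ⟩) / d
    have hT : Continuous T := by fun_prop
    have hset : ncv S v α = Prod.snd '' {p : Set.Icc (0:ℝ) 1 × (S → ℝ) |
        0 ≤ T p.2 ∧ p.2 - ((p.1 : ℝ) * T p.2) • e ∈ nc S α} := by
      ext z
      constructor
      · rintro ⟨t, ht, hz⟩
        have h1 := hz.2 ⟨γ, hγ⟩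
        simp only [Pi.sub_apply, Pi.smul_apply, smul_eq_mul] at h1
        have h2 : t ≤ T z := by
          rw [le_div_iff₀ hd]; simp only [d]; linarith
        rcases eq_or_lt_of_le (ht.trans h2) with h3 | h3
        · have : t = 0 := by linarith
          subst this
          refine ⟨(⟨0, by simp⟩, z), ⟨h3.le, ?_⟩, rfl⟩
          simpa using hz
        · refine ⟨(⟨t / T z, div_nonneg ht h3.le, div_le_one_of_le₀ h2 h3.le⟩, z), ⟨h3.le, ?_⟩, rfl⟩
          simp only
          rw [div_mul_cancel₀ _ h3.ne']
          exact hz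
      · rintro ⟨⟨s, z'⟩, ⟨h1, h2⟩, rfl⟩
        exact ⟨s * T z', mul_nonneg s.2.1 h1, h2⟩
    rw [hset]
    refine isClosedMap_snd_of_compactSpace _ ?_
    refine IsClosed.inter (isClosed_le continuous_const (hT.comp continuous_snd)) ?_
    exact (nc_closed S α).preimage (by fun_prop)
  · rintro z ⟨t, ht, hz⟩ w ⟨t', ht', hw⟩ a b ha hb hab
    refine ⟨a * t + b * t', by positivity, ?_⟩
    have := nc_add S α (nc_smul S α hz ha) (nc_smul S α hw hb)
    convert this using 1
    ext γ; simp; ring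
  · rintro s hs z ⟨t, ht, hz⟩
    refine ⟨s * t, by positivity, ?_⟩
    convert nc_smul S α hz hs using 1
    ext γ; simp; ring
  · rintro z ⟨t, ht, hz⟩ ⟨t', ht', hw⟩
    have hsum := nc_add S α hz hw
    have e1 : z - t • ev S v + (-z - t' • ev S v) = (t + t') • (-(ev S v)) := by
      ext γ; simp; ring
    rw [e1] at hsum
    rcases eq_or_lt_of_le (add_nonneg ht ht') with h | h
    · have h1 : t = 0 := by linarith
      have h2 : t' = 0 := by linarith
      subst h1 h2
      simp only [zero_smul, sub_zero] at hz hw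
      have hc : ∀ γ, z γ = z α := fun γ => by
        have a1 := hz.2 γ
        have a2 := hw.2 γ
        simp at a2
        linarith
      obtain ⟨y, rfl⟩ := hz.1
      have h3 : ev S y ⟨v0 S, v0_mem hS⟩ = 0 := by simp [ev_apply]
      ext γ
      rw [hc γ, ← hc ⟨v0 S, v0_mem hS⟩, h3]; rfl
    · exfalso
      apply hv'
      have := nc_smul S α hsum (inv_nonneg.2 h.le)
      rwa [smul_smul, inv_mul_cancel₀ h.ne', one_smul] at this

open Classical in
lemma Zlemma (k : ℕ) : ∀ (S : Finset (Fin n → ℤ)), S.card = k → S.Nonempty → Vert S →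
    ∀ {I : Type} [Fintype I] (l : I → (Fin n → ℤ) → ℤ),
    (∀ i j, (∀ α ∈ S, l i α = l j α) ∨ ∃ v, Mon S (fun α => l i α - l j α) v) →
    ∀ μ : I → ℝ,
    (∀ σ, PT S σ → ∀ x : (Fin n → ℤ) → ℤ, ∑ i, (if (∀ α ∈ σ, l i α = x α) then μ i else 0) = 0) →
    ∀ x : (Fin n → ℤ) → ℤ, ∑ i, (if (∀ α ∈ S, l i α = x α) then μ i else 0) = 0 := by
  induction k using Nat.strong_induction_on with
  | _ k ih =>
  intro S hk hS hV I _ l hpair μ hPT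
  by_cases hcard : S.card ≤ 1
  · exact hPT S (PT.single S hcard)
  push Not at hcard
  by_contra hcon
  push Not at hcon
  obtain ⟨x, hx⟩ := hcon
  set w := v0 S with hw
  have hwS : w ∈ S := v0_mem hS
  -- bad indices
  let m : I → ℝ := fun k => ∑ i, (if (∀ α ∈ S, l i α = l k α) then μ i else 0)
  obtain ⟨i1, hi1⟩ : ∃ i1, m i1 ≠ 0 := by
    obtain ⟨i, _, hi⟩ := Finset.exists_ne_zero_of_sum_ne_zero hx
    have hi' : ∀ α ∈ S, l i α = x α := by
      by_contra h; rw [if_neg h] at hi; exact hi rfl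
    refine ⟨i, ?_⟩
    convert hx using 1
    refine Finset.sum_congr rfl fun j _ => ?_
    congr 1
    refine propext (forall₂_congr fun α hα => ?_)
    rw [hi' α hα]
  obtain ⟨i0, hi0, hmin⟩ := (Finset.univ.filter (fun i => m i ≠ 0)).exists_min_image
    (fun i => ∑ α ∈ S, l i α) ⟨i1, by simp [hi1]⟩
  have hi0 : m i0 ≠ 0 := by simpa using hi0
  let μ' : I → ℝ := fun i => if l i w = l i0 w then μ i else 0
  -- faces
  have hface : ∀ y, face S y ≠ S → ∀ Q : I → Prop,
      (∀ i j, (∀ α ∈ face S y, l i α = l j α) → Q i → Q j) →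
      ∑ i, (if Q i then μ' i else 0) = 0 := by
    intro y hy Q hQ
    have hlt : (face S y).card < k := by
      rw [← hk]; exact Finset.card_lt_card (Finset.ssubset_iff_subset_ne.2 ⟨face_subset _ _, hy⟩)
    have h1 := ih _ hlt (face S y) rfl (face_nonempty hS y) (hV.face y) l (fun i j => by
      rcases hpair i j with h | ⟨v, h⟩
      · exact Or.inl fun α hα => h α (face_subset _ _ hα)
      · exact Or.inr ⟨v, h.face y⟩) μ' ?_
    · refine fiber_sum (fun i => fun α : face S y => l i α) μ' Q ?_ ?_
      · intro i j hij
        exact hQ i j fun α hα => congrFun hij ⟨α, hα⟩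
      · intro k _
        refine Eq.trans (Finset.sum_congr rfl fun i _ => ?_) (h1 (l k))
        congr 1
        simp [funext_iff]
    · intro σ hσ x
      have h2 := hPT _ (PT.cone S hcard y hy σ hσ) (fun α => if α = w then l i0 w else x α)
      by_cases hwx : w ∈ σ ∧ x w ≠ l i0 w
      · refine Finset.sum_eq_zero fun i _ => ?_
        by_cases h3 : ∀ α ∈ σ, l i α = x α
        · rw [if_pos h3]
          simp only [μ']
          rw [if_neg]
          rw [h3 w hwx.1]; exact hwx.2
        · rw [if_neg h3]
      · refine Eq.trans (Finset.sum_congr rfl fun i _ => ?_) h2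
        simp only [μ']
        rw [← ite_and]
        congr 1
        refine propext ⟨?_, ?_⟩
        · rintro ⟨h3, h4⟩ α hα
          rcases Finset.mem_insert.1 hα with h5 | h5
          · rw [← hw] at h5; subst h5; simpa using h4
          · by_cases h6 : α = w
            · subst h6; simpa using h4
            · rw [if_neg h6]; exact h3 α h5
        · intro h3
          refine ⟨fun α hα => ?_, by simpa using h3 w (Finset.mem_insert_self _ _)⟩
          have h4 := h3 α (Finset.mem_insert_of_mem hα)
          by_cases h6 : α = w
          · subst h6
            have h7 : x w = l i0 w := by
              by_contra h8; exact hwx ⟨hα, h8⟩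
            rw [h7]; simpa using h4
          · rw [if_neg h6] at h4; exact h4
  obtain ⟨y0, hy0⟩ := hV w hwS
  have hproper : face S y0 ≠ S := by
    intro h
    rw [hy0] at h
    rw [← h] at hcard
    simp at hcard
  have hB : ∑ i, μ' i = 0 := by
    simpa using hface y0 hproper (fun _ => True) (by simp)
  -- Euler step
  let P : I → Finset S := fun i => if l i w = l i0 w then
      Finset.univ.filter (fun α : S => l i0 α < l i α) else ∅
  have hP : ∀ i, ∀ α ∈ P i, l i w = l i0 w ∧ l i0 α < l i α := by
    intro i α hα
    simp only [P] at hα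
    split_ifs at hα with h
    · exact ⟨h, by simpa using hα⟩
    · simp at hα
  have hex : ∀ i, ∃ v, (P i).Nonempty → Mon S (fun α => l i α - l i0 α) v := by
    intro i
    rcases hpair i i0 with h | ⟨v, h⟩
    · refine ⟨0, ?_⟩
      rintro ⟨α, hα⟩
      have := (hP i α hα).2
      rw [h α α.2] at this
      exact absurd this (lt_irrefl _)
    · exact ⟨v, fun _ => h⟩
  choose v hv using hex
  have hD := euler_union μ' (fun i α => ncv S (v i) α) P ?_ ?_ ?_
  rotate_left
  · intro i α hα
    have hM := hv i ⟨α, hα⟩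
    refine ncv_pcone S hS _ α ?_
    intro hmem
    have hsing : face S (-(v i)) = {(α : Fin n → ℤ)} := by
      ext γ
      rw [Finset.mem_singleton]
      constructor
      · intro hγ
        have a1 := (mem_face.1 hγ).2 _ α.2
        have a2 := (mem_face.1 hmem).2 _ (face_subset _ _ hγ)
        simp only [pr_neg] at a1 a2
        exact hM.1 γ (face_subset _ _ hγ) α α.2 (by linarith)
      · rintro rfl; exact hmem
    obtain ⟨K, h1, h2⟩ := ((face_large S (-(v i)) y0).and (Filter.eventually_ge_atTop 0)).exists
    have h3 : (α : Fin n → ℤ) ∈ face S (y0 + K • -(v i)) := by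
      rw [h1, hsing]; simp [face]
    obtain ⟨γ, hγ, hb⟩ := hM.2 _ K h2 _ h3
    have e : y0 + K • -(v i) + K • v i = y0 := by simp
    rw [e, hy0, Finset.mem_singleton] at hγ
    subst hγ
    have := hP i α hα
    simp only at hb
    omega
  · rintro i ⟨α, hα⟩
    have hM := hv i ⟨α, hα⟩
    refine ⟨ev S (v i), ?_, fun α hα => ⟨1, zero_le_one, ?_⟩⟩
    · intro h
      obtain ⟨β, hβ, hne⟩ := Finset.exists_mem_ne hcard w
      apply hne
      apply hM.1 β hβ w hwS
      have := congrFun h ⟨β, hβ⟩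
      simp only [ev_apply, Pi.zero_apply] at this
      linarith
    · simp only [one_smul, sub_self]
      have : (0 : S → ℝ) = ev S 0 := by simp
      rw [this, ev_mem_nc, mem_face]
      exact ⟨α.2, fun γ _ => by simp [pr_zero]⟩
  · intro z hz
    by_cases hzr : z ∈ LinearMap.range (ev S)
    · obtain ⟨y, rfl⟩ := hzr
      have hyp : face S y ≠ S := by
        intro h
        apply hz
        ext γ
        rw [ev_apply]
        have a1 : (γ : Fin n → ℤ) ∈ face S y := by rw [h]; exact γ.2
        have a2 : w ∈ face S y := by rw [h]; exact hwS
        have := (mem_face.1 a1).2 _ hwS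
        have := (mem_face.1 a2).2 _ γ.2
        simp only [Pi.zero_apply]
        linarith
      have h1 := hface y hyp (fun i => ∃ α ∈ face S y, l i0 α < l i α) ?_
      · refine Eq.trans (Finset.sum_congr rfl fun i _ => ?_) h1
        by_cases hsl : l i w = l i0 w
        · congr 1
          refine propext ⟨?_, ?_⟩
          · rintro ⟨α, hα, t, ht, hmem⟩
            rw [← map_smul, ← map_sub, ev_mem_nc] at hmem
            obtain ⟨γ, hγ, hb⟩ := (hv i ⟨α, hα⟩).2 _ t ht _ hmem
            rw [sub_add_cancel] at hγ
            have := (hP i α hα).2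
            simp only at hb
            exact ⟨γ, hγ, by omega⟩
          · rintro ⟨α, hα, hlt⟩
            refine ⟨⟨α, face_subset _ _ hα⟩, ?_, 0, le_rfl, ?_⟩
            · simp only [P, if_pos hsl]; simpa using hlt
            · rw [zero_smul, sub_zero, ev_mem_nc]; exact hα
        · simp [μ', hsl]
      · rintro i j hij ⟨α, hα, h⟩
        exact ⟨α, hα, by rw [← hij α hα]; exact h⟩
    · refine Finset.sum_eq_zero fun i _ => ?_
      rw [if_neg]
      rintro ⟨α, hα, t, ht, hmem⟩
      apply hzr
      have := Submodule.add_mem _ hmem.1 (Submodule.smul_mem _ t (LinearMap.mem_range_self (ev S) (v i)))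
      simpa using this
  -- conclusion
  let Q1 : I → Prop := fun i => (∀ α ∈ S, l i α ≤ l i0 α)
  have hQ1 : ∑ i, (if Q1 i then μ' i else 0) = 0 := by
    have : ∀ i, (if Q1 i then μ' i else 0) = μ' i - (if (P i).Nonempty then μ' i else 0) := by
      intro i
      by_cases hsl : l i w = l i0 w
      · have : (P i).Nonempty ↔ ¬ Q1 i := by
          simp only [P, if_pos hsl, Q1]
          simp [Finset.Nonempty]
        by_cases hq : Q1 i
        · simp [this, hq]
        · simp [this, hq]
      · simp [μ', hsl]
    rw [Finset.sum_congr rfl fun i _ => this i, Finset.sum_sub_distrib, hB, hD]; simp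
  let Q2 : I → Prop := fun i => (∀ α ∈ S, l i α ≤ l i0 α) ∧ ¬ (∀ α ∈ S, l i α = l i0 α)
  have hQ2 : ∑ i, (if Q2 i then μ' i else 0) = 0 := by
    have := fiber_sum (fun i => fun α : S => l i α) μ' Q2 ?_ ?_
    · convert this
    · rintro i j hij ⟨h1, h2⟩
      have hij' : ∀ α ∈ S, l i α = l j α := fun α hα => congrFun hij ⟨α, hα⟩
      refine ⟨fun α hα => by rw [← hij' α hα]; exact h1 α hα, fun h => h2 fun α hα => ?_⟩
      rw [hij' α hα]; exact h α hα
    · rintro j ⟨h1, h2⟩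
      have hmj : m j = 0 := by
        by_contra hne
        have h3 := hmin j (by simp [hne])
        apply h2
        have h4 := Finset.sum_le_sum h1
        have h5 := (Finset.sum_eq_sum_iff_of_le h1).1 (le_antisymm h4 h3)
        exact h5
      have hcl : ∀ i, ((fun α : S => l i α) = fun α : S => l j α) ↔ ∀ α ∈ S, l i α = l j α := by
        intro i; simp [funext_iff]
      by_cases hsl : l j w = l i0 w
      · refine Eq.trans (Finset.sum_congr rfl fun i _ => ?_) hmj
        by_cases hh : ∀ α ∈ S, l i α = l j α
        · rw [if_pos hh, if_pos ((hcl i).2 hh)]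
          simp [μ', hh w hwS, hsl]
        · rw [if_neg hh, if_neg (fun h => hh ((hcl i).1 h))]
      · refine Finset.sum_eq_zero fun i _ => ?_
        by_cases hh : ∀ α ∈ S, l i α = l j α
        · rw [if_pos ((hcl i).2 hh)]
          simp [μ', hh w hwS, hsl]
        · rw [if_neg (fun h => hh ((hcl i).1 h))]
  apply hi0
  have : ∀ i, (if (∀ α ∈ S, l i α = l i0 α) then μ i else 0) =
      (if Q1 i then μ' i else 0) - (if Q2 i then μ' i else 0) := by
    intro i
    by_cases hh : ∀ α ∈ S, l i α = l i0 α
    · have q1 : Q1 i := fun α hα => (hh α hα).le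
      have q2 : ¬ Q2 i := fun h => h.2 hh
      rw [if_pos hh, if_pos q1, if_neg q2]
      simp [μ', hh w hwS]
    · rw [if_neg hh]
      by_cases q1 : Q1 i
      · have q2 : Q2 i := ⟨q1, hh⟩
        rw [if_pos q1, if_pos q2]; simp
      · have q2 : ¬ Q2 i := fun h => q1 h.1
        rw [if_neg q1, if_neg q2]; simp
  simp only [m]
  rw [Finset.sum_congr rfl fun i _ => this i, Finset.sum_sub_distrib, hQ1, hQ2]; simp

end Coam


namespace Coam
variable {n : ℕ}

open Classical in
/-- set of all simplices -/
noncomputable def PTS (S : Finset (Fin n → ℤ)) : Finset (Finset (Fin n → ℤ)) :=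
  S.powerset.filter (PT S)

lemma mem_PTS {S σ : Finset (Fin n → ℤ)} : σ ∈ PTS S ↔ PT S σ := by
  simp only [PTS, Finset.mem_filter, Finset.mem_powerset, and_iff_right_iff_imp]
  exact fun h => h.subset

open Classical in
/-- restricted labels -/
noncomputable def labs {I : Type} [Fintype I] (l : I → (Fin n → ℤ) → ℤ) (σ : Finset (Fin n → ℤ)) :
    Finset (σ → ℤ) := Finset.univ.image (fun i => fun α : σ => l i α)

open Classical in
lemma card_le (S : Finset (Fin n → ℤ)) (hS : S.Nonempty) (hV : Vert S)
    {I : Type} [Fintype I] (l : I → (Fin n → ℤ) → ℤ)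
    (hinj : ∀ i j, (∀ α ∈ S, l i α = l j α) → i = j)
    (hpair : ∀ i j, i ≠ j → ∃ v, Mon S (fun α => l i α - l j α) v) :
    Fintype.card I ≤ ∑ σ ∈ PTS S, (labs l σ).card := by
  let B := Σ σ : PTS S, labs l (σ : Finset (Fin n → ℤ))
  let Φ : (I → ℝ) →ₗ[ℝ] (B → ℝ) :=
    { toFun := fun μ b => ∑ i, (if (fun α : (b.1 : Finset (Fin n → ℤ)) => l i α) = b.2.1 then μ i else 0)
      map_add' := by
        intro x y
        ext b
        simp only [Pi.add_apply]
        rw [← Finset.sum_add_distrib]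
        refine Finset.sum_congr rfl fun i _ => ?_
        split_ifs <;> simp
      map_smul' := by
        intro t x
        ext b
        simp only [Pi.smul_apply, smul_eq_mul, RingHom.id_apply]
        rw [Finset.mul_sum]
        refine Finset.sum_congr rfl fun i _ => ?_
        split_ifs <;> simp }
  have hΦ : Function.Injective Φ := by
    rw [injective_iff_map_eq_zero]
    intro μ hμ
    have hz := Zlemma S.card S rfl hS hV l (fun i j => by
      by_cases h : i = j
      · subst h; exact Or.inl fun _ _ => rfl
      · exact Or.inr (hpair i j h)) μ ?_
    · ext i
      have := hz (l i)
      rw [Finset.sum_eq_single i] at this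
      · simpa using this
      · intro j _ hj
        rw [if_neg]
        intro h; exact hj (hinj j i h)
      · simp
    · intro σ hσ x
      have hiff : ∀ i, (∀ α ∈ σ, l i α = x α) ↔ (fun α : σ => l i α) = fun α : σ => x α := by
        intro i; simp [funext_iff]
      by_cases hx : (fun α : σ => x α) ∈ labs l σ
      · have := congrFun hμ ⟨⟨σ, mem_PTS.2 hσ⟩, ⟨_, hx⟩⟩
        refine Eq.trans (Finset.sum_congr rfl fun i _ => ?_) this
        by_cases h : ∀ α ∈ σ, l i α = x α
        · rw [if_pos h, if_pos ((hiff i).1 h)]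
        · rw [if_neg h, if_neg (fun h' => h ((hiff i).2 h'))]
      · refine Finset.sum_eq_zero fun i _ => ?_
        rw [if_neg]
        intro h
        apply hx
        rw [← (hiff i).1 h]
        exact Finset.mem_image_of_mem _ (Finset.mem_univ i)
  have h1 := LinearMap.finrank_le_finrank_of_injective hΦ
  rw [Module.finrank_fintype_fun_eq_card, Module.finrank_fintype_fun_eq_card] at h1
  refine h1.trans (le_of_eq ?_)
  simp only [B]
  rw [Fintype.card_sigma]
  simp only [Fintype.card_coe]
  exact Finset.sum_coe_sort (PTS S) (fun σ => (labs l σ).card)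

end Coam


namespace Coam
variable {n : ℕ}

/-- homogenization -/
def hat (α : Fin n → ℤ) : Fin (n + 1) → ℝ := Fin.cons 1 (fun j => (α j : ℝ))

/-- homogeneous span -/
def hsp (S : Finset (Fin n → ℤ)) : Submodule ℝ (Fin (n + 1) → ℝ) := Submodule.span ℝ (hat '' S)

lemma hat_mem_hsp {S : Finset (Fin n → ℤ)} {α : Fin n → ℤ} (h : α ∈ S) : hat α ∈ hsp S :=
  Submodule.subset_span ⟨α, h, rfl⟩

lemma hsp_mono {S T : Finset (Fin n → ℤ)} (h : S ⊆ T) : hsp S ≤ hsp T :=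
  Submodule.span_mono (Set.image_mono (by exact_mod_cast h))

/-- rank -/
noncomputable def rk (S : Finset (Fin n → ℤ)) : ℕ := Module.finrank ℝ (hsp S)

lemma rk_le (S : Finset (Fin n → ℤ)) : rk S ≤ n + 1 := by
  have := Submodule.finrank_le (hsp S)
  simpa [rk] using this

lemma rk_le_card (S : Finset (Fin n → ℤ)) : rk S ≤ S.card := by
  classical
  have : hsp S = Submodule.span ℝ ((S.image hat : Finset (Fin (n+1) → ℝ)) : Set (Fin (n+1) → ℝ)) := by
    simp [hsp]
  rw [rk, this]
  exact (finrank_span_finset_le_card _).trans Finset.card_image_le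

/-- functional supporting a face -/
noncomputable def gf (y : Fin n → ℝ) (c : ℝ) : (Fin (n + 1) → ℝ) →ₗ[ℝ] ℝ where
  toFun w := (∑ j, y j * w (Fin.succ j)) - c * w 0
  map_add' a b := by simp [mul_add, Finset.sum_add_distrib]; ring
  map_smul' t a := by
    simp only [Pi.smul_apply, smul_eq_mul, RingHom.id_apply, mul_sub, Finset.mul_sum]
    congr 1
    · exact Finset.sum_congr rfl fun j _ => by ring
    · ring

lemma gf_hat (y : Fin n → ℝ) (c : ℝ) (α : Fin n → ℤ) : gf y c (hat α) = pr y α - c := by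
  simp [gf, hat, pr]

lemma exists_gf {S : Finset (Fin n → ℤ)} (hS : S.Nonempty) (y : Fin n → ℝ) :
    ∃ g : (Fin (n + 1) → ℝ) →ₗ[ℝ] ℝ, (∀ α ∈ S, g (hat α) ≤ 0) ∧
      ∀ α ∈ S, (α ∈ face S y ↔ g (hat α) = 0) := by
  obtain ⟨β, hβ⟩ := face_nonempty hS y
  have hβ' := mem_face.1 hβ
  refine ⟨gf y (pr y β), fun α hα => ?_, fun α hα => ?_⟩
  · rw [gf_hat]; linarith [hβ'.2 α hα]
  · rw [gf_hat]
    constructor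
    · intro h
      have := (mem_face.1 h).2 β hβ'.1
      linarith [hβ'.2 α hα]
    · intro h
      refine mem_face.2 ⟨hα, fun γ hγ => ?_⟩
      linarith [hβ'.2 γ hγ]

lemma hsp_face_iff {S : Finset (Fin n → ℤ)} (hS : S.Nonempty) (y : Fin n → ℝ) {α : Fin n → ℤ}
    (hα : α ∈ S) : hat α ∈ hsp (face S y) ↔ α ∈ face S y := by
  refine ⟨fun h => ?_, hat_mem_hsp⟩
  obtain ⟨g, hg1, hg2⟩ := exists_gf hS y
  rw [hg2 α hα]
  have : hsp (face S y) ≤ LinearMap.ker g := by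
    rw [hsp, Submodule.span_le]
    rintro _ ⟨γ, hγ, rfl⟩
    exact (hg2 γ (face_subset _ _ hγ)).1 hγ
  exact this h

lemma rk_face_lt {S : Finset (Fin n → ℤ)} (hS : S.Nonempty) (y : Fin n → ℝ) (hy : face S y ≠ S) :
    rk (face S y) < rk S := by
  refine Submodule.finrank_lt_finrank_of_lt ?_
  refine lt_of_le_of_ne (hsp_mono (face_subset _ _)) fun h => hy ?_
  refine Finset.Subset.antisymm (face_subset _ _) fun α hα => ?_
  rw [← hsp_face_iff hS y hα, h]
  exact hat_mem_hsp hα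

lemma PT.card_le_rk {S σ : Finset (Fin n → ℤ)} (h : PT S σ) : σ.card ≤ rk S := by
  induction h with
  | single S h =>
    rcases S.eq_empty_or_nonempty with rfl | hS
    · simp
    · have hc : S.card = 1 := le_antisymm h (Finset.card_pos.2 hS)
      rw [hc]
      obtain ⟨α, hα⟩ := hS
      by_contra hlt
      have h0 : rk S = 0 := by omega
      have h1 : hsp S = ⊥ := Submodule.finrank_eq_zero.1 h0
      have h2 := hat_mem_hsp hα
      rw [h1, Submodule.mem_bot] at h2
      have := congrFun h2 0
      simp [hat] at this
  | cone S h y hy σ hσ ih =>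
    have := rk_face_lt (Finset.card_pos.1 (by omega)) y hy
    have := Finset.card_insert_le (v0 S) σ
    omega

open Classical in
/-- simplices of the pulling triangulation have disjoint open cones -/
lemma PT.disj {S σ : Finset (Fin n → ℤ)} (h : PT S σ) : ∀ σ', PT S σ' →
    σ.card = rk S → rk σ = rk S → σ'.card = rk S → rk σ' = rk S →
    ∀ a b : (Fin n → ℤ) → ℝ, (∀ α ∈ σ, 0 < a α) → (∀ α ∈ σ', 0 < b α) →
    ∑ α ∈ σ, a α • hat α = ∑ α ∈ σ', b α • hat α → σ = σ' := by
  induction h with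
  | single S h =>
    intro σ' hσ'
    cases hσ' with
    | single _ h' => intros; rfl
    | cone _ h' => omega
  | cone S h y hy σ hσ ih =>
    intro σ' hσ'
    cases hσ' with
    | single _ h' => omega
    | cone _ h' y' hy' τ hτ =>
      intro hc1 hr1 hc2 hr2 a b ha hb hab
      have hS : S.Nonempty := Finset.card_pos.1 (by omega)
      -- general facts
      have facts : ∀ (y : Fin n → ℝ) (σ : Finset (Fin n → ℤ)), face S y ≠ S → PT (face S y) σ →
          (insert (v0 S) σ).card = rk S → rk (insert (v0 S) σ) = rk S →
          v0 S ∉ face S y ∧ v0 S ∉ σ ∧ σ.card = rk (face S y) ∧ rk σ = rk (face S y) ∧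
          rk (face S y) + 1 = rk S := by
        intro y σ hy hσ hc hr
        have h1 := rk_face_lt hS y hy
        have h2 := hσ.card_le_rk
        have h3 := Finset.card_insert_le (v0 S) σ
        have h4 : v0 S ∉ face S y := by
          intro hmem
          have : rk (insert (v0 S) σ) ≤ rk (face S y) :=
            Submodule.finrank_mono (hsp_mono (Finset.insert_subset hmem hσ.subset))
          omega
        refine ⟨h4, fun h => h4 (hσ.subset h), by omega, ?_, by omega⟩
        have h5 : rk σ ≤ rk (face S y) := Submodule.finrank_mono (hsp_mono hσ.subset)
        have h6 : rk (insert (v0 S) σ) ≤ rk σ + 1 := by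
          have e : hsp (insert (v0 S) σ) = Submodule.span ℝ {hat (v0 S)} ⊔ hsp σ := by
            simp only [hsp, Finset.coe_insert, Set.image_insert_eq, Submodule.span_insert]
          rw [rk, e]
          refine (Submodule.finrank_add_le_finrank_add_finrank _ _).trans ?_
          have := finrank_span_le_card (R := ℝ) ({hat (v0 S)} : Set (Fin (n+1) → ℝ))
          simp only [Set.toFinset_singleton, Finset.card_singleton] at this
          simp only [rk]; omega
        omega
      obtain ⟨f1, f2, f3, f4, f5⟩ := facts y σ hy hσ hc1 hr1
      obtain ⟨g1, g2, g3, g4, g5⟩ := facts y' τ hy' hτ hc2 hr2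
      rw [Finset.sum_insert f2, Finset.sum_insert g2] at hab
      -- key claim
      have key : ∀ (y' : Fin n → ℝ) (σ τ : Finset (Fin n → ℤ)) (a b : (Fin n → ℤ) → ℝ), σ ⊆ S → τ ⊆ face S y' →
          v0 S ∉ face S y' → (∀ α ∈ σ, 0 < a α) →
          a (v0 S) • hat (v0 S) + ∑ α ∈ σ, a α • hat α
            = b (v0 S) • hat (v0 S) + ∑ α ∈ τ, b α • hat α → b (v0 S) ≤ a (v0 S) →
          a (v0 S) = b (v0 S) ∧ σ ⊆ face S y' := by
        intro y' σ τ a b hσS hτ' hv ha hab hle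
        obtain ⟨g, hg1, hg2⟩ := exists_gf hS y'
        have h1 := congrArg g hab
        simp only [map_add, map_sum, map_smul, smul_eq_mul] at h1
        have h2 : ∑ α ∈ τ, b α * g (hat α) = 0 := Finset.sum_eq_zero fun α hα => by
          rw [(hg2 α (face_subset _ _ (hτ' hα))).1 (hτ' hα), mul_zero]
        have h3 : ∀ α ∈ σ, a α * g (hat α) ≤ 0 := fun α hα =>
          mul_nonpos_of_nonneg_of_nonpos (ha α hα).le (hg1 α (hσS hα))
        have h4 := Finset.sum_nonpos h3
        have h5 : g (hat (v0 S)) < 0 := lt_of_le_of_ne (hg1 _ (v0_mem hS))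
          fun h => hv ((hg2 _ (v0_mem hS)).2 h)
        have h6 : a (v0 S) = b (v0 S) := by
          by_contra hne
          have : b (v0 S) < a (v0 S) := lt_of_le_of_ne hle (Ne.symm hne)
          nlinarith
        refine ⟨h6, fun α hα => ?_⟩
        have h7 : ∑ α ∈ σ, a α * g (hat α) = 0 := by rw [h6, h2] at h1; linarith
        have h8 := (Finset.sum_eq_zero_iff_of_nonpos h3).1 h7 α hα
        rw [hg2 α (hσS hα)]
        rcases mul_eq_zero.1 h8 with h | h
        · exact absurd h (ha α hα).ne'
        · exact h
      have face_eq : ∀ (y y' : Fin n → ℝ) (σ : Finset (Fin n → ℤ)), rk σ = rk (face S y) →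
          rk (face S y) + 1 = rk S → rk (face S y') + 1 = rk S → σ ⊆ face S y → σ ⊆ face S y' →
          face S y = face S y' := by
        intro y y' σ h1 h2 h3 h4 h5
        have e1 : hsp σ = hsp (face S y) := Submodule.eq_of_le_of_finrank_eq (hsp_mono h4) h1
        have e2 : hsp σ = hsp (face S y') := Submodule.eq_of_le_of_finrank_eq (hsp_mono h5) (by
          simp only [rk] at *; omega)
        ext α
        constructor
        · intro hα
          have := face_subset _ _ hα
          rw [← hsp_face_iff hS y' this, ← e2, e1]; exact hat_mem_hsp hα
        · intro hα
          have := face_subset _ _ hα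
          rw [← hsp_face_iff hS y this, ← e1, e2]; exact hat_mem_hsp hα
      have ha' : ∀ α ∈ σ, 0 < a α := fun α hα => ha α (Finset.mem_insert_of_mem hα)
      have hb' : ∀ α ∈ τ, 0 < b α := fun α hα => hb α (Finset.mem_insert_of_mem hα)
      have main : a (v0 S) = b (v0 S) ∧ face S y = face S y' := by
        rcases le_total (b (v0 S)) (a (v0 S)) with hle | hle
        · obtain ⟨e, hsub⟩ := key y' σ τ a b (hσ.subset.trans (face_subset _ _)) hτ.subset g1 ha' hab hle
          exact ⟨e, face_eq y y' σ f4 f5 g5 hσ.subset hsub⟩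
        · obtain ⟨e, hsub⟩ := key y τ σ b a (hτ.subset.trans (face_subset _ _)) hσ.subset f1 hb' hab.symm hle
          exact ⟨e.symm, (face_eq y' y τ g4 g5 f5 hτ.subset hsub).symm⟩
      obtain ⟨e, he⟩ := main
      rw [e] at hab
      have hab' := add_left_cancel hab
      rw [← he] at hτ g3 g4
      rw [ih τ hτ f3 f4 g3 g4 a b ha' hb' hab']

end Coam


namespace Coam
variable {n : ℕ}

open Classical in
lemma countA {d N : ℕ} (M : Matrix (Fin d) (Fin d) ℤ) (hM : M.det ≠ 0) (τ : Fin N → Fin d → ℤ) :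
    ∃ C : ℕ, ∀ k : ℕ, (Finset.univ.image (fun p : Fin N × (Fin d → Fin k) =>
      τ p.1 + M.mulVec (fun j => ((p.2 j : ℕ) : ℤ)))).card ≤ M.det.natAbs * (k + C) ^ d := by
  have hinj : Function.Injective M.mulVecLin := by
    rw [← LinearMap.ker_eq_bot, LinearMap.ker_eq_bot']
    intro m hm
    by_contra hne
    exact hM (Matrix.exists_mulVec_eq_zero_iff.1 ⟨m, hne, hm⟩)
  let L : Submodule ℤ (Fin d → ℤ) := LinearMap.range M.mulVecLin
  let e : (Fin d → ℤ) ≃ₗ[ℤ] L := LinearEquiv.ofInjective _ hinj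
  have hcard : M.det.natAbs = Nat.card ((Fin d → ℤ) ⧸ L) := by
    rw [← Submodule.natAbs_det_equiv L e]
    congr 1
    have : (L.subtype ∘ₗ AddMonoidHom.toIntLinearMap (e : (Fin d → ℤ) →+ L)) = M.mulVecLin := by
      ext; rfl
    rw [this, ← LinearMap.det_toLin']
    rfl
  have hfin : Finite ((Fin d → ℤ) ⧸ L) := Nat.finite_of_card_ne_zero (by
    rw [← hcard]; simpa using hM)
  have : Fintype ((Fin d → ℤ) ⧸ L) := Fintype.ofFinite _
  rw [Nat.card_eq_fintype_card] at hcard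
  have hw : ∀ i, ∃ w : Fin d → ℤ, τ i = Quotient.out (Submodule.Quotient.mk (p := L) (τ i)) + M.mulVec w := by
    intro i
    have h1 : Submodule.Quotient.mk (p := L) (Quotient.out (Submodule.Quotient.mk (p := L) (τ i))) =
        Submodule.Quotient.mk (p := L) (τ i) := Quotient.out_eq _
    rw [eq_comm, Submodule.Quotient.eq] at h1
    obtain ⟨w, hw⟩ := h1
    exact ⟨w, by rw [← Matrix.mulVecLin_apply, hw]; abel⟩
  choose w hw using hw
  let M0 : ℕ := ∑ i, ∑ j, (w i j).natAbs
  have hM0 : ∀ i j, (w i j).natAbs ≤ M0 := fun i j =>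
    (Finset.single_le_sum (f := fun j => (w i j).natAbs) (fun _ _ => Nat.zero_le _) (Finset.mem_univ j)).trans
      (Finset.single_le_sum (f := fun i => ∑ j, (w i j).natAbs) (fun _ _ => Nat.zero_le _) (Finset.mem_univ i))
  refine ⟨2 * M0, fun k => ?_⟩
  have hsub : (Finset.univ.image (fun p : Fin N × (Fin d → Fin k) =>
      τ p.1 + M.mulVec (fun j => ((p.2 j : ℕ) : ℤ)))) ⊆
      Finset.univ.image (fun q : ((Fin d → ℤ) ⧸ L) × (Fin d → Fin (k + 2 * M0)) =>
        Quotient.out q.1 + M.mulVec (fun j => ((q.2 j : ℕ) : ℤ) - M0)) := by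
    intro x hx
    obtain ⟨⟨i, m⟩, _, rfl⟩ := Finset.mem_image.1 hx
    refine Finset.mem_image.2 ⟨(Submodule.Quotient.mk (τ i), fun j => ⟨(w i j + (m j : ℕ) + M0).toNat, ?_⟩),
      Finset.mem_univ _, ?_⟩
    · have := hM0 i j
      have := (m j).2
      omega
    · simp only
      conv_rhs => rw [hw i]
      rw [add_assoc, ← Matrix.mulVec_add]
      congr 2
      ext j
      have := hM0 i j
      simp only [Pi.add_apply]
      omega
  refine (Finset.card_le_card hsub).trans (Finset.card_image_le.trans ?_)
  rw [Finset.card_univ, Fintype.card_prod, hcard]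
  simp

open Classical in
lemma countB {N : ℕ} {ι : Type} [Fintype ι] (M : Matrix ι (Fin (n + 1)) ℤ) (κ : Fin (n + 1) → ℤ)
    (hκ : κ ≠ 0) (hM : M.mulVec κ = 0) (τ : Fin N → ι → ℤ) :
    ∃ C : ℕ, ∀ k : ℕ, 1 ≤ k → (Finset.univ.image (fun p : Fin N × (Fin (n + 1) → Fin k) =>
      τ p.1 + M.mulVec (fun j => ((p.2 j : ℕ) : ℤ)))).card ≤ C * k ^ n := by
  obtain ⟨j0, hj0⟩ := Function.ne_iff.1 hκ
  simp only [Pi.zero_apply] at hj0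
  let K : ℕ := ∑ j, (κ j).natAbs
  have hK : ∀ j, (κ j).natAbs ≤ K := fun j =>
    Finset.single_le_sum (f := fun j => (κ j).natAbs) (fun _ _ => Nat.zero_le _) (Finset.mem_univ j)
  refine ⟨N * ((K + 1) * (2 * (1 + K) + 1) ^ n), fun k hk => ?_⟩
  let Bx : Fin (n + 1) → Finset ℤ := fun j => if j = j0 then Finset.Icc 0 (K : ℤ) else
    Finset.Icc (-(k * (1 + K) : ℤ)) (k * (1 + K))
  have hsub : (Finset.univ.image (fun p : Fin N × (Fin (n + 1) → Fin k) =>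
      τ p.1 + M.mulVec (fun j => ((p.2 j : ℕ) : ℤ)))) ⊆
      ((Finset.univ : Finset (Fin N)) ×ˢ Fintype.piFinset Bx).image (fun p => τ p.1 + M.mulVec p.2) := by
    intro x hx
    obtain ⟨⟨i, m⟩, _, rfl⟩ := Finset.mem_image.1 hx
    set q : ℤ := ((m j0 : ℕ) : ℤ) / κ j0 with hq
    refine Finset.mem_image.2 ⟨(i, fun j => ((m j : ℕ) : ℤ) - q * κ j), ?_, ?_⟩
    · simp only [Finset.mem_product, Finset.mem_univ, true_and, Fintype.mem_piFinset, Bx]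
      intro j
      split_ifs with h
      · subst h
        have h1 : ((m j : ℕ) : ℤ) - q * κ j = ((m j : ℕ) : ℤ) % κ j := by
          rw [Int.emod_def, mul_comm]
        rw [h1, Finset.mem_Icc]
        have h2 := Int.emod_nonneg ((m j : ℕ) : ℤ) hj0
        have h3 := Int.emod_lt_abs ((m j : ℕ) : ℤ) hj0
        have h4 := hK j
        refine ⟨h2, ?_⟩
        rw [Int.abs_eq_natAbs] at h3
        omega
      · have h1 : |q| ≤ k := by
          have h5 : |q| ≤ |((m j0 : ℕ) : ℤ)| := by
            rw [Int.abs_eq_natAbs, Int.abs_eq_natAbs]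
            exact_mod_cast Int.natAbs_ediv_le_natAbs _ _
          have := (m j0).2
          rw [abs_of_nonneg (Int.natCast_nonneg (m j0 : ℕ))] at h5
          refine h5.trans ?_
          exact_mod_cast this.le
        have h2 : |q * κ j| ≤ k * K := by
          rw [abs_mul]
          have h6 : |κ j| ≤ K := by rw [Int.abs_eq_natAbs]; exact_mod_cast hK j
          exact mul_le_mul h1 h6 (abs_nonneg _) (by positivity)
        have h3 := (m j).2
        rw [abs_le] at h2
        rw [Finset.mem_Icc]
        have h7 : (k : ℤ) * (1 + K) = k + k * K := by ring
        rw [h7]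
        constructor <;> omega
    · simp only
      congr 1
      have : (fun j => ((m j : ℕ) : ℤ) - q * κ j) = (fun j => ((m j : ℕ) : ℤ)) - q • κ := by
        ext j; simp
      rw [this, Matrix.mulVec_sub, Matrix.mulVec_smul, hM]
      simp
  refine (Finset.card_le_card hsub).trans (Finset.card_image_le.trans ?_)
  rw [Finset.card_product, Fintype.card_piFinset, Finset.card_univ, Fintype.card_fin]
  rw [mul_assoc]
  refine Nat.mul_le_mul_left _ ?_
  have h1 : ∀ j, (Bx j).card = if j = j0 then K + 1 else 2 * (k * (1 + K)) + 1 := by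
    intro j
    simp only [Bx]
    split_ifs
    · simp
    · rw [Int.card_Icc]
      have : (k : ℤ) * (1 + K) = ((k * (1 + K) : ℕ) : ℤ) := by push_cast; ring
      rw [this]
      omega
  simp only [h1]
  rw [Finset.prod_ite]
  have h2 : (Finset.univ.filter (fun j : Fin (n+1) => j = j0)).card = 1 := by
    simp [Finset.filter_eq']
  have h3 : (Finset.univ.filter (fun j : Fin (n+1) => ¬ j = j0)).card = n := by
    rw [Finset.filter_not, Finset.card_sdiff_of_subset (by simp), h2]; simp
  rw [Finset.prod_const, Finset.prod_const, h2, h3, pow_one, mul_assoc, ← mul_pow]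
  refine Nat.mul_le_mul_left _ (Nat.pow_le_pow_left ?_ n)
  nlinarith

/-- integer homogenization -/
def hz (α : Fin n → ℤ) : Fin (n + 1) → ℤ := Fin.cons 1 α

/-- matrix of a simplex -/
def mat {σ : Finset (Fin n → ℤ)} (e : Fin (n + 1) ≃ σ) : Matrix (Fin (n + 1)) (Fin (n + 1)) ℤ :=
  Matrix.of fun i => hz (e i : Fin n → ℤ)

open Classical in
/-- normalized volume of simplices -/
noncomputable def Dn (σ : Finset (Fin n → ℤ)) : ℕ :=
  if h : ∃ e : Fin (n + 1) ≃ σ, (mat e).det ≠ 0 then (mat h.choose).det.natAbs else 0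

open Classical in
lemma Dn_spec (σ : Finset (Fin n → ℤ)) (hσ : σ.card ≤ n + 1) :
    (∃ e : Fin (n + 1) ≃ σ, (mat e).det ≠ 0 ∧ Dn σ = (mat e).det.natAbs) ∨
    (Dn σ = 0 ∧ ∃ κ : Fin (n + 1) → ℤ, κ ≠ 0 ∧
      (Matrix.of fun α : σ => hz (α : Fin n → ℤ)).mulVec κ = 0) := by
  by_cases h : ∃ e : Fin (n + 1) ≃ σ, (mat e).det ≠ 0
  · exact Or.inl ⟨h.choose, h.choose_spec, by rw [Dn, dif_pos h]⟩
  · refine Or.inr ⟨by rw [Dn, dif_neg h], ?_⟩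
    rcases hσ.lt_or_eq with hlt | heq
    · by_contra hcon
      push Not at hcon
      have hinj : Function.Injective (Matrix.of fun α : σ => hz (α : Fin n → ℤ)).mulVecLin := by
        rw [← LinearMap.ker_eq_bot, LinearMap.ker_eq_bot']
        intro m hm
        by_contra hne
        exact hcon m hne hm
      have := LinearMap.finrank_le_finrank_of_injective hinj
      simp at this
      omega
    · let e : Fin (n + 1) ≃ σ := (σ.equivFinOfCardEq heq).symm
      push Not at h
      obtain ⟨κ, h1, h2⟩ := Matrix.exists_mulVec_eq_zero_iff.2 (h e)
      refine ⟨κ, h1, ?_⟩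
      ext α
      have := congrFun h2 (e.symm α)
      simpa [mat, Matrix.mulVec] using this

open Classical in
lemma count_final (S : Finset (Fin n → ℤ)) (hS : S.Nonempty) (hV : Vert S) (N : ℕ)
    (τ : Fin N → (Fin n → ℤ) → ℤ)
    (hinj : ∀ i j (w : Fin (n + 1) → ℤ), (∀ α ∈ S, τ i α - τ j α + ∑ x, hz α x * w x = 0) → i = j ∧ w = 0)
    (hpair : ∀ i j (w : Fin (n + 1) → ℤ), (i ≠ j ∨ w ≠ 0) →
      ∃ v, Mon S (fun α => τ i α - τ j α + ∑ x, hz α x * w x) v) :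
    N ≤ ∑ σ ∈ PTS S, Dn σ := by
  -- bound for each simplex
  let l : (k : ℕ) → (Fin N × (Fin (n + 1) → Fin k)) → (Fin n → ℤ) → ℤ :=
    fun k p α => τ p.1 α + ∑ x, hz α x * ((p.2 x : ℕ) : ℤ)
  have hb : ∀ σ, ∃ C : ℕ, σ ∈ PTS S → ∀ k, 1 ≤ k → (labs (l k) σ).card ≤ Dn σ * (k + C) ^ (n + 1) + C * k ^ n := by
    intro σ
    by_cases hσ : σ ∈ PTS S
    swap
    · exact ⟨0, fun h => absurd h hσ⟩
    have hc := ((mem_PTS.1 hσ).card_le_rk).trans (rk_le S)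
    rcases Dn_spec σ hc with ⟨e, he, hD⟩ | ⟨hD, κ, hκ, hM⟩
    · obtain ⟨C, hC⟩ := countA (mat e) he (fun i j => τ i (e j))
      refine ⟨C, fun _ k hk => ?_⟩
      rw [hD]
      refine le_trans (le_trans ?_ (hC k)) (Nat.le_add_right _ _)
      refine Finset.card_le_card_of_injOn (fun f => fun j => f (e j)) ?_ ?_
      · intro f hf
        obtain ⟨p, _, rfl⟩ := Finset.mem_image.1 hf
        refine Finset.mem_coe.2 (Finset.mem_image.2 ⟨p, Finset.mem_univ _, ?_⟩)
        ext j
        simp [l, mat, Matrix.mulVec, dotProduct]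
      · intro f _ g _ hfg
        ext α
        have := congrFun hfg (e.symm α)
        simpa using this
    · obtain ⟨C, hC⟩ := countB _ κ hκ hM (fun i (α : σ) => τ i α)
      refine ⟨C, fun _ k hk => ?_⟩
      rw [hD, zero_mul, zero_add]
      refine le_trans (le_of_eq ?_) (hC k hk)
      congr 1
  choose C hC using hb
  let C0 := ∑ σ ∈ PTS S, C σ
  have hC0 : ∀ σ ∈ PTS S, C σ ≤ C0 := fun σ hσ =>
    Finset.single_le_sum (f := C) (fun _ _ => Nat.zero_le _) hσ
  set D := ∑ σ ∈ PTS S, Dn σ with hD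
  have main : ∀ k : ℕ, 1 ≤ k → N * k ^ (n + 1) ≤ D * (k + C0) ^ (n + 1) + C0 * k ^ n := by
    intro k hk
    have h1 := card_le S hS hV (l k) ?_ ?_
    · rw [Fintype.card_prod, Fintype.card_fun, Fintype.card_fin, Fintype.card_fin, Fintype.card_fin] at h1
      refine h1.trans ?_
      calc ∑ σ ∈ PTS S, (labs (l k) σ).card
          ≤ ∑ σ ∈ PTS S, (Dn σ * (k + C0) ^ (n + 1) + C σ * k ^ n) := by
            refine Finset.sum_le_sum fun σ hσ => (hC σ hσ k hk).trans ?_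
            gcongr
            exact hC0 σ hσ
        _ = D * (k + C0) ^ (n + 1) + C0 * k ^ n := by
            rw [Finset.sum_add_distrib, ← Finset.sum_mul, ← Finset.sum_mul]
    · rintro ⟨i, m⟩ ⟨j, m'⟩ h
      obtain ⟨h1, h2⟩ := hinj i j (fun x => ((m x : ℕ) : ℤ) - ((m' x : ℕ) : ℤ)) (fun α hα => by
        have := h α hα
        simp only [l] at this
        simp only [mul_sub, Finset.sum_sub_distrib]
        linarith)
      subst h1
      congr 1
      ext x
      have := congrFun h2 x
      simp only [Pi.zero_apply] at this
      omega
    · rintro ⟨i, m⟩ ⟨j, m'⟩ h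
      obtain ⟨v, hv⟩ := hpair i j (fun x => ((m x : ℕ) : ℤ) - ((m' x : ℕ) : ℤ)) (by
        by_contra hcon
        push Not at hcon
        apply h
        rw [hcon.1]
        congr 1
        ext x
        have := congrFun hcon.2 x
        simp only [Pi.zero_apply] at this
        omega)
      refine ⟨v, ?_⟩
      convert hv using 2 with α
      simp only [l, mul_sub, Finset.sum_sub_distrib]
      ring
  have hlim : Filter.Tendsto (fun k : ℕ => (D : ℝ) * (1 + C0 / (k : ℝ)) ^ (n + 1) + C0 / (k : ℝ))
      Filter.atTop (nhds ((D : ℝ) * (1 + 0) ^ (n + 1) + 0)) := by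
    have h0 : Filter.Tendsto (fun k : ℕ => (C0 : ℝ) / (k : ℝ)) Filter.atTop (nhds 0) :=
      tendsto_const_div_atTop_nhds_zero_nat _
    exact ((((tendsto_const_nhds (x := (1:ℝ))).add h0).pow _).const_mul _).add h0
  have : (N : ℝ) ≤ (D : ℝ) * (1 + 0) ^ (n + 1) + 0 := by
    refine ge_of_tendsto hlim ?_
    filter_upwards [Filter.eventually_ge_atTop 1] with k hk
    have hk' : (0 : ℝ) < k := by exact_mod_cast hk
    have h := main k hk
    have h' : (N : ℝ) * k ^ (n + 1) ≤ D * (k + C0) ^ (n + 1) + C0 * k ^ n := by exact_mod_cast h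
    have e1 : (1 + C0 / (k : ℝ)) = (k + C0) / k := by field_simp
    rw [e1, div_pow]
    have e2 : (D : ℝ) * ((k + C0) ^ (n + 1) / (k:ℝ) ^ (n + 1)) + C0 / k =
      (D * (k + C0) ^ (n + 1) + C0 * k ^ n) / k ^ (n + 1) := by
      field_simp
      ring
    rw [e2, le_div_iff₀ (by positivity)]
    exact h'
  simp at this
  exact_mod_cast this

end Coam

namespace Coam
variable {n : ℕ}

/-- open standard simplex -/
def std (n : ℕ) : Set (Fin n → ℝ) := {l | (∀ i, 0 < l i) ∧ ∑ i, l i < 1}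

lemma vol_std (n : ℕ) : (1 : ℝ≥0∞) ≤ (n.factorial : ℝ≥0∞) * MeasureTheory.volume (std n) := by
  classical
  have hb := MeasureTheory.volume_sum_rpow_lt_one (Fin n) (p := 1) le_rfl
  have hG : Real.Gamma (1 / 1 + 1) = 1 := by norm_num
  have hG2 : Real.Gamma ((Fintype.card (Fin n) : ℝ) / 1 + 1) = n.factorial := by
    simp [Real.Gamma_nat_eq_factorial]
  rw [hG, hG2] at hb
  let sg : (Fin n → Bool) → (Fin n → ℝ) := fun b i => if b i then 1 else -1
  let F : (Fin n → Bool) → ((Fin n → ℝ) →ₗ[ℝ] (Fin n → ℝ)) := fun b => Matrix.toLin' (Matrix.diagonal (sg b))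
  have hF : ∀ b x i, F b x i = sg b i * x i := by
    intro b x i
    simp [F, Matrix.mulVec_diagonal]
  have hvol : ∀ b, MeasureTheory.volume (F b '' std n) = MeasureTheory.volume (std n) := by
    intro b
    rw [MeasureTheory.Measure.addHaar_image_linearMap]
    have : |LinearMap.det (F b)| = 1 := by
      simp only [F, LinearMap.det_toLin', Matrix.det_diagonal, Finset.abs_prod]
      refine Finset.prod_eq_one fun i _ => ?_
      simp only [sg]; split_ifs <;> simp
    rw [this]; simp
  have hsub : {x : Fin n → ℝ | ∑ i, |x i| ^ (1:ℝ) < 1} ⊆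
      (⋃ b, F b '' std n) ∪ ⋃ i, {x : Fin n → ℝ | x i = 0} := by
    intro x hx
    by_cases h0 : ∃ i, x i = 0
    · exact Or.inr (Set.mem_iUnion.2 h0)
    · push Not at h0
      refine Or.inl (Set.mem_iUnion.2 ⟨fun i => decide (0 < x i), fun i => |x i|, ⟨fun i => abs_pos.2 (h0 i), by simpa using hx⟩, ?_⟩)
      ext i
      rw [hF]
      simp only [sg]
      by_cases h : 0 < x i
      · simp [h, abs_of_pos h]
      · simp [h, abs_of_nonpos (not_lt.1 h)]
  have hz : MeasureTheory.volume (⋃ i, {x : Fin n → ℝ | x i = 0}) = 0 := by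
    rw [MeasureTheory.measure_iUnion_null_iff]
    intro i
    exact MeasureTheory.Measure.pi_hyperplane _ i 0
  have h1 : ENNReal.ofReal ((2 * 1) ^ Fintype.card (Fin n) / n.factorial) ≤ 2 ^ n * MeasureTheory.volume (std n) := by
    rw [← hb]
    refine (MeasureTheory.measure_mono hsub).trans ((MeasureTheory.measure_union_le _ _).trans ?_)
    rw [hz, add_zero]
    refine (MeasureTheory.measure_iUnion_fintype_le _ _).trans ?_
    simp [hvol]
  have hfp : (0:ℝ) < n.factorial := by exact_mod_cast n.factorial_pos
  have h2 : (2 : ℝ≥0∞) ^ n ≤ 2 ^ n * ((n.factorial : ℝ≥0∞) * MeasureTheory.volume (std n)) := by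
    calc (2 : ℝ≥0∞) ^ n = n.factorial * ENNReal.ofReal ((2 * 1) ^ Fintype.card (Fin n) / n.factorial) := by
          rw [← ENNReal.ofReal_natCast, ← ENNReal.ofReal_mul hfp.le, mul_div_cancel₀ _ hfp.ne']
          simp [ENNReal.ofReal_pow]
      _ ≤ n.factorial * (2 ^ n * MeasureTheory.volume (std n)) := by gcongr
      _ = _ := by ring
  have h3 : (2 : ℝ≥0∞) ^ n * 1 ≤ 2 ^ n * ((n.factorial : ℝ≥0∞) * MeasureTheory.volume (std n)) := by simpa using h2
  exact (ENNReal.mul_le_mul_iff_right (by simp) (by simp)).1 h3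

lemma det_diff (M : Matrix (Fin (n+1)) (Fin (n+1)) ℝ) (h1 : ∀ i, M i 0 = 1) :
    (Matrix.of fun i j : Fin n => M i.succ j.succ - M 0 j.succ).det = M.det := by
  let B : Matrix (Fin (n+1)) (Fin (n+1)) ℝ := Matrix.of fun i j => if i = 0 then M 0 j else M i j - M 0 j
  have hd : M.det = B.det := by
    refine Matrix.det_eq_of_forall_row_eq_smul_add_const (fun i => if i = 0 then 0 else 1) 0 (by simp) ?_
    intro i j
    by_cases h : i = 0 <;> simp [B, h]
  rw [hd, Matrix.det_succ_column_zero, Finset.sum_eq_single 0]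
  · simp only [B, Matrix.of_apply, if_true, h1]
    simp
    congr 1
  · intro i _ hi
    simp [B, hi, h1]
  · simp

/-- open simplex of an ordered vertex set -/
noncomputable def osimp (p : Fin (n+1) → Fin n → ℝ) : Set (Fin n → ℝ) :=
  (fun l : Fin n → ℝ => p 0 + ∑ i, l i • (p i.succ - p 0)) '' std n

lemma vol_osimp (p : Fin (n+1) → Fin n → ℝ) : MeasureTheory.volume (osimp p) =
    ENNReal.ofReal |(Matrix.of fun i j : Fin n => p i.succ j - p 0 j).det| * MeasureTheory.volume (std n) := by
  have : osimp p = (fun x => p 0 + x) '' (Matrix.toLin' (Matrix.of fun i j : Fin n => p i.succ j - p 0 j).transpose '' std n) := by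
    rw [Set.image_image, osimp]
    refine Set.image_congr fun l _ => ?_
    ext j
    simp [Matrix.mulVec, dotProduct, mul_comm]
  rw [this, Set.image_add_left, MeasureTheory.measure_preimage_add]
  rw [MeasureTheory.Measure.addHaar_image_linearMap, LinearMap.det_toLin', Matrix.det_transpose]

lemma simp_exists {S σ : Finset (Fin n → ℤ)} (h : PT S σ) : ∃ O : Set (Fin n → ℝ),
    ((Dn σ : ℕ) : ℝ≥0∞) ≤ n.factorial * MeasureTheory.volume O ∧ IsOpen O ∧
    O ⊆ convexHull ℝ ((fun (α : Fin n → ℤ) (j : Fin n) => (α j : ℝ)) '' S) ∧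
    (O = ∅ ∨ (σ.card = n + 1 ∧ rk σ = n + 1 ∧ ∀ x ∈ O, ∃ a : (Fin n → ℤ) → ℝ, (∀ α ∈ σ, 0 < a α) ∧
      ∑ α ∈ σ, a α • hat α = Fin.cons 1 x)) := by
  classical
  rcases Dn_spec σ (h.card_le_rk.trans (rk_le S)) with ⟨e, he, hD⟩ | ⟨hD, -⟩
  swap
  · exact ⟨∅, by simp [hD], isOpen_empty, by simp, Or.inl rfl⟩
  set M : Matrix (Fin (n+1)) (Fin (n+1)) ℝ := (mat e).map (Int.castRingHom ℝ) with hM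
  have hMd : M.det = ((mat e).det : ℝ) := by
    rw [hM, ← RingHom.mapMatrix_apply, ← RingHom.map_det]; simp
  have hMhat : ∀ i, M i = hat (e i : Fin n → ℤ) := by
    intro i
    ext j
    refine Fin.cases ?_ (fun j => ?_) j <;> simp [hM, mat, hz, hat]
  have hMne : M.det ≠ 0 := by rw [hMd]; exact_mod_cast he
  set p : Fin (n+1) → Fin n → ℝ := fun i j => ((e i : Fin n → ℤ) j : ℝ) with hp
  have hdet : (Matrix.of fun i j : Fin n => p i.succ j - p 0 j).det = M.det := by
    rw [← det_diff M (fun i => by rw [hMhat]; simp [hat])]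
    congr 1
  have hcard : σ.card = n + 1 := by
    have := Fintype.card_congr e
    simpa using this.symm
  have key : ∀ x ∈ osimp p, ∃ a : (Fin n → ℤ) → ℝ, (∀ α ∈ σ, 0 < a α) ∧
      ∑ α ∈ σ, a α • hat α = Fin.cons 1 x := by
    rintro x ⟨l, ⟨hl, hl1⟩, rfl⟩
    let b : Fin (n+1) → ℝ := Fin.cons (1 - ∑ i, l i) l
    have hb : ∀ i, 0 < b i := by
      intro i
      refine Fin.cases ?_ (fun j => ?_) i
      · simp [b, hl1]
      · simp [b, hl]
    refine ⟨fun α => if h : α ∈ σ then b (e.symm ⟨α, h⟩) else 1, fun α hα => by simp [hα, hb], ?_⟩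
    rw [← Finset.sum_coe_sort σ, ← e.sum_comp]
    have : ∀ i, (if h : (e i : Fin n → ℤ) ∈ σ then b (e.symm ⟨e i, h⟩) else 1) = b i := by
      intro i
      simp
    simp only [this]
    rw [Fin.sum_univ_succ]
    ext j
    refine Fin.cases ?_ (fun j => ?_) j
    · simp [b, hat]
    · simp [b, hat, hp, mul_sub, Finset.sum_mul, sub_mul]
      ring
  refine ⟨osimp p, ?_, ?_, ?_, Or.inr ⟨hcard, ?_, key⟩⟩
  · rw [vol_osimp, hdet, hMd, hD]
    calc (((mat e).det.natAbs : ℕ) : ℝ≥0∞) = ENNReal.ofReal |((mat e).det : ℝ)| * 1 := by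
          rw [mul_one, ← ENNReal.ofReal_natCast, Nat.cast_natAbs]; simp
      _ ≤ ENNReal.ofReal |((mat e).det : ℝ)| * (n.factorial * MeasureTheory.volume (std n)) := by
          gcongr; exact vol_std n
      _ = _ := by ring
  · have : osimp p = (fun x => p 0 + x) '' (Matrix.toLin' (Matrix.of fun i j : Fin n => p i.succ j - p 0 j).transpose '' std n) := by
      rw [Set.image_image, osimp]
      refine Set.image_congr fun l _ => ?_
      ext j
      simp [Matrix.mulVec, dotProduct, mul_comm]
    rw [this]
    refine isOpenMap_add_left _ _ ?_
    refine LinearMap.isOpenMap_of_finiteDimensional _ ?_ _ ?_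
    · have hu : IsUnit (Matrix.of fun i j : Fin n => p i.succ j - p 0 j).transpose := by
        rw [Matrix.isUnit_iff_isUnit_det, Matrix.det_transpose, hdet]
        exact hMne.isUnit
      exact Matrix.mulVec_surjective_iff_isUnit.2 hu
    · have h1 : std n = (⋂ i, {l : Fin n → ℝ | 0 < l i}) ∩ {l | ∑ i, l i < 1} := by
        ext l; simp [std]
      rw [h1]
      refine (isOpen_iInter_of_finite fun i => isOpen_lt continuous_const (continuous_apply i)).inter
        (isOpen_lt (by fun_prop) continuous_const)
  · intro x hx
    obtain ⟨a, ha, hs⟩ := key x hx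
    have h0 : ∑ α ∈ σ, a α = 1 := by
      have := congrFun hs 0
      simpa [hat] using this
    have h1 : x = ∑ α ∈ σ, a α • (fun (α : Fin n → ℤ) (j : Fin n) => (α j : ℝ)) α := by
      ext j
      have := congrFun hs j.succ
      simpa [hat] using this.symm
    rw [h1]
    refine (convex_convexHull ℝ _).sum_mem (fun α hα => (ha α hα).le) h0 fun α hα => ?_
    exact subset_convexHull ℝ _ ⟨α, h.subset hα, rfl⟩
  · refine le_antisymm (rk_le σ) ?_
    have hli : LinearIndependent ℝ M := by
      exact Matrix.linearIndependent_rows_of_det_ne_zero hMne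
    have hle : Submodule.span ℝ (Set.range M) ≤ hsp σ := by
      rw [Submodule.span_le]
      rintro _ ⟨i, rfl⟩
      rw [hMhat]
      exact hat_mem_hsp (e i).2
    have := Submodule.finrank_mono hle
    rw [finrank_span_eq_card hli] at this
    simpa [rk] using this

lemma vol_final (S : Finset (Fin n → ℤ)) : ((∑ σ ∈ PTS S, Dn σ : ℕ) : ℝ≥0∞) ≤
    n.factorial * MeasureTheory.volume (convexHull ℝ ((fun (α : Fin n → ℤ) (j : Fin n) => (α j : ℝ)) '' S)) := by
  classical
  have hex : ∀ σ, ∃ O : Set (Fin n → ℝ), σ ∈ PTS S → 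
    (((Dn σ : ℕ) : ℝ≥0∞) ≤ n.factorial * MeasureTheory.volume O ∧ IsOpen O ∧
    O ⊆ convexHull ℝ ((fun (α : Fin n → ℤ) (j : Fin n) => (α j : ℝ)) '' S) ∧
    (O = ∅ ∨ (σ.card = n + 1 ∧ rk σ = n + 1 ∧ ∀ x ∈ O, ∃ a : (Fin n → ℤ) → ℝ, (∀ α ∈ σ, 0 < a α) ∧
      ∑ α ∈ σ, a α • hat α = Fin.cons 1 x))) := by
    intro σ
    by_cases h : σ ∈ PTS S
    · obtain ⟨O, hO⟩ := simp_exists (mem_PTS.1 h)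
      exact ⟨O, fun _ => hO⟩
    · exact ⟨∅, fun h' => absurd h' h⟩
  choose O hO using hex
  push_cast
  calc ∑ σ ∈ PTS S, ((Dn σ : ℕ) : ℝ≥0∞) ≤ ∑ σ ∈ PTS S, n.factorial * MeasureTheory.volume (O σ) :=
        Finset.sum_le_sum fun σ hσ => (hO σ hσ).1
    _ = n.factorial * MeasureTheory.volume (⋃ σ ∈ PTS S, O σ) := by
        rw [← Finset.mul_sum, MeasureTheory.measure_biUnion_finset]
        · intro σ hσ σ' hσ' hne
          rw [Function.onFun, Set.disjoint_left]
          intro x hx hx'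
          apply hne
          rcases (hO σ hσ).2.2.2 with h0 | ⟨hc, hr, hk⟩
          · rw [h0] at hx; exact absurd hx (Set.notMem_empty _)
          rcases (hO σ' hσ').2.2.2 with h0 | ⟨hc', hr', hk'⟩
          · rw [h0] at hx'; exact absurd hx' (Set.notMem_empty _)
          obtain ⟨a, ha, hsa⟩ := hk x hx
          obtain ⟨b, hb, hsb⟩ := hk' x hx'
          have hP := mem_PTS.1 hσ
          have hrS : rk S = n + 1 := le_antisymm (rk_le S) (by
            rw [← hr]; exact Submodule.finrank_mono (hsp_mono hP.subset))
          exact PT.disj hP σ' (mem_PTS.1 hσ') (by omega) (by omega) (by omega) (by omega) a b ha hb (hsa.trans hsb.symm)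
        · intro σ hσ
          exact (hO σ hσ).2.1.measurableSet
    _ ≤ _ := by
        gcongr
        exact Set.iUnion₂_subset fun σ hσ => (hO σ hσ).2.2.1
end Coam

namespace Coam
open Set

lemma lift_exp {E : Type} [NormedAddCommGroup E] [NormedSpace ℝ E] (F : E → ℂ) (hF : Continuous F)
    (h0 : ∀ x, F x ≠ 0) : ∃ L : E → ℂ, Continuous L ∧ ∀ x, exp (L x) = F x := by
  rcases isCoveringMapOn_exp.existsUnique_continuousMap_lifts
    ⟨F, hF⟩ (exp_log (h0 0)) (fun x ↦ h0 x) with ⟨f, ⟨-, hf⟩, -⟩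
  exact ⟨f, f.continuous, fun x => congrFun hf x⟩

lemma log_unique {X : Type} [TopologicalSpace X] {s : Set X} (hs : IsPreconnected s) {B B' : X → ℂ}
    (hB : ContinuousOn B s) (hB' : ContinuousOn B' s) (h : ∀ x ∈ s, exp (B x) = exp (B' x)) :
    ∃ k : ℤ, ∀ x ∈ s, B x = B' x + k * (2 * Real.pi * I) := by
  rcases s.eq_empty_or_nonempty with rfl | ⟨x0, hx0⟩
  · exact ⟨0, by simp⟩
  have h1 : ∀ x ∈ s, ∃ k : ℤ, B x = B' x + k * (2 * Real.pi * I) := fun x hx => exp_eq_exp_iff_exists_int.1 (h x hx)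
  obtain ⟨k, hk⟩ := h1 x0 hx0
  refine ⟨k, fun x hx => ?_⟩
  let g : X → ℝ := fun x => ((B x - B' x).im) / (2 * Real.pi)
  have hg : ContinuousOn g s := by
    have := (hB.sub hB')
    exact (continuous_im.comp_continuousOn this).div_const _
  have hgi : ∀ x ∈ s, ∀ k : ℤ, B x = B' x + k * (2 * Real.pi * I) → g x = k := by
    intro x _ k hk
    simp only [g, hk]
    simp
  obtain ⟨k', hk'⟩ := h1 x hx
  have : k' = k := by
    by_contra hne
    have hpc : IsPreconnected (g '' s) := hs.image _ hg
    have hoc := hpc.ordConnected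
    have e1 := hgi x hx k' hk'
    have e0 := hgi x0 hx0 k hk
    have aux : ∀ p q : ℤ, p < q → (p:ℝ) ∈ g '' s → (q:ℝ) ∈ g '' s → False := by
      intro p q hpq hp hq
      have hpq' : (p:ℝ) + 1 ≤ q := by exact_mod_cast hpq
      obtain ⟨y, hy, hgy⟩ := hoc.out hp hq (show (p:ℝ) + 1/2 ∈ Icc (p:ℝ) q from ⟨by linarith, by linarith⟩)
      obtain ⟨m, hm⟩ := h1 y hy
      rw [hgi y hy m hm] at hgy
      have h2 : (p:ℝ) < m := by linarith
      have h3 : (m:ℝ) < p + 1 := by linarith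
      have h2' : p < m := by exact_mod_cast h2
      have h3' : m < p + 1 := by exact_mod_cast h3
      omega
    rcases lt_or_gt_of_ne hne with h | h
    · exact aux _ _ h ⟨x, hx, e1⟩ ⟨x0, hx0, e0⟩
    · exact aux _ _ h ⟨x0, hx0, e0⟩ ⟨x, hx, e1⟩
  rw [← this]; exact hk'

lemma log_var {a b : ℝ} (hab : a ≤ b) {B B' : ℝ → ℂ}
    (hB : ContinuousOn B (Icc a b)) (hB' : ContinuousOn B' (Icc a b)) (h : ∀ x ∈ Icc a b, exp (B x) = exp (B' x)) :
    B b - B a = B' b - B' a := by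
  obtain ⟨k, hk⟩ := log_unique isPreconnected_Icc hB hB' h
  rw [hk b (right_mem_Icc.2 hab), hk a (left_mem_Icc.2 hab)]; ring

/-- rectangle winding number -/
def RV (T : ℝ) (h : ℂ → ℂ) (N : ℕ) : Prop := ∀ B R U L : ℝ → ℂ,
  ContinuousOn B (Icc 0 T) → ContinuousOn R (Icc 0 1) → ContinuousOn U (Icc 0 T) → ContinuousOn L (Icc 0 1) →
  (∀ s ∈ Icc 0 T, exp (B s) = h s) → (∀ t ∈ Icc (0:ℝ) 1, exp (R t) = h (T + t * I)) →
  (∀ s ∈ Icc 0 T, exp (U s) = h (s + I)) → (∀ t ∈ Icc (0:ℝ) 1, exp (L t) = h (t * I)) →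
  (B T - B 0) + (R 1 - R 0) - (U T - U 0) - (L 1 - L 0) = N * (2 * Real.pi * I)

lemma RV.congr {T : ℝ} {h g : ℂ → ℂ} {N : ℕ} (H : RV T h N) (he : ∀ z, g z = h z) : RV T g N := by
  have : g = h := funext he
  rwa [this]

lemma RV.nonvan {T : ℝ} (hT : 0 < T) {h : ℂ → ℂ} (hc : Continuous h)
    (h0 : ∀ s ∈ Icc 0 T, ∀ t ∈ Icc (0:ℝ) 1, h (s + t * I) ≠ 0) : RV T h 0 := by
  intro B R U L hB hR hU hL eB eR eU eL
  obtain ⟨G, hG, eG⟩ := lift_exp (E := ℝ × ℝ) (fun p => h ((projIcc 0 T hT.le p.1 : ℝ) + (projIcc (0:ℝ) 1 zero_le_one p.2 : ℝ) * I))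
    (by
      refine hc.comp ?_
      have h1 : Continuous fun p : ℝ × ℝ => ((projIcc 0 T hT.le p.1 : ℝ)) := continuous_subtype_val.comp (continuous_projIcc.comp continuous_fst)
      have h2 : Continuous fun p : ℝ × ℝ => ((projIcc (0:ℝ) 1 zero_le_one p.2 : ℝ)) := continuous_subtype_val.comp (continuous_projIcc.comp continuous_snd)
      fun_prop) (fun p => h0 _ (Subtype.prop _) _ (Subtype.prop _))
  have eG' : ∀ s ∈ Icc 0 T, ∀ t ∈ Icc (0:ℝ) 1, exp (G (s, t)) = h (s + t * I) := by
    intro s hs t ht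
    rw [eG]; simp [projIcc_of_mem _ hs, projIcc_of_mem _ ht]
  have z1 : (0:ℝ) ∈ Icc (0:ℝ) 1 := by simp
  have o1 : (1:ℝ) ∈ Icc (0:ℝ) 1 := by simp
  have zT : (0:ℝ) ∈ Icc (0:ℝ) T := left_mem_Icc.2 hT.le
  have tT : T ∈ Icc (0:ℝ) T := right_mem_Icc.2 hT.le
  have v1 := log_var (B' := fun s => G (s, 0)) hT.le hB (by fun_prop) (fun s hs => by rw [eB s hs, eG' s hs 0 z1]; simp)
  have v2 := log_var (B' := fun t => G (T, t)) zero_le_one hR (by fun_prop) (fun s hs => by rw [eR s hs, eG' T tT s hs])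
  have v3 := log_var (B' := fun s => G (s, 1)) hT.le hU (by fun_prop) (fun s hs => by rw [eU s hs, eG' s hs 1 o1]; simp)
  have v4 := log_var (B' := fun t => G (0, t)) zero_le_one hL (by fun_prop) (fun s hs => by rw [eL s hs, eG' 0 zT s hs]; simp)
  rw [v1, v2, v3, v4]
  simp

lemma contLog (u d : ℂ) (c : ℂ) (e : ℂ) (s : Set ℝ) (h : ∀ x ∈ s, 0 < (e * (u * x + d - c)).re) (q : ℂ) :
    ContinuousOn (fun x : ℝ => log (e * (u * x + d - c)) + q) s := by
  refine ContinuousOn.add (ContinuousOn.clog (by fun_prop) fun x hx => Or.inl (h x hx)) continuousOn_const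

lemma log_negI_mul {w : ℂ} (hr : 0 < w.re) : log (-I * w) + Real.pi / 2 * I = log w := by
  have hw : w ≠ 0 := fun h => by simp [h] at hr
  have := abs_arg_lt_pi_div_two_iff.2 (Or.inl hr)
  rw [abs_lt] at this
  rw [Complex.log_mul (by simp) hw, log_neg_I]
  · ring
  · rw [arg_neg_I]; constructor <;> linarith [Real.pi_pos]

lemma log_I_mul' {w : ℂ} (hr : 0 < w.re) : log (I * w) - Real.pi / 2 * I = log w := by
  have hw : w ≠ 0 := fun h => by simp [h] at hr
  have := abs_arg_lt_pi_div_two_iff.2 (Or.inl hr)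
  rw [abs_lt] at this
  rw [Complex.log_mul I_ne_zero hw, log_I]
  · ring
  · rw [arg_I]; constructor <;> linarith [Real.pi_pos]

lemma RV.mul {T : ℝ} (hT : 0 < T) {h : ℂ → ℂ} {N : ℕ} (H : RV T h N) {c : ℂ} (c1 : 0 < c.re) (c2 : c.re < T)
    (c3 : 0 < c.im) (c4 : c.im < 1) : RV T (fun z => (z - c) * h z) (N + 1) := by
  intro B R U L hB hR hU hL eB eR eU eL
  have pB : ∀ s ∈ Icc 0 T, 0 < (I * ((1:ℂ) * (s:ℝ) + 0 - c)).re := by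
    intro s _; simp [c3]
  have pR : ∀ t ∈ Icc (0:ℝ) 1, 0 < ((1:ℂ) * (I * (t:ℝ) + T - c)).re := by
    intro s _; simp [c2]
  have pU : ∀ s ∈ Icc 0 T, 0 < (-I * ((1:ℂ) * (s:ℝ) + I - c)).re := by
    intro s _; simp [c4]
  have pL : ∀ t ∈ Icc (0:ℝ) 1, 0 < ((-1:ℂ) * (I * (t:ℝ) + 0 - c)).re := by
    intro s _; simp [c1]
  have kB := contLog 1 0 c I _ pB (- (Real.pi / 2 * I))
  have kR := contLog I T c 1 _ pR 0
  have kU := contLog 1 I c (-I) _ pU (Real.pi / 2 * I)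
  have kL := contLog I 0 c (-1) _ pL (Real.pi * I)
  have nz : ∀ w : ℂ, 0 < w.re → w ≠ 0 := fun w hw h => by simp [h] at hw
  have e1 : exp (Real.pi / 2 * I) = I := by
    rw [exp_mul_I, ← ofReal_ofNat, ← ofReal_div, ← ofReal_cos, ← ofReal_sin]; simp
  have hh := H (fun x => B x - _) (fun x => R x - _) (fun x => U x - _) (fun x => L x - _)
    (hB.sub kB) (hR.sub kR) (hU.sub kU) (hL.sub kL) ?_ ?_ ?_ ?_
  rotate_left
  · intro s hs
    have := nz _ (pB s hs)
    rw [exp_sub, eB s hs, exp_add, exp_log this, exp_neg, e1]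
    have h2 : (s:ℂ) - c ≠ 0 := fun h => this (by simp [h])
    have h3 : I * (1 * (s:ℂ) + 0 - c) * I⁻¹ = s - c := by field_simp; ring
    rw [h3]
    exact mul_div_cancel_left₀ _ h2
  · intro s hs
    have := nz _ (pR s hs)
    rw [exp_sub, eR s hs, exp_add, exp_log this, exp_zero]
    have h2 : (T:ℂ) + s * I - c ≠ 0 := fun h => this (by linear_combination h)
    have h3 : (1:ℂ) * (I * (s:ℂ) + T - c) * 1 = T + s * I - c := by ring
    rw [h3]
    exact mul_div_cancel_left₀ _ h2
  · intro s hs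
    have := nz _ (pU s hs)
    rw [exp_sub, eU s hs, exp_add, exp_log this, e1]
    have h3 : -I * (1 * (s:ℂ) + I - c) * I = s + I - c := by linear_combination (-((s:ℂ) + I - c)) * I_sq
    have h2 : (s:ℂ) + I - c ≠ 0 := fun h => this (by linear_combination (-I) * h)
    rw [h3]
    exact mul_div_cancel_left₀ _ h2
  · intro s hs
    have := nz _ (pL s hs)
    rw [exp_sub, eL s hs, exp_add, exp_log this, exp_pi_mul_I]
    have h2 : (s:ℂ) * I - c ≠ 0 := fun h => this (by linear_combination (-1) * h)
    have h3 : -1 * (I * (s:ℂ) + 0 - c) * (-1) = s * I - c := by ring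
    rw [h3]
    exact mul_div_cancel_left₀ _ h2
  have z1 : (0:ℝ) ∈ Icc (0:ℝ) 1 := by simp
  have o1 : (1:ℝ) ∈ Icc (0:ℝ) 1 := by simp
  -- corners
  have BR : log (I * (1 * (T:ℂ) + 0 - c)) + -(Real.pi / 2 * I) = log (1 * (I * ((0:ℝ):ℂ) + T - c)) := by
    have := log_I_mul' (pR 0 z1)
    rw [← this]; simp [sub_eq_add_neg]
  have TR : log (-I * (1 * (T:ℂ) + I - c)) + Real.pi / 2 * I = log (1 * (I * ((1:ℝ):ℂ) + T - c)) := by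
    have := log_negI_mul (pR 1 o1)
    rw [← this]; simp; congr 2; ring
  have TL : log (-I * (1 * ((0:ℝ):ℂ) + I - c)) + Real.pi / 2 * I = log (-1 * (I * ((1:ℝ):ℂ) + 0 - c)) + Real.pi * I := by
    have := log_I_mul' (pL 1 o1)
    rw [← this]; simp
    ring_nf
  have BL : log (I * (1 * ((0:ℝ):ℂ) + 0 - c)) + -(Real.pi / 2 * I) = log (-1 * (I * ((0:ℝ):ℂ) + 0 - c)) - Real.pi * I := by
    have := log_negI_mul (pL 0 z1)
    rw [← this]; simp
    ring_nf
  rw [BR, TR, TL, BL] at hh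
  push_cast
  linear_combination hh
end Coam

namespace Coam
open Set

lemma RV.pow {T : ℝ} (hT : 0 < T) {h : ℂ → ℂ} {N : ℕ} (H : RV T h N) {c : ℂ} (c1 : 0 < c.re) (c2 : c.re < T)
    (c3 : 0 < c.im) (c4 : c.im < 1) (m : ℕ) : RV T (fun z => (z - c) ^ m * h z) (N + m) := by
  induction m with
  | zero => simpa using H
  | succ m ih =>
    refine (RV.mul hT ih c1 c2 c3 c4).congr fun z => ?_
    rw [pow_succ]; ring

lemma exists_factor {h : ℂ → ℂ} (hd : Differentiable ℂ h) (hne : ∃ z, h z ≠ 0) (c : ℂ) :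
    ∃ (m : ℕ) (g : ℂ → ℂ), Differentiable ℂ g ∧ g c ≠ 0 ∧ ∀ z, h z = (z - c) ^ m * g z := by
  classical
  have han : AnalyticOnNhd ℂ h univ := fun z _ => hd.analyticAt z
  have hnl : ¬ ∀ᶠ z in nhds c, h z = 0 := by
    intro hev
    obtain ⟨z, hz⟩ := hne
    exact hz (han.eqOn_zero_of_preconnected_of_eventuallyEq_zero isPreconnected_univ (mem_univ c) hev (mem_univ z))
  obtain ⟨m, g, hg, hgc, hgz⟩ := (hd.analyticAt c).exists_eventuallyEq_pow_smul_nonzero_iff.2 hnl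
  refine ⟨m, fun z => if z = c then g c else h z / (z - c) ^ m, ?_, by simpa using hgc, ?_⟩
  · intro z
    by_cases hz : z = c
    · subst hz
      refine hg.differentiableAt.congr_of_eventuallyEq ?_
      filter_upwards [hgz] with w hw
      by_cases hwz : w = z
      · simp [hwz]
      · have := sub_ne_zero.2 hwz
        simp only [hwz, if_false, hw, smul_eq_mul]
        field_simp
    · have : (fun z => if z = c then g c else h z / (z - c) ^ m) =ᶠ[nhds z] fun z => h z / (z - c) ^ m := by
        filter_upwards [isOpen_ne.mem_nhds hz] with w hw
        exact if_neg hw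
      refine DifferentiableAt.congr_of_eventuallyEq ?_ this
      have := sub_ne_zero.2 hz
      exact (hd z).div (by fun_prop) (pow_ne_zero _ this)
  · intro z
    by_cases hz : z = c
    · subst hz
      have := hgz.self_of_nhds
      simpa using this
    · have := sub_ne_zero.2 hz
      simp only [hz, if_false]
      field_simp

lemma rect_aux {T : ℝ} (hT : 0 < T) (k : ℕ) : ∀ {h : ℂ → ℂ}, Differentiable ℂ h →
    (∀ z ∈ Icc 0 T ×ℂ Icc 0 1, (z.re = 0 ∨ z.re = T ∨ z.im = 0 ∨ z.im = 1) → h z ≠ 0) →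
    {z | z ∈ Icc 0 T ×ℂ Icc 0 1 ∧ h z = 0}.Finite → {z | z ∈ Icc 0 T ×ℂ Icc 0 1 ∧ h z = 0}.ncard = k →
    ∃ N, RV T h N ∧ (N = 0 → ∀ z ∈ Icc 0 T ×ℂ Icc 0 1, h z ≠ 0) := by
  induction k with
  | zero =>
    intro h hd _ hfin hc
    have he := (ncard_eq_zero hfin).1 hc
    have h0 : ∀ z ∈ Icc 0 T ×ℂ Icc 0 1, h z ≠ 0 := by
      intro z hz hz0
      have : z ∈ {z | z ∈ Icc 0 T ×ℂ Icc 0 1 ∧ h z = 0} := ⟨hz, hz0⟩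
      rw [he] at this; exact this
    refine ⟨0, RV.nonvan hT hd.continuous fun s hs t ht => h0 _ ?_, fun _ => h0⟩
    rw [mem_reProdIm]; simpa using ⟨hs, ht⟩
  | succ k ih =>
    intro h hd hb hfin hc
    obtain ⟨c, hcK, hc0⟩ : {z | z ∈ Icc 0 T ×ℂ Icc 0 1 ∧ h z = 0}.Nonempty := by
      rw [← ncard_pos hfin, hc]; omega
    have hne : ∃ z, h z ≠ 0 := ⟨0, hb 0 (by rw [mem_reProdIm]; simp [hT.le]) (by simp)⟩
    obtain ⟨m, g, hg, hgc, hgz⟩ := exists_factor hd hne c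
    have hm : m ≠ 0 := by
      rintro rfl
      rw [hgz] at hc0; simp at hc0; exact hgc hc0
    have hZ : {z | z ∈ Icc 0 T ×ℂ Icc 0 1 ∧ g z = 0} = {z | z ∈ Icc 0 T ×ℂ Icc 0 1 ∧ h z = 0} \ {c} := by
      ext z
      simp only [mem_sdiff, mem_singleton_iff, Set.mem_ofPred_eq]
      constructor
      · rintro ⟨h1, h2⟩
        exact ⟨⟨h1, by rw [hgz, h2, mul_zero]⟩, fun e => hgc (e ▸ h2)⟩
      · rintro ⟨⟨h1, h2⟩, h3⟩
        refine ⟨h1, ?_⟩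
        rw [hgz] at h2
        exact (mul_eq_zero.1 h2).resolve_left (pow_ne_zero _ (sub_ne_zero.2 h3))
    have hbg : ∀ z ∈ Icc 0 T ×ℂ Icc 0 1, (z.re = 0 ∨ z.re = T ∨ z.im = 0 ∨ z.im = 1) → g z ≠ 0 := by
      intro z hz hz' h0
      exact hb z hz hz' (by rw [hgz, h0, mul_zero])
    obtain ⟨N, hN, -⟩ := ih hg hbg (by rw [hZ]; exact hfin.sdiff) (by
      rw [hZ, ncard_sdiff_singleton_of_mem (show c ∈ {z | z ∈ Icc 0 T ×ℂ Icc 0 1 ∧ h z = 0} from ⟨hcK, hc0⟩), hc]; rfl)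
    have hcK' := mem_reProdIm.1 hcK
    have hcb : ¬ (c.re = 0 ∨ c.re = T ∨ c.im = 0 ∨ c.im = 1) := fun h' => hb c hcK h' hc0
    push Not at hcb
    refine ⟨N + m, (RV.pow hT hN (lt_of_le_of_ne hcK'.1.1 hcb.1.symm) (lt_of_le_of_ne hcK'.1.2 hcb.2.1)
      (lt_of_le_of_ne hcK'.2.1 hcb.2.2.1.symm) (lt_of_le_of_ne hcK'.2.2 hcb.2.2.2) m).congr hgz, fun h' => by omega⟩

lemma rect {T : ℝ} (hT : 0 < T) {h : ℂ → ℂ} (hd : Differentiable ℂ h)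
    (hb : ∀ z ∈ Icc 0 T ×ℂ Icc 0 1, (z.re = 0 ∨ z.re = T ∨ z.im = 0 ∨ z.im = 1) → h z ≠ 0) :
    ∃ N, RV T h N ∧ (N = 0 → ∀ z ∈ Icc 0 T ×ℂ Icc 0 1, h z ≠ 0) := by
  refine rect_aux hT _ hd hb ?_ rfl
  by_contra hinf
  obtain ⟨x, hx, hacc⟩ := Set.Infinite.exists_accPt_of_subset_isCompact hinf
    (isCompact_Icc.reProdIm isCompact_Icc : IsCompact (Icc 0 T ×ℂ Icc (0:ℝ) 1)) (fun z hz => hz.1)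
  have han : AnalyticOnNhd ℂ h univ := fun z _ => hd.analyticAt z
  have := han.eqOn_zero_of_preconnected_of_frequently_eq_zero isPreconnected_univ (mem_univ x) (by
    rw [accPt_iff_frequently_nhdsNE] at hacc
    exact hacc.mono fun z hz => hz.2)
  exact hb 0 (by rw [mem_reProdIm]; simp [hT.le]) (by simp) (this (mem_univ 0))
end Coam

namespace Coam
open Set
variable {n : ℕ}

/-- complex pairing -/
noncomputable def prc (α : Fin n → ℤ) (w : Fin n → ℂ) : ℂ := ∑ j, (α j : ℂ) * w j
/-- complex point -/
noncomputable def cw (x θ : Fin n → ℝ) : Fin n → ℂ := fun j => x j + θ j * I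
/-- exponential sum -/
noncomputable def ff (A : Finset (Fin n → ℤ)) (a : (Fin n → ℤ) → ℂ) (w : Fin n → ℂ) : ℂ :=
  ∑ α ∈ A, a α * exp (prc α w)
/-- relative error -/
noncomputable def ep (A : Finset (Fin n → ℤ)) (a : (Fin n → ℤ) → ℂ) (α : Fin n → ℤ) (w : Fin n → ℂ) : ℂ :=
  by classical exact ∑ γ ∈ A.erase α, a γ / a α * exp (prc γ w - prc α w)
/-- local log -/
noncomputable def Ph (A : Finset (Fin n → ℤ)) (a : (Fin n → ℤ) → ℂ) (α : Fin n → ℤ) (w : Fin n → ℂ) : ℂ :=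
  log (a α) + prc α w + log (1 + ep A a α w)
/-- deep region -/
def DD (A : Finset (Fin n → ℤ)) (R : ℝ) (α : Fin n → ℤ) : Set (Fin n → ℝ) :=
  {x | ∀ γ ∈ A, γ ≠ α → R ≤ pr x α - pr x γ}

lemma prc_cw (α : Fin n → ℤ) (x θ : Fin n → ℝ) : prc α (cw x θ) = pr x α + pr θ α * I := by
  simp only [prc, cw, pr, mul_add, Finset.sum_add_distrib]
  push_cast
  rw [Finset.sum_mul]
  congr 1 <;> exact Finset.sum_congr rfl fun j _ => by ring

lemma cont_prc (α : Fin n → ℤ) : Continuous (prc α) := by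
  unfold prc; fun_prop

lemma cont_cw : Continuous fun p : (Fin n → ℝ) × (Fin n → ℝ) => cw p.1 p.2 := by
  unfold cw; fun_prop

lemma cont_ff (A : Finset (Fin n → ℤ)) (a : (Fin n → ℤ) → ℂ) : Continuous (ff A a) := by
  unfold ff
  have := fun α => cont_prc (n := n) α
  fun_prop

lemma cont_ep (A : Finset (Fin n → ℤ)) (a : (Fin n → ℤ) → ℂ) (α : Fin n → ℤ) : Continuous (ep A a α) := by
  unfold ep
  have := fun α => cont_prc (n := n) α
  fun_prop

lemma convex_DD (A : Finset (Fin n → ℤ)) (R : ℝ) (α : Fin n → ℤ) : Convex ℝ (DD A R α) := by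
  intro x hx y hy s t hs ht hst γ hγ hne
  have h1 := mul_le_mul_of_nonneg_left (hx γ hγ hne) hs
  have h2 := mul_le_mul_of_nonneg_left (hy γ hγ hne) ht
  simp only [pr_add, pr_smul]
  have : R = s * R + t * R := by rw [← add_mul, hst, one_mul]
  linarith

lemma exists_R (A : Finset (Fin n → ℤ)) (a : (Fin n → ℤ) → ℂ) : ∃ R : ℝ, 0 < R ∧
    ∀ α ∈ A, ∀ x θ, x ∈ DD A R α → ‖ep A a α (cw x θ)‖ < 1 := by
  classical
  have hev : ∀ᶠ R : ℝ in Filter.atTop, ∀ α ∈ A, (∑ γ ∈ A.erase α, ‖a γ / a α‖) * Real.exp (-R) < 1 := by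
    rw [Filter.eventually_all_finset]
    intro α _
    have : Filter.Tendsto (fun R : ℝ => (∑ γ ∈ A.erase α, ‖a γ / a α‖) * Real.exp (-R)) Filter.atTop (nhds ((∑ γ ∈ A.erase α, ‖a γ / a α‖) * 0)) :=
      Real.tendsto_exp_neg_atTop_nhds_zero.const_mul _
    rw [mul_zero] at this
    exact this.eventually_lt_const one_pos
  obtain ⟨R, hR, hR0⟩ := (hev.and (Filter.eventually_gt_atTop 0)).exists
  refine ⟨R, hR0, fun α hα x θ hx => lt_of_le_of_lt ?_ (hR α hα)⟩
  rw [ep, Finset.sum_mul]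
  refine (norm_sum_le _ _).trans (Finset.sum_le_sum fun γ hγ => ?_)
  rw [norm_mul]
  gcongr
  rw [norm_exp]
  refine Real.exp_le_exp.2 ?_
  have := hx γ (Finset.mem_of_mem_erase hγ) (Finset.ne_of_mem_erase hγ)
  simp only [prc_cw]
  simp
  linarith

lemma exp_Ph {A : Finset (Fin n → ℤ)} {a : (Fin n → ℤ) → ℂ} {α : Fin n → ℤ} (hα : α ∈ A) (ha : a α ≠ 0)
    {w : Fin n → ℂ} (h : ‖ep A a α w‖ < 1) : exp (Ph A a α w) = ff A a w := by
  classical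
  have h1 : 1 + ep A a α w ≠ 0 := by
    intro h0
    have : ep A a α w = -1 := by linear_combination h0
    rw [this] at h; simp at h
  rw [Ph, exp_add, exp_add, exp_log ha, exp_log h1, mul_add, mul_one, ff, ← Finset.add_sum_erase _ _ hα, ep, Finset.mul_sum]
  congr 1
  refine Finset.sum_congr rfl fun γ _ => ?_
  rw [exp_sub]
  have := exp_ne_zero (prc α w)
  field_simp

lemma contOn_Ph {X : Type} [TopologicalSpace X] {s : Set X} {A : Finset (Fin n → ℤ)} {a : (Fin n → ℤ) → ℂ} {α : Fin n → ℤ}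
    {w : X → Fin n → ℂ} (hw : Continuous w) (h : ∀ p ∈ s, ‖ep A a α (w p)‖ < 1) : ContinuousOn (fun p => Ph A a α (w p)) s := by
  unfold Ph
  refine ContinuousOn.add (Continuous.continuousOn ?_) (ContinuousOn.clog (Continuous.continuousOn ?_) ?_)
  · exact continuous_const.add ((cont_prc α).comp hw)
  · exact continuous_const.add ((cont_ep A a α).comp hw)
  · intro p hp
    exact mem_slitPlane_of_norm_lt_one (h p hp)

lemma prc_shift (α m : Fin n → ℤ) (w : Fin n → ℂ) : prc α (w + fun j => 2 * Real.pi * I * m j) =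
    prc α w + (∑ j, α j * m j : ℤ) * (2 * Real.pi * I) := by
  simp only [prc, Pi.add_apply, mul_add, Finset.sum_add_distrib]
  push_cast
  rw [Finset.sum_mul]
  congr 1
  exact Finset.sum_congr rfl fun j _ => by ring

lemma exp_shift (α m : Fin n → ℤ) (w : Fin n → ℂ) : exp (prc α (w + fun j => 2 * Real.pi * I * m j)) = exp (prc α w) := by
  rw [prc_shift, exp_add, exp_int_mul_two_pi_mul_I, mul_one]

lemma ff_shift (A : Finset (Fin n → ℤ)) (a : (Fin n → ℤ) → ℂ) (m : Fin n → ℤ) (w : Fin n → ℂ) :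
    ff A a (w + fun j => 2 * Real.pi * I * m j) = ff A a w := by
  simp only [ff, exp_shift]

lemma Ph_shift (A : Finset (Fin n → ℤ)) (a : (Fin n → ℤ) → ℂ) (α m : Fin n → ℤ) (w : Fin n → ℂ) :
    Ph A a α (w + fun j => 2 * Real.pi * I * m j) = Ph A a α w + (∑ j, α j * m j : ℤ) * (2 * Real.pi * I) := by
  have : ep A a α (w + fun j => 2 * Real.pi * I * m j) = ep A a α w := by
    simp only [ep, exp_sub, exp_shift]
  rw [Ph, Ph, this, prc_shift]; ring

/-- labels at an angle -/
def IsLab (A : Finset (Fin n → ℤ)) (a : (Fin n → ℤ) → ℂ) (R : ℝ) (θ : Fin n → ℝ) (k : (Fin n → ℤ) → ℤ) : Prop :=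
  ∃ L : (Fin n → ℝ) → ℂ, Continuous L ∧ (∀ x, exp (L x) = ff A a (cw x θ)) ∧
    ∀ α ∈ A, ∀ x ∈ DD A R α, L x = Ph A a α (cw x θ) + k α * (2 * Real.pi * I)

section
variable {A : Finset (Fin n → ℤ)} {a : (Fin n → ℤ) → ℂ} {R : ℝ}

lemma IsLab.of_log (ha : ∀ α ∈ A, a α ≠ 0)
    (hR : ∀ α ∈ A, ∀ x θ, x ∈ DD A R α → ‖ep A a α (cw x θ)‖ < 1) {θ : Fin n → ℝ} {L : (Fin n → ℝ) → ℂ} (hL : Continuous L) (hLe : ∀ x, exp (L x) = ff A a (cw x θ)) :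
    ∃ k : (Fin n → ℤ) → ℤ, ∀ α ∈ A, ∀ x ∈ DD A R α, L x = Ph A a α (cw x θ) + k α * (2 * Real.pi * I) := by
  have : ∀ α : Fin n → ℤ, ∃ k : ℤ, α ∈ A → ∀ x ∈ DD A R α, L x = Ph A a α (cw x θ) + k * (2 * Real.pi * I) := by
    intro α
    by_cases hα : α ∈ A
    · obtain ⟨k, hk⟩ := log_unique (convex_DD A R α).isPreconnected hL.continuousOn
        (contOn_Ph (w := fun x => cw x θ) (cont_cw.comp (by fun_prop : Continuous fun x : Fin n → ℝ => (x, θ))) fun x hx => hR α hα x θ hx)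
        (fun x hx => by rw [hLe, exp_Ph hα (ha α hα) (hR α hα x θ hx)])
      exact ⟨k, fun _ => hk⟩
    · exact ⟨0, fun h => absurd h hα⟩
  choose k hk using this
  exact ⟨k, hk⟩

lemma IsLab.exists (ha : ∀ α ∈ A, a α ≠ 0)
    (hR : ∀ α ∈ A, ∀ x θ, x ∈ DD A R α → ‖ep A a α (cw x θ)‖ < 1) {θ : Fin n → ℝ} (h : ∀ x, ff A a (cw x θ) ≠ 0) : ∃ k, IsLab A a R θ k := by
  obtain ⟨L, hL, hLe⟩ := lift_exp (fun x => ff A a (cw x θ))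
    ((cont_ff A a).comp (cont_cw.comp (by fun_prop : Continuous fun x : Fin n → ℝ => (x, θ)))) h
  obtain ⟨k, hk⟩ := IsLab.of_log ha hR hL hLe
  exact ⟨k, L, hL, hLe, hk⟩

lemma IsLab.shift {θ : Fin n → ℝ} {k : (Fin n → ℤ) → ℤ} (h : IsLab A a R θ k) (m : Fin n → ℤ) :
    IsLab A a R (θ + fun j => 2 * Real.pi * m j) (fun α => k α - ∑ j, α j * m j) := by
  obtain ⟨L, hL, hLe, hk⟩ := h
  have hc : ∀ x, cw x (θ + fun j => 2 * Real.pi * m j) = cw x θ + fun j => 2 * Real.pi * I * m j := by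
    intro x; ext j; simp [cw]; ring
  refine ⟨L, hL, fun x => by rw [hLe, hc, ff_shift], fun α hα x hx => ?_⟩
  rw [hk α hα x hx, hc, Ph_shift]
  push_cast; ring

lemma IsLab.move (ha : ∀ α ∈ A, a α ≠ 0)
    (hR : ∀ α ∈ A, ∀ x θ, x ∈ DD A R α → ‖ep A a α (cw x θ)‖ < 1) {θ δ : Fin n → ℝ} {k : (Fin n → ℤ) → ℤ} (h : IsLab A a R θ k)
    (hg : ∀ t ∈ Icc (0:ℝ) 1, ∀ x, ff A a (cw x (θ + t • δ)) ≠ 0) : IsLab A a R (θ + δ) k := by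
  obtain ⟨L, hL, hLe, hk⟩ := h
  let pj : ℝ → ℝ := fun t => (projIcc (0:ℝ) 1 zero_le_one t : ℝ)
  have hpj : Continuous pj := continuous_subtype_val.comp continuous_projIcc
  have hcw : Continuous fun p : (Fin n → ℝ) × ℝ => cw p.1 (θ + pj p.2 • δ) :=
    cont_cw.comp (by fun_prop : Continuous fun p : (Fin n → ℝ) × ℝ => (p.1, θ + pj p.2 • δ))
  obtain ⟨G, hG, hGe⟩ := lift_exp (E := (Fin n → ℝ) × ℝ) (fun p => ff A a (cw p.1 (θ + pj p.2 • δ)))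
    ((cont_ff A a).comp hcw) (fun p => hg _ (Subtype.prop _) _)
  have p0 : pj 0 = 0 := by simp [pj]
  have p1 : pj 1 = 1 := by simp [pj]
  obtain ⟨c, hc⟩ := log_unique (s := univ) isPreconnected_univ hL.continuousOn (B' := fun x => G (x, 0)) (by fun_prop)
    (fun x _ => by rw [hLe, hGe]; simp [p0])
  refine ⟨fun x => G (x, 1) + c * (2 * Real.pi * I), by fun_prop, fun x => ?_, fun α hα x hx => ?_⟩
  · rw [exp_add, exp_int_mul_two_pi_mul_I, mul_one, hGe]; simp [p1]
  · obtain ⟨k', hk'⟩ := log_unique (s := DD A R α ×ˢ univ) ((convex_DD A R α).isPreconnected.prod isPreconnected_univ)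
      hG.continuousOn (contOn_Ph hcw fun p hp => hR α hα _ _ hp.1)
      (fun p hp => by rw [hGe, exp_Ph hα (ha α hα) (hR α hα _ _ hp.1)])
    have e0 := hk' (x, 0) ⟨hx, mem_univ _⟩
    have e1 := hk' (x, 1) ⟨hx, mem_univ _⟩
    have e2 := hk α hα x hx
    have e3 := hc x (mem_univ _)
    simp only [p0, p1, zero_smul, one_smul, add_zero] at e0 e1 
    show G (x, 1) + _ = _
    rw [e1]
    have : (k' : ℂ) * (2 * Real.pi * I) + c * (2 * Real.pi * I) = k α * (2 * Real.pi * I) := by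
      linear_combination e2 - e3 - e0
    linear_combination this
end
end Coam

namespace Coam
open Set
variable {n : ℕ}
variable {A : Finset (Fin n → ℤ)} {a : (Fin n → ℤ) → ℂ} {R : ℝ}

lemma IsLab.rect (ha : ∀ α ∈ A, a α ≠ 0)
    (hR : ∀ α ∈ A, ∀ x θ, x ∈ DD A R α → ‖ep A a α (cw x θ)‖ < 1)
    {θ θ' v : Fin n → ℝ} {k k' : (Fin n → ℤ) → ℤ} (h' : IsLab A a R θ' k') (h : IsLab A a R θ k)
    (hv : θ = θ' + v) {α β : Fin n → ℤ} (hα : α ∈ A) (hβ : β ∈ A) {x : Fin n → ℝ} {T : ℝ} (hT : 0 < T)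
    (hx : x ∈ DD A R α) (hx' : x + T • v ∈ DD A R β) :
    k' α - k α ≤ k' β - k β ∧ (k' α - k α = k' β - k β → ∀ s ∈ Icc 0 T, ∀ t ∈ Icc (0:ℝ) 1,
      ff A a (cw (x + s • v) (θ' + t • v)) ≠ 0) := by
  obtain ⟨L', hL', eL', hk'⟩ := h'
  obtain ⟨L, hL, eL, hk⟩ := h
  let H : ℂ → ℂ := fun z => ff A a (fun j => cw x θ' j + z * v j)
  have hH : ∀ s t : ℝ, H (s + t * I) = ff A a (cw (x + s • v) (θ' + t • v)) := by
    intro s t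
    simp only [H]
    congr 1
    ext j
    simp [cw]; ring
  have hHd : Differentiable ℂ H := by
    simp only [H, ff, prc]
    fun_prop
  have hPα : ∀ t : ℝ, ‖ep A a α (cw x (θ' + t • v))‖ < 1 := fun t => hR α hα _ _ hx
  have hPβ : ∀ t : ℝ, ‖ep A a β (cw (x + T • v) (θ' + t • v))‖ < 1 := fun t => hR β hβ _ _ hx'
  have cα : Continuous fun t : ℝ => cw x (θ' + t • v) :=
    cont_cw.comp (by fun_prop : Continuous fun t : ℝ => (x, θ' + t • v))
  have cβ : Continuous fun t : ℝ => cw (x + T • v) (θ' + t • v) :=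
    cont_cw.comp (by fun_prop : Continuous fun t : ℝ => (x + T • v, θ' + t • v))
  have eB : ∀ s : ℝ, exp (L' (x + s • v)) = H s := by
    intro s
    have := hH s 0
    simp only [ofReal_zero, zero_mul, add_zero, zero_smul] at this
    rw [this, eL']
  have eU : ∀ s : ℝ, exp (L (x + s • v)) = H (s + I) := by
    intro s
    have := hH s 1
    simp only [ofReal_one, one_mul, one_smul] at this
    rw [this, eL, hv]
  have eRr : ∀ t : ℝ, exp (Ph A a β (cw (x + T • v) (θ' + t • v))) = H (T + t * I) := by
    intro t
    rw [hH, exp_Ph hβ (ha β hβ) (hPβ t)]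
  have eLl : ∀ t : ℝ, exp (Ph A a α (cw x (θ' + t • v))) = H (t * I) := by
    intro t
    have := hH 0 t
    simp only [ofReal_zero, zero_add, zero_smul, add_zero] at this
    rw [this, exp_Ph hα (ha α hα) (hPα t)]
  obtain ⟨N, hN, hN0⟩ := Coam.rect hT hHd (by
    intro z hz hb
    have hzz : z = (z.re : ℂ) + z.im * I := (re_add_im z).symm
    rcases hb with hb | hb | hb | hb
    · rw [hzz, hb, ofReal_zero, zero_add, ← eLl]; exact exp_ne_zero _
    · rw [hzz, hb, ← eRr]; exact exp_ne_zero _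
    · rw [hzz, hb, ofReal_zero, zero_mul, add_zero, ← eB]; exact exp_ne_zero _
    · rw [hzz, hb, ofReal_one, one_mul, ← eU]; exact exp_ne_zero _)
  have key := hN (fun s => L' (x + s • v)) (fun t => Ph A a β (cw (x + T • v) (θ' + t • v)))
    (fun s => L (x + s • v)) (fun t => Ph A a α (cw x (θ' + t • v))) (by fun_prop)
    (contOn_Ph cβ fun t _ => hPβ t) (by fun_prop) (contOn_Ph cα fun t _ => hPα t)
    (fun s _ => eB s) (fun t _ => eRr t) (fun s _ => eU s) (fun t _ => eLl t)
  simp only [zero_smul, one_smul, add_zero, ← hv] at key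
  rw [hk α hα x hx, hk β hβ _ hx', hk' α hα x hx, hk' β hβ _ hx'] at key
  have hpi : (2 * Real.pi * I : ℂ) ≠ 0 := two_pi_I_ne_zero
  have e : ((k' β - k' α - k β + k α : ℤ) : ℂ) = ((N : ℤ) : ℂ) := by
    apply mul_right_cancel₀ hpi
    push_cast
    linear_combination key
  have e' : k' β - k' α - k β + k α = N := by exact_mod_cast e
  refine ⟨by omega, fun heq s hs t ht => ?_⟩
  rw [← hH]
  refine hN0 (by omega) _ ?_
  rw [mem_reProdIm]; simpa using ⟨hs, ht⟩
end Coam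

namespace Coam
open Set
variable {n : ℕ}

lemma exists_inj (A : Finset (Fin n → ℤ)) : ∃ u, InjOnS A u := by
  classical
  let p : (Fin n → ℤ) → Polynomial ℝ := fun α => ∑ j : Fin n, Polynomial.C (α j : ℝ) * Polynomial.X ^ (j : ℕ)
  have hc : ∀ α (j : Fin n), (p α).coeff j = α j := by
    intro α j
    simp only [p, Polynomial.finset_sum_coeff, Polynomial.coeff_C_mul_X_pow]
    rw [Finset.sum_eq_single j]
    · simp
    · intro i _ hij
      rw [if_neg]
      intro h; exact hij (Fin.ext h.symm)
    · simp
  have hfin : (⋃ α ∈ A, ⋃ γ ∈ A, {t : ℝ | α ≠ γ ∧ (p α - p γ).eval t = 0}).Finite := by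
    refine A.finite_toSet.biUnion fun α _ => A.finite_toSet.biUnion fun γ _ => ?_
    by_cases h : α = γ
    · simp [h]
    · have hne : p α - p γ ≠ 0 := by
        intro h0
        apply h
        ext j
        have := congrArg (fun q => Polynomial.coeff q j) h0
        simp only [Polynomial.coeff_sub, hc, Polynomial.coeff_zero] at this
        exact_mod_cast sub_eq_zero.1 this
      refine (Polynomial.finite_setOf_isRoot hne).subset fun t ht => ht.2
  obtain ⟨t, ht⟩ := hfin.infinite_compl.nonempty
  refine ⟨fun j => t ^ (j : ℕ), fun α hα γ hγ h => ?_⟩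
  by_contra hne
  apply ht
  simp only [mem_iUnion]
  refine ⟨α, hα, γ, hγ, hne, ?_⟩
  have hp : ∀ α, (p α).eval t = pr (fun j : Fin n => t ^ (j : ℕ)) α := by
    intro α
    simp only [p, pr, Polynomial.eval_finset_sum]
    exact Finset.sum_congr rfl fun j _ => by simp [mul_comm]
  rw [Polynomial.eval_sub, hp, hp, h, sub_self]

lemma inj_large {A : Finset (Fin n → ℤ)} {u : Fin n → ℝ} (hu : InjOnS A u) (w : Fin n → ℝ) :
    ∀ᶠ K : ℝ in Filter.atTop, InjOnS A (u + K • w) := by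
  have : ∀ᶠ K : ℝ in Filter.atTop, ∀ α ∈ A, ∀ γ ∈ A, pr (u + K • w) α = pr (u + K • w) γ → α = γ := by
    rw [Filter.eventually_all_finset]; intro α hα
    rw [Filter.eventually_all_finset]; intro γ hγ
    by_cases hw : pr w α = pr w γ
    · refine Filter.Eventually.of_forall fun K h => hu α hα γ hγ ?_
      simp only [pr_add, pr_smul, hw] at h
      linarith
    · filter_upwards [Filter.eventually_gt_atTop ((pr u γ - pr u α) / (pr w α - pr w γ))] with K hK h
      exfalso
      simp only [pr_add, pr_smul] at h
      have := sub_ne_zero.2 hw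
      have : K = (pr u γ - pr u α) / (pr w α - pr w γ) := by
        field_simp; linarith
      linarith
  exact this

lemma deep_large {A : Finset (Fin n → ℤ)} {y : Fin n → ℝ} {α : Fin n → ℤ} (h : face A y = {α}) (R : ℝ) (x : Fin n → ℝ) :
    ∀ᶠ K : ℝ in Filter.atTop, x + K • y ∈ DD A R α := by
  have hα : α ∈ face A y := by rw [h]; simp
  have : ∀ᶠ K : ℝ in Filter.atTop, ∀ γ ∈ A, γ ≠ α → R ≤ pr (x + K • y) α - pr (x + K • y) γ := by
    rw [Filter.eventually_all_finset]; intro γ hγ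
    by_cases hne : γ = α
    · simp [hne]
    · have hlt : pr y γ < pr y α := by
        refine lt_of_le_of_ne ((mem_face.1 hα).2 γ hγ) fun he => hne ?_
        have : γ ∈ face A y := mem_face.2 ⟨hγ, fun δ hδ => he ▸ (mem_face.1 hα).2 δ hδ⟩
        rw [h] at this; simpa using this
      filter_upwards [Filter.eventually_ge_atTop ((R - (pr x α - pr x γ)) / (pr y α - pr y γ))] with K hK _
      have hp : 0 < pr y α - pr y γ := sub_pos.2 hlt
      rw [div_le_iff₀ hp] at hK
      simp only [pr_add, pr_smul]
      linarith
  exact this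

lemma face_inj {A : Finset (Fin n → ℤ)} (hA : A.Nonempty) {u : Fin n → ℝ} (hu : InjOnS A u) : ∃ γ ∈ A, face A u = {γ} := by
  obtain ⟨γ, hγ⟩ := face_nonempty hA u
  refine ⟨γ, face_subset _ _ hγ, Finset.eq_singleton_iff_unique_mem.2 ⟨hγ, fun δ hδ => ?_⟩⟩
  exact hu δ (face_subset _ _ hδ) γ (face_subset _ _ hγ)
    (le_antisymm ((mem_face.1 hγ).2 δ (face_subset _ _ hδ)) ((mem_face.1 hδ).2 γ (face_subset _ _ hγ)))

open Classical in
/-- vertices -/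
noncomputable def VV (A : Finset (Fin n → ℤ)) : Finset (Fin n → ℤ) := A.filter fun α => ∃ y, face A y = {α}

lemma mem_VV {A : Finset (Fin n → ℤ)} {α : Fin n → ℤ} : α ∈ VV A ↔ α ∈ A ∧ ∃ y, face A y = {α} := by
  simp [VV]

lemma VV_sub (A : Finset (Fin n → ℤ)) : VV A ⊆ A := fun _ h => (mem_VV.1 h).1

lemma face_VV_ex {A : Finset (Fin n → ℤ)} (hA : A.Nonempty) (y : Fin n → ℝ) : ∃ γ ∈ VV A, γ ∈ face A y := by
  obtain ⟨u, hu⟩ := exists_inj A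
  obtain ⟨K, hK1, hK2⟩ := ((face_large A y u).and (inj_large hu y)).exists
  obtain ⟨γ, hγ, hf⟩ := face_inj hA hK2
  refine ⟨γ, mem_VV.2 ⟨hγ, _, hf⟩, ?_⟩
  rw [hK1] at hf
  exact face_subset _ u (by rw [hf]; simp)

lemma VV_nonempty {A : Finset (Fin n → ℤ)} (hA : A.Nonempty) : (VV A).Nonempty := by
  obtain ⟨γ, hγ, _⟩ := face_VV_ex hA 0
  exact ⟨γ, hγ⟩

lemma mem_face_VV {A : Finset (Fin n → ℤ)} (hA : A.Nonempty) {y : Fin n → ℝ} {α : Fin n → ℤ} :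
    α ∈ face (VV A) y ↔ α ∈ VV A ∧ α ∈ face A y := by
  constructor
  · intro h
    have h1 := mem_face.1 h
    refine ⟨h1.1, mem_face.2 ⟨VV_sub _ h1.1, fun γ hγ => ?_⟩⟩
    obtain ⟨δ, hδ, hδf⟩ := face_VV_ex hA y
    exact ((mem_face.1 hδf).2 γ hγ).trans (h1.2 δ hδ)
  · rintro ⟨h1, h2⟩
    exact mem_face.2 ⟨h1, fun γ hγ => (mem_face.1 h2).2 γ (VV_sub _ hγ)⟩

lemma Vert_VV {A : Finset (Fin n → ℤ)} (hA : A.Nonempty) : Vert (VV A) := by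
  intro α hα
  obtain ⟨hαA, y, hy⟩ := mem_VV.1 hα
  refine ⟨y, ?_⟩
  ext γ
  rw [mem_face_VV hA, hy, Finset.mem_singleton]
  constructor
  · exact fun h => h.2
  · rintro rfl; exact ⟨hα, rfl⟩

lemma face_single_of {A B : Finset (Fin n → ℤ)} {w : Fin n → ℝ} {α : Fin n → ℤ} (hBA : B ⊆ A) (h : face A w = {α}) (hα : α ∈ B) :
    face B w = {α} := by
  have hm : α ∈ face A w := by rw [h]; simp
  refine Finset.eq_singleton_iff_unique_mem.2 ⟨mem_face.2 ⟨hα, fun γ hγ => (mem_face.1 hm).2 γ (hBA hγ)⟩, fun γ hγ => ?_⟩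
  have : γ ∈ face A w := mem_face.2 ⟨hBA (face_subset _ _ hγ), fun δ hδ => ((mem_face.1 hm).2 δ hδ).trans ((mem_face.1 hγ).2 α hα)⟩
  rw [h] at this; simpa using this

/-- Mon from deep monotonicity -/
lemma Mon_of_deep {A : Finset (Fin n → ℤ)} (hA : A.Nonempty) {R : ℝ} {b : (Fin n → ℤ) → ℤ} {v : Fin n → ℝ} (hv : InjOnS A v)
    (h : ∀ α ∈ A, ∀ β ∈ A, ∀ x (T : ℝ), 0 < T → x ∈ DD A R α → x + T • v ∈ DD A R β → b α ≤ b β) : Mon (VV A) b v := by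
  refine ⟨fun α hα γ hγ => hv α (VV_sub _ hα) γ (VV_sub _ hγ), fun y t ht α hα => ?_⟩
  rcases ht.eq_or_lt with rfl | ht
  · exact ⟨α, by simpa using hα, le_rfl⟩
  obtain ⟨hαV, hαf⟩ := (mem_face_VV hA).1 hα
  obtain ⟨hαA, w0, hw0⟩ := mem_VV.1 hαV
  obtain ⟨K0, hK0f, hK0i⟩ := ((face_large A w0 v).and (inj_large hv w0)).exists
  set w := v + K0 • w0 with hw
  have hwα : face A w = {α} := by
    rw [hK0f, hw0]
    refine Finset.eq_singleton_iff_unique_mem.2 ⟨mem_face.2 ⟨by simp, by simp⟩, fun γ hγ => by simpa using face_subset _ _ hγ⟩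
  obtain ⟨K, hK, hK1, hK2, hK3⟩ := ((Filter.eventually_gt_atTop (0:ℝ)).and ((face_large A y w).and ((face_large A (y + t • v) w).and (inj_large hK0i (y + t • v))))).exists
  have e1 : face A (w + K • y) = {α} := by
    rw [hK1]; exact face_single_of (face_subset _ _) hwα hαf
  obtain ⟨γ, hγA, hγ⟩ := face_inj hA hK3
  have hγf : γ ∈ face A (y + t • v) := by
    rw [hK2] at hγ
    exact face_subset _ w (by rw [hγ]; simp)
  refine ⟨γ, (mem_face_VV hA).2 ⟨mem_VV.2 ⟨hγA, _, hγ⟩, hγf⟩, ?_⟩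
  obtain ⟨M, hM, hM1, hM2⟩ := ((Filter.eventually_gt_atTop (0:ℝ)).and ((deep_large e1 R 0).and (deep_large hγ R 0))).exists
  rw [zero_add] at hM1 hM2
  refine h α hαA γ hγA _ (M * K * t) (by positivity) hM1 ?_
  convert hM2 using 1
  simp only [smul_add, smul_smul]
  rw [← add_assoc, mul_assoc]
end Coam

namespace Coam
open Set
variable {n : ℕ}

lemma pr_int (m : Fin n → ℤ) (α : Fin n → ℤ) : pr (fun j => (m j : ℝ)) α = ((∑ j, α j * m j : ℤ) : ℝ) := by
  simp only [pr]; push_cast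
  exact Finset.sum_congr rfl fun j _ => mul_comm _ _

lemma Mon_orbit {A : Finset (Fin n → ℤ)} (hA : A.Nonempty) (m : Fin n → ℤ) (c : ℤ) :
    ∃ v, Mon (VV A) (fun α => c + ∑ j, α j * m j) v := by
  obtain ⟨u, hu⟩ := exists_inj A
  set m' : Fin n → ℝ := fun j => (m j : ℝ) with hm'
  have hev : ∀ᶠ K : ℝ in Filter.atTop, ∀ α ∈ A, ∀ γ ∈ A, pr (u + K • m') α ≤ pr (u + K • m') γ → pr m' α ≤ pr m' γ := by
    rw [Filter.eventually_all_finset]; intro α hα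
    rw [Filter.eventually_all_finset]; intro γ hγ
    by_cases hw : pr m' α ≤ pr m' γ
    · exact Filter.Eventually.of_forall fun K _ => hw
    · push Not at hw
      filter_upwards [Filter.eventually_gt_atTop ((pr u γ - pr u α) / (pr m' α - pr m' γ))] with K hK h
      exfalso
      simp only [pr_add, pr_smul] at h
      have := sub_pos.2 hw
      rw [div_lt_iff₀ this] at hK
      linarith
  obtain ⟨K, hK1, hK2⟩ := (hev.and (inj_large hu m')).exists
  refine ⟨u + K • m', fun α hα γ hγ => hK2 α (VV_sub _ hα) γ (VV_sub _ hγ), fun y t ht α hα => ?_⟩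
  rcases ht.eq_or_lt with rfl | ht
  · exact ⟨α, by simpa using hα, le_rfl⟩
  obtain ⟨γ, hγ⟩ := face_nonempty (VV_nonempty hA) (y + t • (u + K • m'))
  refine ⟨γ, hγ, ?_⟩
  have hγV := (mem_face.1 hγ).1
  have hαV := (mem_face.1 hα).1
  have h1 := (mem_face.1 hγ).2 α hαV
  have h2 := (mem_face.1 hα).2 γ hγV
  rw [pr_add y, pr_add y, pr_smul, pr_smul] at h1
  have h3 : t * pr (u + K • m') α ≤ t * pr (u + K • m') γ := by linarith
  have h4 := hK1 α (VV_sub _ hαV) γ (VV_sub _ hγV) (le_of_mul_le_mul_left h3 ht)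
  rw [hm', pr_int, pr_int] at h4
  have h5 : (∑ j, α j * m j : ℤ) ≤ ∑ j, γ j * m j := by exact_mod_cast h4
  simpa using h5

section
variable {A : Finset (Fin n → ℤ)} {a : (Fin n → ℤ) → ℂ} {R : ℝ}

lemma seg_good (hA : A.Nonempty) (ha : ∀ α ∈ A, a α ≠ 0)
    (hR : ∀ α ∈ A, ∀ x θ, x ∈ DD A R α → ‖ep A a α (cw x θ)‖ < 1)
    {θ θ' v : Fin n → ℝ} {k k' : (Fin n → ℤ) → ℤ} (h' : IsLab A a R θ' k') (h : IsLab A a R θ k)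
    (hv : θ = θ' + v) (hi : InjOnS A v) {c : ℤ} (hc : ∀ α ∈ VV A, k' α - k α = c) :
    ∀ t ∈ Icc (0:ℝ) 1, ∀ x, ff A a (cw x (θ' + t • v)) ≠ 0 := by
  intro t ht x
  have hi' : InjOnS A (-v) := fun α hα γ hγ h => hi α hα γ hγ (by rw [pr_neg, pr_neg] at h; linarith)
  obtain ⟨β, hβA, hβ⟩ := face_inj hA hi
  obtain ⟨α, hαA, hα⟩ := face_inj hA hi'
  obtain ⟨K, hK, h1, h2⟩ := ((Filter.eventually_gt_atTop (0:ℝ)).and ((deep_large hα R x).and (deep_large hβ R x))).exists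
  have := (IsLab.rect ha hR h' h hv hαA hβA (x := x + K • (-v)) (T := 2 * K) (by linarith) h1 (by
    convert h2 using 1
    module)).2 (by rw [hc α (mem_VV.2 ⟨hαA, _, hα⟩), hc β (mem_VV.2 ⟨hβA, _, hβ⟩)]) K ⟨hK.le, by linarith⟩ t ht
  convert this using 3
  module
end

/-- quotient map -/
noncomputable def qq (n : ℕ) (θ : Fin n → ℝ) : Fin n → AddCircle (2 * Real.pi) := fun j => (θ j : AddCircle (2 * Real.pi))

lemma cont_qq : Continuous (qq n) := by
  unfold qq
  exact continuous_pi fun j => (AddCircle.continuous_mk' _).comp (continuous_apply j)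

lemma open_qq : IsOpenMap (qq n) := by
  have : qq n = Pi.map (fun (_ : Fin n) (x : ℝ) => (x : AddCircle (2 * Real.pi))) := rfl
  rw [this]
  exact IsOpenMap.piMap (fun _ => QuotientAddGroup.isOpenMap_coe) (by simp)

lemma surj_qq (p : Fin n → AddCircle (2 * Real.pi)) : ∃ θ, qq n θ = p := by
  choose θ hθ using fun j => QuotientAddGroup.mk_surjective (p j)
  exact ⟨θ, funext hθ⟩

lemma qq_shift (θ : Fin n → ℝ) (m : Fin n → ℤ) : qq n (θ + fun j => 2 * Real.pi * m j) = qq n θ := by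
  ext j
  simp only [qq, Pi.add_apply]
  rw [AddCircle.coe_add]
  have : ((2 * Real.pi * m j : ℝ) : AddCircle (2 * Real.pi)) = 0 := by
    rw [AddCircle.coe_eq_zero_iff]
    exact ⟨m j, by simp [mul_comm]⟩
  rw [this, add_zero]

lemma mon_eq (A : Finset (Fin n → ℤ)) (a : (Fin n → ℤ) → ℂ) (w : Fin n → ℂ) :
    (∑ α ∈ A, a α * ∏ j, exp (w j) ^ (α j)) = ff A a w := by
  rw [ff]
  refine Finset.sum_congr rfl fun α _ => ?_
  rw [prc, exp_sum]
  congr 1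
  exact Finset.prod_congr rfl fun j _ => by rw [exp_int_mul]

lemma mem_coam (A : Finset (Fin n → ℤ)) (a : (Fin n → ℤ) → ℂ) (θ : Fin n → ℝ) :
    (∃ z : Fin n → ℂ, (∀ j, z j ≠ 0) ∧ (∑ α ∈ A, a α * ∏ j, z j ^ (α j)) = 0 ∧
      ∀ j, qq n θ j = ((z j).arg : AddCircle (2 * Real.pi))) ↔ ∃ x, ff A a (cw x θ) = 0 := by
  constructor
  · rintro ⟨z, hz, h0, hq⟩
    refine ⟨fun j => Real.log ‖z j‖, ?_⟩
    rw [← mon_eq]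
    refine Eq.trans ?_ h0
    have : ∀ j, exp (cw (fun j => Real.log ‖z j‖) θ j) = z j := by
      intro j
      have h1 : (θ j : AddCircle (2 * Real.pi)) = ((z j).arg : AddCircle (2 * Real.pi)) := hq j
      rw [← sub_eq_zero, ← AddCircle.coe_sub, AddCircle.coe_eq_zero_iff] at h1
      obtain ⟨k, hk⟩ := h1
      have h2 : (θ j : ℂ) = (z j).arg + k * (2 * Real.pi) := by
        have : θ j = (z j).arg + k * (2 * Real.pi) := by simp only [zsmul_eq_mul] at hk; linarith
        rw [this]; push_cast; ring
      have h3 : cw (fun j => Real.log ‖z j‖) θ j = log (z j) + k * (2 * Real.pi * I) := by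
        simp only [cw, h2, Complex.log]; ring
      rw [h3, exp_add, exp_log (hz j), exp_int_mul_two_pi_mul_I, mul_one]
    simp only [this]
  · rintro ⟨x, hx⟩
    refine ⟨fun j => exp (cw x θ j), fun j => exp_ne_zero _, by rw [mon_eq]; exact hx, fun j => ?_⟩
    simp only [qq]
    rw [← sub_eq_zero, ← AddCircle.coe_sub, AddCircle.coe_eq_zero_iff, arg_exp]
    have : (cw x θ j).im = θ j := by simp [cw]
    rw [this]
    exact ⟨_, (self_sub_toIocMod _ _ _).symm⟩
end Coam

namespace Coam
open Set
variable {n : ℕ}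

lemma sum_hz (α : Fin n → ℤ) (w : Fin (n + 1) → ℤ) : ∑ x, hz α x * w x = w 0 + ∑ j, α j * w j.succ := by
  rw [Fin.sum_univ_succ]; simp [hz]

lemma orbit_inj {A : Finset (Fin n → ℤ)} (hA : A.Nonempty)
    (hInt : (interior (convexHull ℝ ((fun (α : Fin n → ℤ) (j : Fin n) => (α j : ℝ)) '' A))).Nonempty)
    (m : Fin n → ℤ) (c : ℤ) (h : ∀ α ∈ VV A, c + ∑ j, α j * m j = 0) : m = 0 ∧ c = 0 := by
  set m' : Fin n → ℝ := fun j => (m j : ℝ) with hm'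
  have hV : ∀ α ∈ VV A, pr m' α = -c := by
    intro α hα
    rw [hm', pr_int]
    have := h α hα
    have h2 : ∑ j, α j * m j = -c := by omega
    rw [h2]; push_cast; rfl
  have hAll : ∀ α ∈ A, pr m' α = -c := by
    intro α hα
    obtain ⟨γ, hγ, hγf⟩ := face_VV_ex hA m'
    obtain ⟨δ, hδ, hδf⟩ := face_VV_ex hA (-m')
    have h1 := (mem_face.1 hγf).2 α hα
    have h2 := (mem_face.1 hδf).2 α hα
    rw [pr_neg, pr_neg, hV δ hδ] at h2
    rw [hV γ hγ] at h1
    linarith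
  have hsub : convexHull ℝ ((fun (α : Fin n → ℤ) (j : Fin n) => (α j : ℝ)) '' A) ⊆ {x | ∑ j, m' j * x j = -c} := by
    refine convexHull_min ?_ ?_
    · rintro _ ⟨α, hα, rfl⟩
      exact hAll α hα
    · intro x hx y hy s t _ _ hst
      simp only [Set.mem_ofPred_eq] at hx hy ⊢
      have : ∑ j, m' j * (s • x + t • y) j = s * ∑ j, m' j * x j + t * ∑ j, m' j * y j := by
        simp only [Finset.mul_sum, ← Finset.sum_add_distrib]
        exact Finset.sum_congr rfl fun j _ => by simp; ring
      rw [this, hx, hy, ← add_mul, hst, one_mul]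
  have hm0 : m' = 0 := by
    obtain ⟨x, hx⟩ := hInt
    have hcont : Continuous fun t : ℝ => x + t • m' := by fun_prop
    have hev : ∀ᶠ t : ℝ in nhds 0, x + t • m' ∈ interior (convexHull ℝ ((fun (α : Fin n → ℤ) (j : Fin n) => (α j : ℝ)) '' A)) :=
      hcont.continuousAt.eventually_mem (isOpen_interior.mem_nhds (by simpa using hx))
    obtain ⟨ε, hε, hball⟩ := Metric.eventually_nhds_iff.1 hev
    have h1 := hsub (interior_subset (hball (y := ε / 2) (by rw [Real.dist_eq, sub_zero, abs_of_pos (by linarith)]; linarith)))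
    have h0 := hsub (interior_subset hx)
    simp only [Set.mem_ofPred_eq] at h0 h1
    have h2 : ∑ j, m' j * (x + (ε / 2) • m') j = ∑ j, m' j * x j + (ε / 2) * ∑ j, m' j * m' j := by
      simp only [Finset.mul_sum, ← Finset.sum_add_distrib]
      exact Finset.sum_congr rfl fun j _ => by simp; ring
    rw [h2, h0] at h1
    have h3 : ∑ j, m' j * m' j = 0 := by
      have : (ε / 2) * ∑ j, m' j * m' j = 0 := by linarith
      exact (mul_eq_zero.1 this).resolve_left (by positivity)
    rw [Finset.sum_eq_zero_iff_of_nonneg (fun j _ => mul_self_nonneg _)] at h3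
    ext j
    exact mul_self_eq_zero.1 (h3 j (Finset.mem_univ j))
  have hm : m = 0 := by
    ext j
    have := congrFun hm0 j
    simp only [hm', Pi.zero_apply] at this
    exact_mod_cast this
  refine ⟨hm, ?_⟩
  obtain ⟨α, hα⟩ := VV_nonempty hA
  have := h α hα
  simpa [hm] using this

lemma comp_eq_of_pre {X : Type} [TopologicalSpace X] {F P : Set X} (hP : IsPreconnected P) (hPF : P ⊆ F) {x y : X}
    (hx : x ∈ P) (hy : y ∈ P) : connectedComponentIn F x = connectedComponentIn F y :=
  connectedComponentIn_eq (hP.subset_connectedComponentIn hx hPF hy)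

lemma main_bound {A : Finset (Fin n → ℤ)} (hA : A.Nonempty) {a : (Fin n → ℤ) → ℂ} (ha : ∀ α ∈ A, a α ≠ 0)
    (hInt : (interior (convexHull ℝ ((fun (α : Fin n → ℤ) (j : Fin n) => (α j : ℝ)) '' A))).Nonempty)
    {co : Set (Fin n → AddCircle (2 * Real.pi))} (hco : ∀ θ, qq n θ ∈ co ↔ ∃ x, ff A a (cw x θ) = 0)
    {N : ℕ} (C : Fin N → Set (Fin n → AddCircle (2 * Real.pi))) (hinj : Function.Injective C)
    (hC : ∀ i, ∃ θ ∈ (closure co)ᶜ, C i = connectedComponentIn (closure co)ᶜ θ) :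
    (N : ℝ≥0∞) ≤ n.factorial * MeasureTheory.volume (convexHull ℝ ((fun (α : Fin n → ℤ) (j : Fin n) => (α j : ℝ)) '' A)) := by
  classical
  obtain ⟨R, -, hR⟩ := exists_R A a
  set F := (closure co)ᶜ with hF
  set O : Set (Fin n → ℝ) := qq n ⁻¹' F with hO
  have hOo : IsOpen O := isClosed_closure.isOpen_compl.preimage cont_qq
  have hgood : ∀ θ ∈ O, ∀ x, ff A a (cw x θ) ≠ 0 := by
    intro θ hθ x h0
    exact hθ (subset_closure ((hco θ).2 ⟨x, h0⟩))
  have hex : ∀ i, ∃ θ : Fin n → ℝ, θ ∈ O ∧ C i = connectedComponentIn F (qq n θ) := by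
    intro i
    obtain ⟨p, hp, hCp⟩ := hC i
    obtain ⟨θ, rfl⟩ := surj_qq p
    exact ⟨θ, hp, hCp⟩
  choose θ0 hθ0 hCθ0 using hex
  have hball : ∀ θ ∈ O, ∃ ε > 0, Metric.ball θ ε ⊆ O := fun θ hθ => Metric.isOpen_iff.1 hOo θ hθ
  choose ε0 hε0 hb0 using fun i => hball (θ0 i) (hθ0 i)
  obtain ⟨u, hu⟩ := exists_inj A
  have hev : ∀ᶠ s : ℝ in nhds 0, ∀ i, θ0 i + ((i : ℕ) * s) • u ∈ Metric.ball (θ0 i) (ε0 i) := by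
    rw [Filter.eventually_all]
    intro i
    have hc : Continuous fun s : ℝ => θ0 i + ((i : ℕ) * s) • u := by fun_prop
    exact hc.continuousAt.eventually_mem (Metric.isOpen_ball.mem_nhds (by simpa using hε0 i))
  obtain ⟨r, hr, hrb⟩ := Metric.eventually_nhds_iff_ball.1 hev
  -- generic s
  have hcount : (⋃ i : Fin N, ⋃ j : Fin N, ⋃ m : Fin n → ℤ, ⋃ α ∈ A, ⋃ γ ∈ A,
      {s : ℝ | i ≠ j ∧ α ≠ γ ∧ pr ((θ0 i + ((i : ℕ) * s) • u + fun k => 2 * Real.pi * m k) - (θ0 j + ((j : ℕ) * s) • u)) α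
        = pr ((θ0 i + ((i : ℕ) * s) • u + fun k => 2 * Real.pi * m k) - (θ0 j + ((j : ℕ) * s) • u)) γ}).Countable := by
    refine countable_iUnion fun i => countable_iUnion fun j => countable_iUnion fun m =>
      A.countable_toSet.biUnion fun α hα => A.countable_toSet.biUnion fun γ hγ => ?_
    refine Set.Subsingleton.countable ?_
    rintro s ⟨hij, hne, hs⟩ t ⟨-, -, ht⟩
    simp only [pr_add, pr_sub, pr_smul] at hs ht
    have h1 : pr u α - pr u γ ≠ 0 := fun h => hne (hu α hα γ hγ (by linarith))
    have h2 : ((i : ℕ) : ℝ) - ((j : ℕ) : ℝ) ≠ 0 := by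
      intro h
      apply hij
      have : ((i : ℕ) : ℝ) = ((j : ℕ) : ℝ) := by linarith
      exact Fin.ext (by exact_mod_cast this)
    have h3 : (((i : ℕ) : ℝ) - ((j : ℕ) : ℝ)) * (pr u α - pr u γ) * (s - t) = 0 := by linear_combination hs - ht
    have := (mul_eq_zero.1 h3).resolve_left (mul_ne_zero h2 h1)
    linarith
  obtain ⟨s, hsb, hsr⟩ := (hcount.dense_compl ℝ).inter_open_nonempty (Metric.ball 0 r) Metric.isOpen_ball (by simpa using hr)
  set θ : Fin N → Fin n → ℝ := fun i => θ0 i + ((i : ℕ) * s) • u with hθ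
  have hθball : ∀ i, θ i ∈ Metric.ball (θ0 i) (ε0 i) := fun i => hrb s hsb i
  have hθO : ∀ i, θ i ∈ O := fun i => hb0 i (hθball i)
  have hCθ : ∀ i, C i = connectedComponentIn F (qq n (θ i)) := by
    intro i
    rw [hCθ0 i]
    refine comp_eq_of_pre (P := qq n '' Metric.ball (θ0 i) (ε0 i))
      ((convex_ball _ _).isPreconnected.image _ cont_qq.continuousOn) ?_ ⟨_, Metric.mem_ball_self (hε0 i), rfl⟩
      ⟨_, hθball i, rfl⟩
    rintro _ ⟨y, hy, rfl⟩
    exact hb0 i hy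
  have hgen : ∀ i j, i ≠ j → ∀ m : Fin n → ℤ, InjOnS A ((θ i + fun k => 2 * Real.pi * m k) - θ j) := by
    intro i j hij m α hα γ hγ h
    by_contra hne
    apply hsr
    simp only [mem_iUnion]
    exact ⟨i, j, m, α, hα, γ, hγ, hij, hne, h⟩
  choose k hk using fun i => IsLab.exists ha hR (hgood (θ i) (hθO i))
  have hfin := count_final (VV A) (VV_nonempty hA) (Vert_VV hA) N (fun i α => - k i α) ?_ ?_
  · calc (N : ℝ≥0∞) ≤ ((∑ σ ∈ PTS (VV A), Dn σ : ℕ) : ℝ≥0∞) := by exact_mod_cast hfin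
      _ ≤ _ := vol_final (VV A)
      _ ≤ _ := by
        gcongr
        exact VV_sub A
  · intro i j w hw
    have hij : i = j := by
      by_contra hij
      apply hij
      apply hinj
      set m : Fin n → ℤ := fun j => w j.succ with hm
      set v := (θ i + fun k => 2 * Real.pi * m k) - θ j with hv
      obtain ⟨ε1, hε1, hb1⟩ := hball (θ i) (hθO i)
      obtain ⟨ε2, hε2, hb2⟩ := hball (θ j) (hθO j)
      have hmove : ∀ (l : Fin N) (e : ℝ), Metric.ball (θ l) e ⊆ O → ∀ δ : Fin n → ℝ, ‖δ‖ < e → IsLab A a R (θ l + δ) (k l) := by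
        intro l e he δ hδ
        refine (hk l).move ha hR fun t ht x => hgood _ (he ?_) x
        rw [mem_ball_iff_norm, add_sub_cancel_left, norm_smul, Real.norm_of_nonneg ht.1]
        exact lt_of_le_of_lt (mul_le_of_le_one_left (norm_nonneg _) ht.2) hδ
      have hseg : ∀ δ : Fin n → ℝ, ‖δ‖ < min ε1 ε2 → ∀ t ∈ Icc (0:ℝ) 1, ∀ x, ff A a (cw x (θ j + δ + t • v)) ≠ 0 := by
        intro δ hδ
        have l1 := (hmove i ε1 hb1 δ (hδ.trans_le (min_le_left _ _))).shift m
        have l2 := hmove j ε2 hb2 δ (hδ.trans_le (min_le_right _ _))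
        refine seg_good hA ha hR l2 l1 (by rw [hv]; abel) (hgen i j hij m) (c := - w 0) fun α hα => ?_
        have := hw α hα
        rw [sum_hz] at this
        simp only [hm]
        linarith
      set U : Set (Fin n → ℝ) := ⋃ t ∈ Icc (0:ℝ) 1, Metric.ball (θ j + t • v) (min ε1 ε2) with hU
      have hUo : IsOpen U := isOpen_biUnion fun _ _ => Metric.isOpen_ball
      have hdisj : Disjoint (qq n '' U) co := by
        rw [Set.disjoint_left]
        rintro _ ⟨y, hy, rfl⟩ hyc
        obtain ⟨x, hx⟩ := (hco y).1 hyc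
        simp only [hU, mem_iUnion] at hy
        obtain ⟨t, ht, hy⟩ := hy
        rw [mem_ball_iff_norm] at hy
        refine hseg (y - (θ j + t • v)) hy t ht x ?_
        rw [← hx]
        congr 2
        abel
      have hdisj' := hdisj.closure_right (open_qq U hUo)
      have hsegF : qq n '' ((fun t : ℝ => θ j + t • v) '' Icc 0 1) ⊆ F := by
        rintro _ ⟨_, ⟨t, ht, rfl⟩, rfl⟩
        refine Set.disjoint_left.1 hdisj' ⟨_, ?_, rfl⟩
        exact mem_biUnion ht (Metric.mem_ball_self (lt_min hε1 hε2))
      rw [hCθ i, hCθ j]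
      refine comp_eq_of_pre ((isPreconnected_Icc.image _ (by fun_prop)).image _ cont_qq.continuousOn) hsegF ?_ ?_
      · refine ⟨_, ⟨1, by simp, rfl⟩, ?_⟩
        rw [← qq_shift (θ i) m]
        congr 1
        rw [hv]; simp
      · exact ⟨_, ⟨0, by simp, rfl⟩, by simp⟩
    subst hij
    refine ⟨rfl, ?_⟩
    obtain ⟨h1, h2⟩ := orbit_inj hA hInt (fun j => w j.succ) (w 0) (fun α hα => by
      have := hw α hα
      rw [sum_hz] at this
      linarith)
    ext x
    refine Fin.cases h2 (fun j => ?_) x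
    exact congrFun h1 j
  · intro i j w _
    by_cases hij : i = j
    · subst hij
      obtain ⟨v, hv⟩ := Mon_orbit hA (fun j => w j.succ) (w 0)
      refine ⟨v, ?_⟩
      convert hv using 2 with α
      rw [sum_hz]; ring
    · refine ⟨_, Mon_of_deep (R := R) hA (hgen i j hij fun j => w j.succ) ?_⟩
      intro α hα β hβ x T hT hx hx'
      have := (IsLab.rect ha hR (hk j) ((hk i).shift fun j => w j.succ) (by abel) hα hβ hT hx hx').1
      simp only [sum_hz]
      linarith
end Coam

theorem coamoeba_closure_complement_components_card_le
    (n : ℕ) (A : Finset (Fin n → ℤ)) (hA : A.Nonempty)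
    (a : (Fin n → ℤ) → ℂ) (ha : ∀ α ∈ A, a α ≠ 0)
    (Δ : Set (Fin n → ℝ))
    (hΔ : Δ = convexHull ℝ ((fun (α : Fin n → ℤ) (j : Fin n) => (α j : ℝ)) '' A))
    (hΔint : (interior Δ).Nonempty)
    (coAmoeba : Set (Fin n → AddCircle (2 * Real.pi)))
    (hcoAmoeba : coAmoeba = {θ : Fin n → AddCircle (2 * Real.pi) | ∃ z : Fin n → ℂ,
      (∀ j, z j ≠ 0) ∧ (∑ α ∈ A, a α * ∏ j, z j ^ (α j)) = 0 ∧
      ∀ j, θ j = ((z j).arg : AddCircle (2 * Real.pi))})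
    (comps : Set (Set (Fin n → AddCircle (2 * Real.pi))))
    (hcomps : comps = {C | ∃ θ ∈ (closure coAmoeba)ᶜ,
      C = connectedComponentIn (closure coAmoeba)ᶜ θ}) :
    comps.Finite ∧
      (comps.ncard : ℝ≥0∞) ≤ (n.factorial : ℝ≥0∞) * MeasureTheory.volume Δ := by
  have hco : ∀ θ, Coam.qq n θ ∈ coAmoeba ↔ ∃ x, Coam.ff A a (Coam.cw x θ) = 0 := by
    intro θ
    rw [hcoAmoeba]
    exact Coam.mem_coam A a θ
  have hbound : ∀ s : Finset (Set (Fin n → AddCircle (2 * Real.pi))), (s : Set _) ⊆ comps →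
      (s.card : ℝ≥0∞) ≤ (n.factorial : ℝ≥0∞) * MeasureTheory.volume Δ := by
    intro s hs
    rw [hΔ]
    refine Coam.main_bound hA ha (hΔ ▸ hΔint) hco (fun i => (s.equivFin.symm i : Set _))
      (Subtype.val_injective.comp s.equivFin.symm.injective) fun i => ?_
    have := hs (s.equivFin.symm i).2
    rw [hcomps] at this
    exact this
  have hfinvol : (n.factorial : ℝ≥0∞) * MeasureTheory.volume Δ ≠ ⊤ := by
    refine ENNReal.mul_ne_top (ENNReal.natCast_ne_top _) ?_
    rw [hΔ]
    have hb : Bornology.IsBounded (convexHull ℝ ((fun (α : Fin n → ℤ) (j : Fin n) => (α j : ℝ)) '' A)) :=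
      isBounded_convexHull.2 (A.finite_toSet.image _).isBounded
    exact hb.measure_lt_top.ne
  have hfin : comps.Finite := by
    by_contra hinf
    obtain ⟨N, hN⟩ := ENNReal.exists_nat_gt hfinvol
    obtain ⟨s, hs, hcard⟩ := Set.Infinite.exists_subset_card_eq hinf N
    have := hbound s hs
    rw [hcard] at this
    exact absurd hN (not_lt.2 this)
  refine ⟨hfin, ?_⟩
  have := hbound hfin.toFinset (by simp)
  rwa [← Set.ncard_eq_toFinset_card _ hfin] at this
end
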